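/- arXiv:2007.03528 — 2 statements merged into one kernel-verified Lean document; each statement's English description precedes it below -/
import Mathlib

section
/- There exist absolute constants c > 0 and C > 0 such that for every finite abelian group G of odd order N ≥ 3 and every A ⊆ G containing no non-trivial three-term arithmetic progression (no x,y,z ∈ A with x + y = 2z and x ≠ y), one has |A| ≤ C·N/(log N)^{1+c}. -/
/-!
The proof follows Kelley and Meka, in the form given by Bloom and Sisask. Let `A` be dense on the
translates of a Bohr set, without density increment on smaller Bohr sets. If `A` has no nontrivial
three-term progression, then the convolution of its indicator with itself is almost zero at the
points `2 a`, `a ∈ A`, so a high moment of the autocorrelation of `A` exceeds its expected value.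
Sifting turns this into two dense sets `A₁`, `A₂` almost all of whose differences lie where the
autocorrelation is large. By Croot–Sisask almost periodicity and Chang's theorem, the average of
this set of large values along `A₁ - A₂` barely changes under the translates from a Bohr set of
slightly larger rank, and `A` has larger density on a translate of that Bohr set. The rank grows by
a power of `log (1 / α)` per step, and the density `α` cannot exceed `1`, so the iteration stops
after `O(log (1 / α))` steps at a Bohr set that is both small and a large part of the group.
-/

open Finset

namespace KelleyMeka

/-! ### Correlations and convolutions -/

section DiffSum

variable {G ι : Type*} [AddCommGroup G] [Fintype ι]

/-- The pairing `⟨w ∘ w, F⟩` of `F` with the law of the difference of two independent points of the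
family `pos`, each weighted by `w`. -/
def diffSum (w : ι → ℝ) (pos : ι → G) (F : G → ℝ) : ℝ :=
  ∑ i, ∑ j, w i * w j * F (pos i - pos j)

lemma diffSum_le_diffSum {w : ι → ℝ} (hw : ∀ i, 0 ≤ w i) {pos : ι → G} {F F' : G → ℝ}
    (h : ∀ i j, F (pos i - pos j) ≤ F' (pos i - pos j)) : diffSum w pos F ≤ diffSum w pos F' :=
  sum_le_sum fun i _ ↦ sum_le_sum fun j _ ↦
    mul_le_mul_of_nonneg_left (h i j) (mul_nonneg (hw i) (hw j))

lemma diffSum_add (w : ι → ℝ) (pos : ι → G) (F F' : G → ℝ) :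
    diffSum w pos (fun t ↦ F t + F' t) = diffSum w pos F + diffSum w pos F' := by
  simp only [diffSum, mul_add, sum_add_distrib]

lemma diffSum_const_mul (w : ι → ℝ) (pos : ι → G) (a : ℝ) (F : G → ℝ) :
    diffSum w pos (fun t ↦ a * F t) = a * diffSum w pos F := by
  simp only [diffSum, mul_sum, mul_left_comm]

lemma diffSum_const (w : ι → ℝ) (pos : ι → G) (a : ℝ) :
    diffSum w pos (fun _ ↦ a) = (∑ i, w i) ^ 2 * a := by
  simp only [diffSum, ← sum_mul, sq, sum_mul_sum]

lemma diffSum_sum {κ : Type*} (s : Finset κ) (w : ι → ℝ) (pos : ι → G) (F : κ → G → ℝ) :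
    diffSum w pos (fun t ↦ ∑ k ∈ s, F k t) = ∑ k ∈ s, diffSum w pos (F k) := by
  simp only [diffSum, mul_sum]
  rw [sum_comm, sum_congr rfl fun i _ ↦ sum_comm]
  rw [sum_comm]
  exact sum_congr rfl fun i _ ↦ sum_comm

end DiffSum

section Correlation

variable {G ι : Type*} [AddCommGroup G] [Fintype G] [Fintype ι]

/-- The cross-correlation of `f` and `g`, usually written `f ∘ g`. It is not normalised: it is a
sum over the group, not an average. -/
def corr (f g : G → ℝ) (t : G) : ℝ := ∑ s, f (s + t) * g s

/-- The convolution `f * g`, as a sum over the group. -/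
def conv (f g : G → ℝ) (t : G) : ℝ := ∑ s, f s * g (t - s)

lemma corr_sub_apply (f g : G → ℝ) (x y : G) :
    corr f g (x - y) = ∑ s, f (s + x) * g (s + y) := by
  rw [corr, ← Equiv.sum_comp (Equiv.addRight y)]
  simp [add_assoc]

lemma corr_neg (f g : G → ℝ) (t : G) : corr f g (-t) = corr g f t := by
  simpa [corr, mul_comm] using corr_sub_apply f g 0 t

lemma corr_comp_neg (f g : G → ℝ) (t : G) :
    corr (fun x ↦ f (-x)) (fun x ↦ g (-x)) t = corr g f t := by
  rw [← corr_neg f g, corr, corr, ← Equiv.sum_comp (Equiv.neg G)]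
  simp [add_comm]

lemma conv_eq_corr_neg (f g : G → ℝ) : conv f g = corr f (fun x ↦ g (-x)) := by
  ext t
  rw [conv, corr, ← Equiv.sum_comp (Equiv.addRight t)]
  simp

lemma conv_comm (f g : G → ℝ) : conv f g = conv g f := by
  ext t
  rw [conv, conv, ← Equiv.sum_comp (Equiv.subLeft t)]
  simp [mul_comm]

lemma corr_nonneg {f g : G → ℝ} (hf : ∀ x, 0 ≤ f x) (hg : ∀ x, 0 ≤ g x) (t : G) :
    0 ≤ corr f g t :=
  sum_nonneg fun _ _ ↦ mul_nonneg (hf _) (hg _)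

/-- The `w`-weighted sum of the product of the translates of `f` by `pos i`, evaluated along the
tuple `s`. Moments of correlations are sums of products of two of these, see `diffSum_corr_pow`. -/
def mixedMoment {p : ℕ} (w : ι → ℝ) (pos : ι → G) (f : G → ℝ) (s : Fin p → G) : ℝ :=
  ∑ i, w i * ∏ k, f (s k + pos i)

lemma diffSum_corr_pow (w : ι → ℝ) (pos : ι → G) (f g : G → ℝ) (p : ℕ) :
    diffSum w pos (fun t ↦ corr f g t ^ p) =
      ∑ s : Fin p → G, mixedMoment w pos f s * mixedMoment w pos g s := by
  simp_rw [diffSum, corr_sub_apply, mixedMoment, sum_mul_sum, Fintype.sum_pow, mul_sum,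
    prod_mul_distrib]
  rw [sum_comm (s := (univ : Finset (Fin p → G)))]
  refine sum_congr rfl fun i _ ↦ ?_
  rw [sum_comm (s := (univ : Finset (Fin p → G)))]
  exact sum_congr rfl fun j _ ↦ sum_congr rfl fun s _ ↦ by ring

lemma diffSum_autocorr_pow_nonneg (w : ι → ℝ) (pos : ι → G) (f : G → ℝ) (p : ℕ) :
    0 ≤ diffSum w pos (fun t ↦ corr f f t ^ p) := by
  rw [diffSum_corr_pow]
  exact sum_nonneg fun s _ ↦ mul_self_nonneg _

-- Cauchy–Schwarz in the guise `2 x y ≤ x² + y²`: reflecting one factor turns `f * f` into `f ∘ f`.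
lemma diffSum_conv_pow_le_diffSum_autocorr_pow (w : ι → ℝ) (pos : ι → G) (f : G → ℝ) (p : ℕ) :
    diffSum w pos (fun t ↦ conv f f t ^ p) ≤ diffSum w pos (fun t ↦ corr f f t ^ p) := by
  set g : G → ℝ := fun x ↦ f (-x) with hg
  have autocorr_reflect : diffSum w pos (fun t ↦ corr f f t ^ p) =
      ∑ s : Fin p → G, mixedMoment w pos g s * mixedMoment w pos g s := by
    rw [← diffSum_corr_pow]
    simp only [hg, corr_comp_neg]
  have two_mul_le : 2 * diffSum w pos (fun t ↦ conv f f t ^ p) ≤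
      diffSum w pos (fun t ↦ corr f f t ^ p) + diffSum w pos (fun t ↦ corr f f t ^ p) := by
    nth_rewrite 2 [autocorr_reflect]
    rw [conv_eq_corr_neg, diffSum_corr_pow, diffSum_corr_pow, mul_sum, ← sum_add_distrib]
    refine sum_le_sum fun s _ ↦ ?_
    linarith [two_mul_le_add_sq (mixedMoment w pos f s) (mixedMoment w pos g s)]
  linarith

lemma pow_mul_descFactorial_le (m n k : ℕ) :
    m ^ k * n.descFactorial k ≤ (m * n).descFactorial k := by
  rcases Nat.eq_zero_or_pos m with rfl | hm
  · cases k <;> simp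
  induction k with
  | zero => simp
  | succ k ih =>
    rw [Nat.descFactorial_succ, Nat.descFactorial_succ]
    calc m ^ (k + 1) * ((n - k) * n.descFactorial k)
        = (m * n - m * k) * (m ^ k * n.descFactorial k) := by rw [← Nat.mul_sub]; ring
      _ ≤ (m * n - k) * (m * n).descFactorial k :=
        Nat.mul_le_mul (Nat.sub_le_sub_left (Nat.le_mul_of_pos_left k hm) _) ih

lemma pow_le_choose_mul (m p : ℕ) : m ^ p ≤ (m * p).choose p := by
  have h := pow_mul_descFactorial_le m p p
  rw [Nat.descFactorial_self, Nat.descFactorial_eq_factorial_mul_choose, mul_comm] at h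
  exact Nat.le_of_mul_le_mul_left h p.factorial_pos

-- Expand the binomial: every moment of an autocorrelation is nonnegative, so the `p`-th term alone
-- is a lower bound.
lemma diffSum_autocorr_pow_le_diffSum_add_autocorr_pow (w : ι → ℝ) (pos : ι → G) (f : G → ℝ) (p : ℕ)
    {V : ℝ} (hV : 0 ≤ V) :
    4 ^ p * V ^ (3 * p) * diffSum w pos (fun t ↦ corr f f t ^ p) ≤
      diffSum w pos (fun t ↦ (V + corr f f t) ^ (4 * p)) := by
  have binomial : diffSum w pos (fun t ↦ (V + corr f f t) ^ (4 * p)) =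
      ∑ m ∈ range (4 * p + 1), V ^ (4 * p - m) * (4 * p).choose m *
        diffSum w pos (fun t ↦ corr f f t ^ m) := by
    simp_rw [add_comm V, add_pow, ← diffSum_const_mul, ← diffSum_sum]
    congr! 3
    ring
  have choose_ge : (4 : ℝ) ^ p ≤ (4 * p).choose p := mod_cast pow_le_choose_mul 4 p
  rw [binomial]
  calc 4 ^ p * V ^ (3 * p) * diffSum w pos (fun t ↦ corr f f t ^ p)
      ≤ V ^ (4 * p - p) * (4 * p).choose p * diffSum w pos (fun t ↦ corr f f t ^ p) := by
        rw [show 4 * p - p = 3 * p by omega, mul_comm (4 ^ p)]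
        gcongr
        exact diffSum_autocorr_pow_nonneg w pos f p
    _ ≤ _ := single_le_sum (f := fun m ↦ V ^ (4 * p - m) * (4 * p).choose m *
          diffSum w pos (fun t ↦ corr f f t ^ m))
        (fun m _ ↦ mul_nonneg (by positivity) (diffSum_autocorr_pow_nonneg w pos f m))
        (mem_range.2 (by omega))

end Correlation

/-! ### Indicators and almost invariance -/

section RelDens

variable {G : Type*} {A B : Finset G}

/-- The density `|A| / |B|` of `A` relative to `B`, with value `0` when `B` is empty. -/
noncomputable def relDens (A B : Finset G) : ℝ := #A / #B

lemma relDens_nonneg (A B : Finset G) : 0 ≤ relDens A B := by unfold relDens; positivity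

lemma relDens_mul_card (hAB : A ⊆ B) : relDens A B * #B = #A := by
  rcases B.eq_empty_or_nonempty with rfl | hB
  · simp [subset_empty.1 hAB]
  · have : (#B : ℝ) ≠ 0 := mod_cast hB.card_ne_zero
    rw [relDens, div_mul_cancel₀ _ this]

lemma relDens_le_one (hAB : A ⊆ B) : relDens A B ≤ 1 :=
  div_le_one_of_le₀ (mod_cast card_le_card hAB) (by positivity)

lemma relDens_mul_mul_card_le {δ : ℝ} (h : 100 * δ ≤ relDens A B) :
    relDens A B * δ * #B ≤ 0.01 * (relDens A B ^ 2 * #B) := by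
  have := mul_le_mul_of_nonneg_left h
    (mul_nonneg (relDens_nonneg A B) (Nat.cast_nonneg (α := ℝ) #B))
  linarith

end RelDens

/-- The real-valued indicator function of a finite set. -/
def indicate {G : Type*} [DecidableEq G] (S : Finset G) (x : G) : ℝ := if x ∈ S then 1 else 0

local notation "𝟭" => indicate

section Indicator

variable {G : Type*} [DecidableEq G]

lemma indicate_nonneg (S : Finset G) (x : G) : 0 ≤ 𝟭 S x := by
  unfold indicate; split_ifs <;> norm_num

lemma indicate_le_one (S : Finset G) (x : G) : 𝟭 S x ≤ 1 := by
  unfold indicate; split_ifs <;> norm_num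

lemma indicate_le_indicate {S T : Finset G} {x y : G} (h : x ∈ S → y ∈ T) : 𝟭 S x ≤ 𝟭 T y := by
  by_cases hx : x ∈ S
  · simp [indicate, hx, h hx]
  · simpa [indicate, hx] using indicate_nonneg T y

lemma sum_indicate [Fintype G] (S : Finset G) : ∑ x, 𝟭 S x = #S := by simp [indicate]

lemma sum_indicate_mul [Fintype G] (S : Finset G) (f : G → ℝ) :
    ∑ x, 𝟭 S x * f x = ∑ x ∈ S, f x := by
  simp [indicate, sum_ite_mem]

/-- The balanced function `𝟭_A - α 𝟭_B` of `A` in `B`, where `α` is the relative density. -/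
noncomputable def balanced (A B : Finset G) (x : G) : ℝ := 𝟭 A x - relDens A B * 𝟭 B x

end Indicator

section AlmostInvariant

variable {G : Type*} [AddCommGroup G] [DecidableEq G]

/-- `B` is `δ`-almost invariant under translation by `t`: at most a proportion `δ` of `B` leaves `B`
when translated by `t`. -/
def AlmostInvariant (B : Finset G) (δ : ℝ) (t : G) : Prop :=
  (#{b ∈ B | b + t ∉ B} : ℝ) ≤ δ * #B

variable [Fintype G] {A B : Finset G} {δ : ℝ} {t : G}

lemma corr_indicate_eq_card (A B : Finset G) (t : G) :
    corr (𝟭 A) (𝟭 B) t = #{b ∈ B | b + t ∈ A} := by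
  simp only [corr, mul_comm _ (𝟭 B _), sum_indicate_mul]
  simp [indicate]

lemma corr_indicate_le_card_right (A B : Finset G) (t : G) : corr (𝟭 A) (𝟭 B) t ≤ #B := by
  rw [corr_indicate_eq_card]
  exact mod_cast card_filter_le _ _

lemma corr_indicate_nonneg (A B : Finset G) (t : G) : 0 ≤ corr (𝟭 A) (𝟭 B) t :=
  corr_nonneg (indicate_nonneg A) (indicate_nonneg B) t

lemma AlmostInvariant.sub_le_corr_indicate (h : AlmostInvariant B δ t) (hAB : A ⊆ B) :
    #A - δ * #B ≤ corr (𝟭 B) (𝟭 A) t := by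
  have split : (#{a ∈ A | a + t ∈ B} : ℝ) + #{a ∈ A | a + t ∉ B} = #A :=
    mod_cast card_filter_add_card_filter_not (s := A) (fun a ↦ a + t ∈ B)
  have escape : (#{a ∈ A | a + t ∉ B} : ℝ) ≤ #{b ∈ B | b + t ∉ B} :=
    mod_cast card_le_card (filter_subset_filter _ hAB)
  rw [corr_indicate_eq_card]
  unfold AlmostInvariant at h
  linarith

lemma autocorr_balanced (A B : Finset G) (t : G) :
    corr (balanced A B) (balanced A B) t = corr (𝟭 A) (𝟭 A) t
      - relDens A B * corr (𝟭 B) (𝟭 A) (-t) - relDens A B * corr (𝟭 B) (𝟭 A) t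
      + relDens A B ^ 2 * corr (𝟭 B) (𝟭 B) t := by
  rw [corr_neg]
  simp only [corr, balanced, mul_sum, ← sum_sub_distrib, ← sum_add_distrib]
  exact sum_congr rfl fun s _ ↦ by ring

lemma conv_balanced (A B : Finset G) (t : G) :
    conv (balanced A B) (balanced A B) t = conv (𝟭 A) (𝟭 A) t
      - 2 * (relDens A B * conv (𝟭 A) (𝟭 B) t) + relDens A B ^ 2 * conv (𝟭 B) (𝟭 B) t := by
  rw [two_mul]
  nth_rewrite 2 [conv_comm (𝟭 A)]
  simp only [conv, balanced, mul_sum, ← sum_sub_distrib, ← sum_add_distrib]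
  exact sum_congr rfl fun s _ ↦ by ring

lemma conv_indicate_of_neg_mem (hB : ∀ x ∈ B, -x ∈ B) (f : G → ℝ) (t : G) :
    conv f (𝟭 B) t = corr f (𝟭 B) t := by
  have indicate_neg : (fun x ↦ 𝟭 B (-x)) = 𝟭 B := by
    ext x
    have : -x ∈ B ↔ x ∈ B := ⟨fun h ↦ by simpa using hB _ h, hB x⟩
    simp [indicate, this]
  rw [conv_eq_corr_neg, indicate_neg]

lemma conv_balanced_le (hAB : A ⊆ B) (hB : ∀ x ∈ B, -x ∈ B) (h : AlmostInvariant B δ (-t)) :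
    conv (balanced A B) (balanced A B) t ≤
      conv (𝟭 A) (𝟭 A) t - (relDens A B ^ 2 - 2 * relDens A B * δ) * #B := by
  have lower : #A - δ * #B ≤ conv (𝟭 A) (𝟭 B) t := by
    rw [conv_indicate_of_neg_mem hB, ← corr_neg]
    exact h.sub_le_corr_indicate hAB
  have upper : conv (𝟭 B) (𝟭 B) t ≤ #B := by
    rw [conv_indicate_of_neg_mem hB]
    exact corr_indicate_le_card_right B B t
  rw [conv_balanced]
  rw [← relDens_mul_card hAB] at lower
  linarith [mul_le_mul_of_nonneg_left lower (relDens_nonneg A B),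
    mul_le_mul_of_nonneg_left upper (sq_nonneg (relDens A B))]

lemma abs_add_autocorr_balanced_le (hAB : A ⊆ B) (hδ : 100 * δ ≤ relDens A B)
    (h : AlmostInvariant B δ t) (h' : AlmostInvariant B δ (-t)) :
    |relDens A B ^ 2 * #B + corr (balanced A B) (balanced A B) t| ≤
      corr (𝟭 A) (𝟭 A) t + 0.02 * (relDens A B ^ 2 * #B) := by
  set a := relDens A B with ha
  have ha0 : 0 ≤ a := relDens_nonneg A B
  have small₁ : a * δ * #B ≤ 0.01 * (a ^ 2 * #B) := relDens_mul_mul_card_le hδ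
  have small₂ : a * (a * δ * #B) ≤ a * δ * #B := by
    refine mul_le_of_le_one_left ?_ (relDens_le_one hAB)
    rw [mul_assoc]
    exact mul_nonneg ha0 ((Nat.cast_nonneg _).trans h)
  have lower := mul_le_mul_of_nonneg_left (h.sub_le_corr_indicate hAB) ha0
  have lower' := mul_le_mul_of_nonneg_left (h'.sub_le_corr_indicate hAB) ha0
  have upper := mul_le_mul_of_nonneg_left (corr_indicate_le_card_right B A t) ha0
  have upper' := mul_le_mul_of_nonneg_left (corr_indicate_le_card_right B A (-t)) ha0
  have lowerB := mul_le_mul_of_nonneg_left (h.sub_le_corr_indicate subset_rfl) (sq_nonneg a)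
  have upperB := mul_le_mul_of_nonneg_left (corr_indicate_le_card_right B B t) (sq_nonneg a)
  have nonneg := corr_indicate_nonneg A A t
  rw [← relDens_mul_card hAB, ← ha] at lower lower' upper upper'
  rw [autocorr_balanced, ← ha, abs_le]
  constructor <;> linarith

end AlmostInvariant

section MomentGain

variable {G ι : Type*} [AddCommGroup G] [DecidableEq G] [Fintype G] [Fintype ι]
  {w : ι → ℝ} {pos : ι → G} {A B S : Finset G} {δ : ℝ}

lemma mul_pow_le_diffSum_conv_balanced_pow (hw : ∀ i, 0 ≤ w i) (hAB : A ⊆ B)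
    (hB : ∀ x ∈ B, -x ∈ B) (hδ : 100 * δ ≤ relDens A B)
    (hinv : ∀ i j, AlmostInvariant B δ (pos i - pos j)) (hbig : 100 ≤ relDens A B ^ 2 * #B)
    (hS : ∀ t ∈ S, conv (𝟭 A) (𝟭 A) t ≤ 1) {p : ℕ} (hp : Even p) :
    (0.9 * (relDens A B ^ 2 * #B)) ^ p * diffSum w pos (𝟭 S) ≤
      diffSum w pos (fun t ↦ conv (balanced A B) (balanced A B) t ^ p) := by
  rw [← diffSum_const_mul]
  refine diffSum_le_diffSum hw fun i j ↦ ?_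
  by_cases hmem : pos i - pos j ∈ S
  · have le_neg : conv (balanced A B) (balanced A B) (pos i - pos j) ≤
        -(0.9 * (relDens A B ^ 2 * #B)) := by
      have inv : AlmostInvariant B δ (-(pos i - pos j)) := by rw [neg_sub]; exact hinv j i
      linarith [conv_balanced_le hAB hB inv, hS _ hmem, relDens_mul_mul_card_le hδ]
    rw [indicate, if_pos hmem, mul_one, ← hp.neg_pow (conv _ _ _)]
    exact pow_le_pow_left₀ (by positivity) (by linarith) _
  · rw [indicate, if_neg hmem, mul_zero]
    exact hp.pow_nonneg _

lemma add_pow_le_of_abs_add_le {V x y : ℝ} (hV : 0 ≤ V) (hy : 0 ≤ y)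
    (h : |V + x| ≤ y + 0.02 * V) {n : ℕ} (hn : Even n) :
    (V + x) ^ n ≤ 1.05 ^ n * y ^ n + V ^ n := by
  rw [← hn.pow_abs, ← mul_pow]
  rcases le_total (0.4 * V) y with hVy | hyV
  · calc |V + x| ^ n ≤ (1.05 * y) ^ n := pow_le_pow_left₀ (abs_nonneg _) (by linarith) _
      _ ≤ (1.05 * y) ^ n + V ^ n := le_add_of_nonneg_right (by positivity)
  · calc |V + x| ^ n ≤ V ^ n := pow_le_pow_left₀ (abs_nonneg _) (by linarith) _
      _ ≤ (1.05 * y) ^ n + V ^ n := le_add_of_nonneg_left (by positivity)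

lemma diffSum_add_autocorr_balanced_pow_le (hw : ∀ i, 0 ≤ w i) (hw1 : ∑ i, w i = 1) (hAB : A ⊆ B)
    (hδ : 100 * δ ≤ relDens A B) (hinv : ∀ i j, AlmostInvariant B δ (pos i - pos j)) {n : ℕ}
    (hn : Even n) :
    diffSum w pos
        (fun t ↦ (relDens A B ^ 2 * #B + corr (balanced A B) (balanced A B) t) ^ n) ≤
      1.05 ^ n * diffSum w pos (fun t ↦ corr (𝟭 A) (𝟭 A) t ^ n) + (relDens A B ^ 2 * #B) ^ n := by
  calc _ ≤ diffSum w pos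
        (fun t ↦ 1.05 ^ n * corr (𝟭 A) (𝟭 A) t ^ n + (relDens A B ^ 2 * #B) ^ n) :=
        diffSum_le_diffSum hw fun i j ↦ add_pow_le_of_abs_add_le (by positivity)
          (corr_indicate_nonneg A A _) (abs_add_autocorr_balanced_le hAB hδ (hinv i j)
            (by rw [neg_sub]; exact hinv j i)) hn
    _ = _ := by rw [diffSum_add, diffSum_const_mul, diffSum_const, hw1, one_pow, one_mul]

lemma one_point_two_six_pow_add_one_le (l : ℕ) :
    (1.26 : ℝ) ^ (80 * (l + 1)) + 1 ≤
      4 ^ (20 * (l + 1)) * (0.9 ^ (20 * (l + 1)) * (1 / 2) ^ (l + 2)) := by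
  have quarter : (1 / 4 : ℝ) ^ (l + 1) ≤ (1 / 2) ^ (l + 2) := by
    rw [show (1 / 4 : ℝ) = (1 / 2) ^ 2 by norm_num, ← pow_mul]
    exact pow_le_pow_of_le_one (by norm_num) (by norm_num) (by omega)
  calc (1.26 : ℝ) ^ (80 * (l + 1)) + 1 = (1.26 ^ 80) ^ (l + 1) + 1 ^ (l + 1) := by
        rw [pow_mul, one_pow]
    _ ≤ (1.26 ^ 80 + 1) ^ (l + 1) := pow_add_pow_le (by positivity) (by positivity) l.succ_ne_zero
    _ ≤ (4 ^ 20 * (0.9 ^ 20 * (1 / 4))) ^ (l + 1) := by gcongr; norm_num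
    _ = 4 ^ (20 * (l + 1)) * (0.9 ^ (20 * (l + 1)) * (1 / 4) ^ (l + 1)) := by
        rw [mul_pow, mul_pow, ← pow_mul, ← pow_mul]
    _ ≤ _ := by gcongr

-- If a proportion `2⁻⁽ˡ⁺²⁾` of the differences are poorly represented in `A + A`, then the balanced
-- convolution is about `-V` there, and a high moment of `𝟭_A ∘ 𝟭_A` must exceed its expected value.
theorem pow_le_diffSum_autocorr_indicate_pow (hw : ∀ i, 0 ≤ w i) (hw1 : ∑ i, w i = 1)
    (hAB : A ⊆ B) (hB : ∀ x ∈ B, -x ∈ B) (hδ : 100 * δ ≤ relDens A B)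
    (hinv : ∀ i j, AlmostInvariant B δ (pos i - pos j)) (hbig : 100 ≤ relDens A B ^ 2 * #B)
    (hS : ∀ t ∈ S, conv (𝟭 A) (𝟭 A) t ≤ 1) {l : ℕ}
    (hSl : (1 / 2 : ℝ) ^ (l + 2) ≤ diffSum w pos (𝟭 S)) :
    (1.2 * (relDens A B ^ 2 * #B)) ^ (80 * (l + 1)) ≤
      diffSum w pos (fun t ↦ corr (𝟭 A) (𝟭 A) t ^ (80 * (l + 1))) := by
  set V : ℝ := relDens A B ^ 2 * #B
  set f := balanced A B
  set p := 20 * (l + 1) with hp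
  have hp_even : Even p := (by decide : Even 20).mul_right _
  have h4p : 80 * (l + 1) = 4 * p := by omega
  set M := diffSum w pos (fun t ↦ corr (𝟭 A) (𝟭 A) t ^ (80 * (l + 1)))
  have moment_le : 4 ^ p * V ^ (3 * p) * ((0.9 * V) ^ p * (1 / 2) ^ (l + 2)) ≤
      1.05 ^ (80 * (l + 1)) * M + V ^ (80 * (l + 1)) := by
    calc 4 ^ p * V ^ (3 * p) * ((0.9 * V) ^ p * (1 / 2) ^ (l + 2))
        ≤ 4 ^ p * V ^ (3 * p) * ((0.9 * V) ^ p * diffSum w pos (𝟭 S)) := by gcongr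
      _ ≤ 4 ^ p * V ^ (3 * p) * diffSum w pos (fun t ↦ conv f f t ^ p) := by
          gcongr
          exact mul_pow_le_diffSum_conv_balanced_pow hw hAB hB hδ hinv hbig hS hp_even
      _ ≤ 4 ^ p * V ^ (3 * p) * diffSum w pos (fun t ↦ corr f f t ^ p) := by
          gcongr
          exact diffSum_conv_pow_le_diffSum_autocorr_pow w pos f p
      _ ≤ diffSum w pos (fun t ↦ (V + corr f f t) ^ (80 * (l + 1))) := by
          rw [h4p]
          exact diffSum_autocorr_pow_le_diffSum_add_autocorr_pow w pos f p (by positivity)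
      _ ≤ _ := diffSum_add_autocorr_balanced_pow_le hw hw1 hAB hδ hinv
          (h4p ▸ hp_even.mul_left 4)
  have gain := mul_le_mul_of_nonneg_right (one_point_two_six_pow_add_one_le l)
    (by positivity : 0 ≤ V ^ (80 * (l + 1)))
  have collect : 4 ^ p * V ^ (3 * p) * ((0.9 * V) ^ p * (1 / 2) ^ (l + 2)) =
      4 ^ p * (0.9 ^ p * (1 / 2) ^ (l + 2)) * V ^ (80 * (l + 1)) := by
    rw [h4p, show 4 * p = 3 * p + p by ring, pow_add, mul_pow]; ring
  refine le_of_mul_le_mul_left ?_ (by positivity : (0 : ℝ) < 1.05 ^ (80 * (l + 1)))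
  rw [← mul_pow, ← mul_assoc, mul_pow, show (1.05 * 1.2 : ℝ) = 1.26 by norm_num]
  linarith

end MomentGain

/-! ### Sifting -/

section Sifting

lemma exists_card_mul_ge_and_le_mul {κ : Type*} {P : Finset κ} {a b : κ → ℝ} {M : ℝ} (hM : 0 < M)
    (hb0 : ∀ s ∈ P, 0 ≤ b s) (ha : M ≤ ∑ s ∈ P, a s) (hb : ∑ s ∈ P, b s ≤ M / 400) :
    ∃ s ∈ P, M / 4 ≤ a s * #P ∧ b s ≤ 0.01 * a s := by
  by_contra! hcon
  have hP : P.Nonempty := by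
    rw [nonempty_iff_ne_empty]
    rintro rfl
    exact hM.not_ge (by simpa using ha)
  have hP0 : (0 : ℝ) < #P := mod_cast hP.card_pos
  have bound : ∀ s ∈ P, a s ≤ M / 4 / #P + 100 * b s := fun s hs ↦ by
    rcases le_or_gt (M / 4) (a s * #P) with h | h
    · have : 0 ≤ M / 4 / #P := by positivity
      linarith [hcon s hs h]
    · rw [← lt_div_iff₀ hP0] at h
      linarith [hb0 s hs]
  have total := sum_le_sum bound
  rw [sum_add_distrib, sum_const, nsmul_eq_mul, mul_div_cancel₀ _ hP0.ne', ← mul_sum] at total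
  linarith

variable {G : Type*} [AddCommGroup G] [DecidableEq G] {A B T T' R : Finset G} {n : ℕ}

/-- The points of `T` all of whose translates by the tuple `s` lie in `A`. -/
def sifted (A T : Finset G) (s : Fin n → G) : Finset G := {x ∈ T | ∀ k, s k + x ∈ A}

lemma sifted_subset (A T : Finset G) (s : Fin n → G) : sifted A T s ⊆ T := filter_subset _ _

lemma sifted_eq_empty (hR : ∀ b ∈ B, ∀ y ∈ T', b - y ∈ R) {s : Fin n → G}
    (hs : s ∉ Fintype.piFinset fun _ ↦ R) : sifted B T' s = ∅ := by
  refine eq_empty_of_forall_notMem fun y hy ↦ hs (Fintype.mem_piFinset.2 fun k ↦ ?_)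
  obtain ⟨hyT, hyB⟩ := mem_filter.1 hy
  simpa using hR _ (hyB k) y hyT

variable [Fintype G]

lemma corr_indicate_pow (A B : Finset G) (x y : G) (n : ℕ) :
    corr (𝟭 A) (𝟭 B) (x - y) ^ n =
      ∑ s : Fin n → G, if (∀ k, s k + x ∈ A) ∧ ∀ k, s k + y ∈ B then 1 else 0 := by
  rw [corr_sub_apply, Fintype.sum_pow]
  refine sum_congr rfl fun s _ ↦ ?_
  simp [indicate, prod_ite_zero, ← ite_and, and_comm, forall_and]

lemma sum_mul_corr_indicate_pow (A B T T' : Finset G) (n : ℕ) (F : G × G → ℝ) :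
    ∑ p ∈ T ×ˢ T', F p * corr (𝟭 A) (𝟭 B) (p.1 - p.2) ^ n =
      ∑ s : Fin n → G, ∑ p ∈ sifted A T s ×ˢ sifted B T' s, F p := by
  simp_rw [corr_indicate_pow, mul_sum]
  rw [sum_comm]
  refine sum_congr rfl fun s _ ↦ ?_
  rw [sifted, sifted, ← filter_product, sum_filter]
  simp

lemma sum_corr_indicate_pow_eq_sum_piFinset (hR : ∀ b ∈ B, ∀ y ∈ T', b - y ∈ R) :
    ∑ p ∈ T ×ˢ T', corr (𝟭 A) (𝟭 B) (p.1 - p.2) ^ n =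
      ∑ s ∈ Fintype.piFinset fun _ : Fin n ↦ R, (#(sifted A T s ×ˢ sifted B T' s) : ℝ) := by
  have expand := sum_mul_corr_indicate_pow A B T T' n fun _ ↦ 1
  simp only [one_mul, sum_const, nsmul_one] at expand
  rw [expand]
  refine (sum_subset (subset_univ _) fun s _ hs ↦ ?_).symm
  rw [sifted_eq_empty hR hs, product_empty, card_empty, Nat.cast_zero]

lemma sum_card_sifted_filter_lt_le {V : ℝ} (hV : 0 ≤ V) (hn : 80 ≤ n) (P : Finset (Fin n → G)) :
    ∑ s ∈ P, (#{p ∈ sifted A T s ×ˢ sifted B T' s |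
        corr (𝟭 A) (𝟭 B) (p.1 - p.2) < 1.1 * V} : ℝ) ≤
      (1.2 * V) ^ n * (#T * #T') / 400 := by
  have ratio : (11 / 12 : ℝ) ^ n ≤ 1 / 400 :=
    (pow_le_pow_of_le_one (by norm_num) (by norm_num) hn).trans (by norm_num)
  calc _ ≤ ∑ s : Fin n → G, ∑ p ∈ sifted A T s ×ˢ sifted B T' s,
          if corr (𝟭 A) (𝟭 B) (p.1 - p.2) < 1.1 * V then (1 : ℝ) else 0 := by
        simp only [sum_boole]
        exact sum_le_sum_of_subset_of_nonneg (subset_univ _) fun _ _ _ ↦ by positivity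
    _ = ∑ p ∈ T ×ˢ T', (if corr (𝟭 A) (𝟭 B) (p.1 - p.2) < 1.1 * V then (1 : ℝ) else 0) *
          corr (𝟭 A) (𝟭 B) (p.1 - p.2) ^ n := (sum_mul_corr_indicate_pow ..).symm
    _ ≤ ∑ p ∈ T ×ˢ T', (1.1 * V) ^ n := by
        refine sum_le_sum fun p _ ↦ ?_
        split_ifs with h
        · rw [one_mul]
          exact pow_le_pow_left₀ (corr_indicate_nonneg A B _) h.le _
        · rw [zero_mul]
          positivity
    _ = (11 / 12) ^ n * ((1.2 * V) ^ n * (#T * #T')) := by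
        rw [sum_const, card_product, nsmul_eq_mul, show 1.1 * V = 11 / 12 * (1.2 * V) by ring,
          mul_pow]
        push_cast
        ring
    _ ≤ 1 / 400 * ((1.2 * V) ^ n * (#T * #T')) := by gcongr
    _ = _ := by ring

theorem exists_sifted {V : ℝ} (hV : 0 < V) (hn : 80 ≤ n) (hT : T.Nonempty) (hT' : T'.Nonempty)
    (hR : ∀ b ∈ B, ∀ y ∈ T', b - y ∈ R)
    (hmoment : (1.2 * V) ^ n * (#T * #T') ≤
      ∑ p ∈ T ×ˢ T', corr (𝟭 A) (𝟭 B) (p.1 - p.2) ^ n) :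
    ∃ A₁ ⊆ T, ∃ A₂ ⊆ T', (1.2 * V) ^ n * (#T * #T') / 4 ≤ #A₁ * #A₂ * (#R : ℝ) ^ n ∧
      (#{p ∈ A₁ ×ˢ A₂ | corr (𝟭 A) (𝟭 B) (p.1 - p.2) < 1.1 * V} : ℝ) ≤ 0.01 * (#A₁ * #A₂) := by
  rw [sum_corr_indicate_pow_eq_sum_piFinset hR] at hmoment
  have hpos : 0 < (1.2 * V) ^ n * (#T * #T') := by
    have := hT.card_pos
    have := hT'.card_pos
    positivity
  obtain ⟨s, -, large, bad⟩ := exists_card_mul_ge_and_le_mul hpos (fun _ _ ↦ by positivity) hmoment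
    (sum_card_sifted_filter_lt_le (A := A) (B := B) hV.le hn _)
  refine ⟨_, sifted_subset A T s, _, sifted_subset B T' s, ?_, ?_⟩
  · simpa [Fintype.card_piFinset, card_product] using large
  · simpa [card_product] using bad

end Sifting

/-! ### Almost periodicity of convolutions -/

section Hoeffding

variable {κ : Type*}

lemma card_le_two_mul_card_filter_le {P : Finset κ} {f : κ → ℝ} {c : ℝ} (hf : ∀ y ∈ P, 0 ≤ f y)
    (hsum : ∑ y ∈ P, f y ≤ c * #P) : (#P : ℝ) ≤ 2 * #{y ∈ P | f y ≤ 2 * c} := by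
  have split : (#{y ∈ P | f y ≤ 2 * c} : ℝ) + #{y ∈ P | ¬ f y ≤ 2 * c} = #P :=
    mod_cast card_filter_add_card_filter_not _
  rcases P.eq_empty_or_nonempty with rfl | hP
  · simp
  have hP0 : (0 : ℝ) < #P := mod_cast hP.card_pos
  have hc : 0 ≤ c := nonneg_of_mul_nonneg_left ((sum_nonneg hf).trans hsum) hP0
  have markov : #{y ∈ P | ¬ f y ≤ 2 * c} * (2 * c) ≤ c * #P := by
    rw [← nsmul_eq_mul, ← sum_const, sum_filter]
    refine (sum_le_sum fun y hy ↦ ?_).trans hsum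
    split_ifs with h
    · exact hf y hy
    · exact (not_le.1 h).le
  rcases hc.eq_or_lt with rfl | hc
  · have none : {y ∈ P | ¬ f y ≤ 2 * 0} = ∅ := by
      have hzero := (sum_eq_zero_iff_of_nonneg hf).1
        (le_antisymm (by simpa using hsum) (sum_nonneg hf))
      exact filter_eq_empty_iff.2 fun y hy ↦ by simp [hzero y hy]
    rw [none, card_empty, Nat.cast_zero] at split
    linarith
  · have : #{y ∈ P | ¬ f y ≤ 2 * c} * (2 : ℝ) ≤ #P :=
      le_of_mul_le_mul_right (by linarith) hc
    linarith

variable {A : Finset κ} {Z : κ → ℝ}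

lemma sum_exp_mul_le (hZ : ∀ a ∈ A, |Z a| ≤ 1) (h0 : ∑ a ∈ A, Z a = 0) (x : ℝ) :
    ∑ a ∈ A, Real.exp (x * Z a) ≤ Real.exp (x ^ 2 / 2) * #A := by
  calc _ ≤ ∑ a ∈ A, (Real.cosh x + Z a * Real.sinh x) := sum_le_sum fun a ha ↦ by
          rw [mul_comm]
          exact Real.exp_mul_le_cosh_add_mul_sinh (hZ a ha) x
    _ = Real.cosh x * #A := by
        rw [sum_add_distrib, ← sum_mul, h0, sum_const, nsmul_eq_mul]
        ring
    _ ≤ _ := by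
        gcongr
        exact Real.cosh_le_exp_half_sq x

lemma sum_piFinset_exp_mul_sum_le (hZ : ∀ a ∈ A, |Z a| ≤ 1) (h0 : ∑ a ∈ A, Z a = 0) (x : ℝ)
    (m : ℕ) :
    ∑ y ∈ Fintype.piFinset fun _ : Fin m ↦ A, Real.exp (x * ∑ i, Z (y i)) ≤
      Real.exp (x ^ 2 * m / 2) * (#A : ℝ) ^ m := by
  have factor : ∑ y ∈ Fintype.piFinset fun _ : Fin m ↦ A, Real.exp (x * ∑ i, Z (y i)) =
      (∑ a ∈ A, Real.exp (x * Z a)) ^ m := by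
    simp_rw [mul_sum, Real.exp_sum]
    simpa using (prod_univ_sum (fun _ : Fin m ↦ A) fun _ a ↦ Real.exp (x * Z a)).symm
  calc _ ≤ (Real.exp (x ^ 2 / 2) * #A) ^ m := by
        rw [factor]
        gcongr
        exact sum_exp_mul_le hZ h0 x
    _ = _ := by
        rw [mul_pow, ← Real.exp_nat_mul]
        ring_nf

lemma exp_le_exp_mul_add_exp_neg_mul {e s M : ℝ} (he : 0 ≤ e) (h : M ≤ |s|) :
    Real.exp (e * M) ≤ Real.exp (e * s) + Real.exp (-e * s) := by
  rcases abs_choice s with hs | hs <;> rw [hs] at h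
  · exact (Real.exp_le_exp.2 (mul_le_mul_of_nonneg_left h he)).trans
      (le_add_of_nonneg_right (Real.exp_pos _).le)
  · refine (Real.exp_le_exp.2 ?_).trans (le_add_of_nonneg_left (Real.exp_pos _).le)
    rw [neg_mul_comm]
    exact mul_le_mul_of_nonneg_left h he

lemma card_lt_abs_sum_le (hZ : ∀ a ∈ A, |Z a| ≤ 1) (h0 : ∑ a ∈ A, Z a = 0) {e : ℝ} (he : 0 ≤ e)
    (m : ℕ) :
    (#{y ∈ Fintype.piFinset fun _ : Fin m ↦ A | e * m < |∑ i, Z (y i)|} : ℝ) ≤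
      2 * Real.exp (-(e ^ 2 * m / 2)) * (#A : ℝ) ^ m := by
  have chernoff : #{y ∈ Fintype.piFinset fun _ : Fin m ↦ A | e * m < |∑ i, Z (y i)|} *
      Real.exp (e * (e * m)) ≤ ∑ y ∈ Fintype.piFinset fun _ : Fin m ↦ A,
        (Real.exp (e * ∑ i, Z (y i)) + Real.exp (-e * ∑ i, Z (y i))) := by
    rw [← nsmul_eq_mul, ← sum_const, sum_filter]
    refine sum_le_sum fun y _ ↦ ?_
    split_ifs with h
    · exact exp_le_exp_mul_add_exp_neg_mul he h.le
    · positivity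
  have upper := sum_piFinset_exp_mul_sum_le hZ h0 e m
  have lower := sum_piFinset_exp_mul_sum_le hZ h0 (-e) m
  rw [neg_sq] at lower
  rw [sum_add_distrib] at chernoff
  refine le_of_mul_le_mul_right ?_ (Real.exp_pos (e * (e * m)))
  have rearrange : 2 * Real.exp (-(e ^ 2 * m / 2)) * (#A : ℝ) ^ m * Real.exp (e * (e * m)) =
      2 * (Real.exp (e ^ 2 * m / 2) * (#A : ℝ) ^ m) := by
    rw [show e ^ 2 * m / 2 = -(e ^ 2 * m / 2) + e * (e * m) by ring, Real.exp_add]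
    ring_nf
  linarith

end Hoeffding

section CrootSisask

variable {G : Type*} [AddCommGroup G] [DecidableEq G] {S A T U R : Finset G} {e : ℝ} {m : ℕ}

/-- The normalised convolution `𝟭_S * μ_A`: the proportion of `y ∈ A` with `x - y ∈ S`. -/
noncomputable def translateAvg (S A : Finset G) (x : G) : ℝ := (∑ y ∈ A, 𝟭 S (x - y)) / #A

lemma translateAvg_nonneg (S A : Finset G) (x : G) : 0 ≤ translateAvg S A x :=
  div_nonneg (sum_nonneg fun _ _ ↦ indicate_nonneg _ _) (by positivity)

lemma translateAvg_le_one (S A : Finset G) (x : G) : translateAvg S A x ≤ 1 := by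
  refine div_le_one_of_le₀ ?_ (by positivity)
  calc _ ≤ ∑ _ ∈ A, (1 : ℝ) := sum_le_sum fun _ _ ↦ indicate_le_one _ _
    _ = _ := by simp

lemma sum_indicate_sub_translateAvg (S A : Finset G) (x : G) :
    ∑ a ∈ A, (𝟭 S (x - a) - translateAvg S A x) = 0 := by
  rcases A.eq_empty_or_nonempty with rfl | hA
  · simp
  have : (#A : ℝ) ≠ 0 := mod_cast hA.card_ne_zero
  rw [sum_sub_distrib, sum_const, nsmul_eq_mul, translateAvg, mul_div_cancel₀ _ this, sub_self]

lemma abs_indicate_sub_translateAvg_le (S A : Finset G) (x y : G) :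
    |𝟭 S y - translateAvg S A x| ≤ 1 :=
  abs_sub_le_of_nonneg_of_le (indicate_nonneg _ _) (indicate_le_one _ _)
    (translateAvg_nonneg _ _ _) (translateAvg_le_one _ _ _)

lemma exists_tuple_card_mul_card_le {Y : Finset (Fin m → G)}
    (hY : Y ⊆ Fintype.piFinset fun _ ↦ A) (hU : ∀ a ∈ A, ∀ t ∈ T, a + t ∈ U) :
    ∃ v : Fin m → G, #Y * #T ≤ #{t ∈ T | (fun i ↦ v i - t) ∈ Y} * #U ^ m := by
  set PU := Fintype.piFinset fun _ : Fin m ↦ U with hPU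
  have fibre : ∀ t ∈ T, #Y ≤ #{v ∈ PU | (fun i ↦ v i - t) ∈ Y} := fun t ht ↦ by
    refine card_le_card_of_injOn (fun y i ↦ y i + t) (fun y hy ↦ ?_) fun y _ y' _ h ↦ ?_
    · rw [mem_coe, mem_filter, hPU, Fintype.mem_piFinset]
      exact ⟨fun i ↦ hU _ (Fintype.mem_piFinset.1 (hY hy) i) t ht, by simpa using hy⟩
    · exact funext fun i ↦ add_right_cancel (congrFun h i)
  have count : #Y * #T ≤ ∑ v ∈ PU, #{t ∈ T | (fun i ↦ v i - t) ∈ Y} := by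
    calc #Y * #T = ∑ _ ∈ T, #Y := by rw [sum_const, smul_eq_mul, mul_comm]
      _ ≤ ∑ t ∈ T, #{v ∈ PU | (fun i ↦ v i - t) ∈ Y} := sum_le_sum fibre
      _ = _ := sum_card_bipartiteAbove_eq_sum_card_bipartiteBelow _
  have hcard : #PU = #U ^ m := by simp [hPU, Fintype.card_piFinset]
  by_contra! hcon
  have hne : PU.Nonempty := by
    rw [nonempty_iff_ne_empty]
    intro h
    rw [h, sum_empty] at count
    exact (hcon 0).not_ge (count.trans (Nat.zero_le _))
  have := sum_lt_sum_of_nonempty hne fun v _ ↦ hcon v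
  rw [sum_const, smul_eq_mul, ← sum_mul, hcard, mul_comm] at this
  exact (lt_of_mul_lt_mul_left (by rwa [mul_comm] at this) (Nat.zero_le _)).not_ge count

variable [Fintype G]

/-- The points at which the empirical mean `m⁻¹ ∑ᵢ 𝟭_S(x - yᵢ)` is more than `e` away from its
expectation `translateAvg S A x`. -/
noncomputable def samplingErrors (S A : Finset G) (e : ℝ) (y : Fin m → G) : Finset G :=
  {x | e * m < |∑ i, (𝟭 S (x - y i) - translateAvg S A x)|}

lemma mem_samplingErrors {y : Fin m → G} {x : G} : x ∈ samplingErrors S A e y ↔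
    e * m < |∑ i, (𝟭 S (x - y i) - translateAvg S A x)| :=
  mem_filter_univ x

lemma samplingErrors_subset (he : 0 ≤ e) (hR : ∀ s ∈ S, ∀ a ∈ A, s + a ∈ R) {y : Fin m → G}
    (hy : y ∈ Fintype.piFinset fun _ ↦ A) : samplingErrors S A e y ⊆ R := by
  refine fun x hx ↦ by_contra fun hxR ↦ (mem_samplingErrors.1 hx).not_ge ?_
  have indicate_eq_zero : ∀ a ∈ A, 𝟭 S (x - a) = 0 := fun a ha ↦
    if_neg fun h ↦ hxR (by simpa using hR _ h a ha)
  have avg_eq_zero : translateAvg S A x = 0 := by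
    rw [translateAvg, sum_eq_zero indicate_eq_zero, zero_div]
  rw [sum_eq_zero fun i _ ↦ by
    rw [indicate_eq_zero _ (Fintype.mem_piFinset.1 hy i), avg_eq_zero, sub_zero], abs_zero]
  positivity

lemma sum_card_samplingErrors_le (he : 0 ≤ e) (hR : ∀ s ∈ S, ∀ a ∈ A, s + a ∈ R) :
    ∑ y ∈ Fintype.piFinset fun _ : Fin m ↦ A, (#(samplingErrors S A e y) : ℝ) ≤
      2 * Real.exp (-(e ^ 2 * m / 2)) * #R * (#A : ℝ) ^ m := by
  set P := Fintype.piFinset fun _ : Fin m ↦ A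
  have swap : ∑ y ∈ P, #(samplingErrors S A e y) = ∑ x ∈ R, #{y ∈ P |
      e * m < |∑ i, (𝟭 S (x - y i) - translateAvg S A x)|} := by
    have restrict : ∀ y ∈ P, samplingErrors S A e y =
        {x ∈ R | e * m < |∑ i, (𝟭 S (x - y i) - translateAvg S A x)|} := fun y hy ↦ by
      rw [← inter_eq_right.2 (samplingErrors_subset he hR hy), samplingErrors, inter_filter,
        inter_univ]
    rw [sum_congr rfl fun y hy ↦ congrArg card (restrict y hy)]
    simp only [card_filter]
    exact sum_comm
  calc ∑ y ∈ P, (#(samplingErrors S A e y) : ℝ)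
      = ∑ x ∈ R, (#{y ∈ P | e * m < |∑ i, (𝟭 S (x - y i) - translateAvg S A x)|} : ℝ) :=
        mod_cast swap
    _ ≤ ∑ x ∈ R, 2 * Real.exp (-(e ^ 2 * m / 2)) * (#A : ℝ) ^ m := sum_le_sum fun x _ ↦
        card_lt_abs_sum_le (fun a _ ↦ abs_indicate_sub_translateAvg_le S A x (x - a))
          (sum_indicate_sub_translateAvg S A x) he m
    _ = _ := by
        rw [sum_const, nsmul_eq_mul]
        ring

lemma card_samplingErrors_sub (S A : Finset G) (e : ℝ) (v : Fin m → G) (t : G) :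
    #{x | e * m < |∑ i, (𝟭 S (x - v i) - translateAvg S A (x - t))|} =
      #(samplingErrors S A e fun i ↦ v i - t) :=
  card_equiv (Equiv.subRight t) fun x ↦ by simp [samplingErrors]

lemma filter_translateAvg_sub_subset (hm : 0 < m) (v : Fin m → G) (t t' : G) :
    ({x | 2 * e < |translateAvg S A (x - t) - translateAvg S A (x - t')|} : Finset G) ⊆
      ({x | e * m < |∑ i, (𝟭 S (x - v i) - translateAvg S A (x - t))|} : Finset G) ∪
        ({x | e * m < |∑ i, (𝟭 S (x - v i) - translateAvg S A (x - t'))|} : Finset G) := by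
  intro x hx
  have far : 2 * e < |translateAvg S A (x - t) - translateAvg S A (x - t')| := (mem_filter.1 hx).2
  simp only [mem_union, mem_filter_univ]
  by_contra! near
  refine far.not_ge (le_of_mul_le_mul_right ?_ (Nat.cast_pos.2 hm : (0 : ℝ) < m))
  calc |translateAvg S A (x - t) - translateAvg S A (x - t')| * m
      = |∑ i : Fin m, (𝟭 S (x - v i) - translateAvg S A (x - t')) -
          ∑ i : Fin m, (𝟭 S (x - v i) - translateAvg S A (x - t))| := by
        simp only [← sum_sub_distrib, sub_sub_sub_cancel_left, sum_const, card_univ,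
          Fintype.card_fin, nsmul_eq_mul, abs_mul, Nat.abs_cast]
        ring
    _ ≤ e * m + e * m := (abs_sub _ _).trans (add_le_add near.2 near.1)
    _ = 2 * e * m := by ring

-- Croot–Sisask: at least half of the `m`-tuples from `A` sample `𝟭_S * μ_A` well, and two shifts of
-- this function that are well sampled by shifts of one and the same tuple are close.
theorem exists_almostPeriods (hU : ∀ a ∈ A, ∀ t ∈ T, a + t ∈ U)
    (hR : ∀ s ∈ S, ∀ a ∈ A, s + a ∈ R) (he : 0 ≤ e) (hm : 0 < m) :
    ∃ X ⊆ T, (#A : ℝ) ^ m * #T ≤ 2 * #X * (#U : ℝ) ^ m ∧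
      ∀ t ∈ X, ∀ t' ∈ X,
        (#{x | 2 * e < |translateAvg S A (x - t) - translateAvg S A (x - t')|} : ℝ) ≤
          8 * Real.exp (-(e ^ 2 * m / 2)) * #R := by
  set E := Real.exp (-(e ^ 2 * m / 2))
  set P := Fintype.piFinset fun _ : Fin m ↦ A with hP
  have hPcard : (#P : ℝ) = (#A : ℝ) ^ m := by simp [hP, Fintype.card_piFinset]
  set Y := {y ∈ P | (#(samplingErrors S A e y) : ℝ) ≤ 2 * (2 * E * #R)} with hY
  have many : (#P : ℝ) ≤ 2 * #Y := card_le_two_mul_card_filter_le (fun _ _ ↦ by positivity)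
    (hPcard ▸ sum_card_samplingErrors_le he hR)
  obtain ⟨v, hv⟩ := exists_tuple_card_mul_card_le (Y := Y) (filter_subset _ P) hU
  refine ⟨{t ∈ T | (fun i ↦ v i - t) ∈ Y}, filter_subset _ _, ?_, fun t ht t' ht' ↦ ?_⟩
  · rw [← hPcard]
    calc (#P : ℝ) * #T ≤ 2 * (#Y * #T) := by rw [← mul_assoc]; gcongr
      _ ≤ 2 * (#{t ∈ T | (fun i ↦ v i - t) ∈ Y} * (#U : ℝ) ^ m) := by
          exact mul_le_mul_of_nonneg_left (mod_cast hv) zero_le_two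
      _ = _ := by ring
  · have errors : ∀ t ∈ ({t ∈ T | (fun i ↦ v i - t) ∈ Y} : Finset G),
        (#{x | e * m < |∑ i, (𝟭 S (x - v i) - translateAvg S A (x - t))|} : ℝ) ≤
          4 * E * #R := fun t ht ↦ by
      rw [card_samplingErrors_sub]
      linarith [(mem_filter.1 (mem_filter.1 ht).2).2]
    have union : (#{x | 2 * e < |translateAvg S A (x - t) - translateAvg S A (x - t')|} : ℝ) ≤
        #{x | e * m < |∑ i, (𝟭 S (x - v i) - translateAvg S A (x - t))|} +
          #{x | e * m < |∑ i, (𝟭 S (x - v i) - translateAvg S A (x - t'))|} :=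
      mod_cast (card_le_card (filter_translateAvg_sub_subset hm v t t')).trans (card_union_le _ _)
    linarith [errors t ht, errors t' ht']

end CrootSisask

/-! ### Fourier analysis of smoothed averages -/

section Fourier

section Family

variable {G : Type*}

/-- The family, with multiplicity, of the representations `a₁ - a₂ + ∑ᵢ xᵢ - ∑ᵢ xᵢ'` of elements of
`A₁ - A₂ + K X - K X`. Summing over it computes pairings with `𝟭_{A₁} ∘ 𝟭_{A₂}` smoothed by `K`
copies of `𝟭_X ∘ 𝟭_X`. -/
def smoothingFamily (A₁ A₂ X : Finset G) (K : ℕ) :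
    Finset ((G × G) × ((Fin K → G) × (Fin K → G))) :=
  (A₁ ×ˢ A₂) ×ˢ ((Fintype.piFinset fun _ ↦ X) ×ˢ (Fintype.piFinset fun _ ↦ X))

lemma card_smoothingFamily (A₁ A₂ X : Finset G) (K : ℕ) :
    (#(smoothingFamily A₁ A₂ X K) : ℝ) = #A₁ * #A₂ * (#X : ℝ) ^ (2 * K) := by
  simp only [smoothingFamily, card_product, Fintype.card_piFinset_const]
  push_cast
  ring

lemma smoothingFamily_nonempty {A₁ A₂ X : Finset G} (hA₁ : A₁.Nonempty) (hA₂ : A₂.Nonempty)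
    (hX : X.Nonempty) {K : ℕ} : (smoothingFamily A₁ A₂ X K).Nonempty :=
  (hA₁.product hA₂).product <| .product (Fintype.piFinset_nonempty.2 fun _ ↦ hX)
    (Fintype.piFinset_nonempty.2 fun _ ↦ hX)

end Family

variable {G : Type*} [AddCommGroup G]

/-- The unnormalised Fourier coefficient of `𝟭_S` at `γ`, up to conjugation. -/
noncomputable def charSum (S : Finset G) (γ : AddChar G ℂ) : ℂ := ∑ s ∈ S, γ s

lemma addChar_sum {κ : Type*} (γ : AddChar G ℂ) (s : Finset κ) (u : κ → G) :
    γ (∑ i ∈ s, u i) = ∏ i ∈ s, γ (u i) :=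
  map_prod γ.toMonoidHom (fun i ↦ Multiplicative.ofAdd (u i)) s

lemma sum_piFinset_addChar_sum (X : Finset G) (K : ℕ) (γ : AddChar G ℂ) :
    ∑ u ∈ Fintype.piFinset fun _ : Fin K ↦ X, γ (∑ i, u i) = charSum X γ ^ K := by
  simp_rw [addChar_sum]
  simpa [charSum] using (prod_univ_sum (fun _ : Fin K ↦ X) fun _ a ↦ γ a).symm

/-- The element represented by a member of `smoothingFamily`. -/
def smoothingPoint {K : ℕ} (j : (G × G) × ((Fin K → G) × (Fin K → G))) : G :=
  j.1.1 - j.1.2 + (∑ i, j.2.1 i - ∑ i, j.2.2 i)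

section Finite

variable [Finite G]

lemma norm_charSum_le (S : Finset G) (γ : AddChar G ℂ) : ‖charSum S γ‖ ≤ #S :=
  (norm_sum_le _ _).trans_eq (by simp)

lemma sum_addChar_neg (S : Finset G) (γ : AddChar G ℂ) :
    ∑ s ∈ S, γ (-s) = (starRingEnd ℂ) (charSum S γ) := by
  simp only [charSum, map_sum, AddChar.map_neg_eq_conj]

lemma norm_sum_addChar_smoothingPoint (A₁ A₂ X : Finset G) (K : ℕ) (γ : AddChar G ℂ) :
    ‖∑ j ∈ smoothingFamily A₁ A₂ X K, γ (smoothingPoint j)‖ =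
      ‖charSum A₁ γ‖ * ‖charSum A₂ γ‖ * ‖charSum X γ‖ ^ (2 * K) := by
  have factor : ∑ j ∈ smoothingFamily A₁ A₂ X K, γ (smoothingPoint j) =
      charSum A₁ γ * (starRingEnd ℂ) (charSum A₂ γ) *
        (charSum X γ ^ K * (starRingEnd ℂ) (charSum X γ ^ K)) := by
    rw [← sum_piFinset_addChar_sum, map_sum, charSum, charSum, map_sum, sum_mul_sum, sum_mul_sum,
      ← sum_product', ← sum_product', sum_mul_sum, ← sum_product']
    refine sum_congr rfl fun j _ ↦ ?_
    simp only [smoothingPoint, sub_eq_add_neg, AddChar.map_add_eq_mul, AddChar.map_neg_eq_conj]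
  rw [factor]
  simp only [norm_mul, norm_pow, RCLike.norm_conj]
  ring

end Finite

section Fintype

variable [Fintype G]

lemma card_mul_indicate [DecidableEq G] (S : Finset G) (z : G) :
    (Fintype.card G : ℂ) * 𝟭 S z = ∑ γ : AddChar G ℂ, (starRingEnd ℂ) (charSum S γ) * γ z := by
  have collect (γ : AddChar G ℂ) :
      (starRingEnd ℂ) (charSum S γ) * γ z = ∑ s ∈ S, γ (z - s) := by
    rw [← sum_addChar_neg, sum_mul]
    exact sum_congr rfl fun s _ ↦ by rw [← AddChar.map_add_eq_mul, neg_add_eq_sub]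
  simp_rw [collect]
  rw [sum_comm]
  simp only [AddChar.sum_apply_eq_ite, sub_eq_zero, sum_ite_eq, indicate]
  split_ifs <;> simp

lemma sum_norm_charSum_sq (S : Finset G) :
    ∑ γ : AddChar G ℂ, ‖charSum S γ‖ ^ 2 = Fintype.card G * #S := by
  classical
  have expand (γ : AddChar G ℂ) :
      (‖charSum S γ‖ ^ 2 : ℂ) = ∑ t ∈ S, (starRingEnd ℂ) (charSum S γ) * γ t := by
    rw [← Complex.conj_mul', ← mul_sum, charSum]
  have complex : ((∑ γ : AddChar G ℂ, ‖charSum S γ‖ ^ 2 : ℝ) : ℂ) = Fintype.card G * #S := by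
    push_cast
    rw [sum_congr rfl fun γ _ ↦ expand γ, sum_comm,
      sum_congr rfl fun t _ ↦ (card_mul_indicate S t).symm, ← mul_sum]
    simp +contextual [indicate]
  exact_mod_cast complex

lemma card_mul_sum_indicate_add_sub [DecidableEq G] {κ : Type*} (J : Finset κ) (q : κ → G)
    (S : Finset G) (b : G) :
    (Fintype.card G : ℂ) * ((∑ j ∈ J, 𝟭 S (q j + b) - ∑ j ∈ J, 𝟭 S (q j) : ℝ) : ℂ) =
      ∑ γ : AddChar G ℂ, (starRingEnd ℂ) (charSum S γ) * (γ b - 1) * ∑ j ∈ J, γ (q j) := by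
  simp only [Complex.ofReal_sub, Complex.ofReal_sum, mul_sub, mul_sum, card_mul_indicate]
  rw [sum_comm, sum_comm (s := J), ← sum_sub_distrib]
  refine sum_congr rfl fun γ _ ↦ ?_
  rw [← sum_sub_distrib]
  refine sum_congr rfl fun j _ ↦ ?_
  rw [AddChar.map_add_eq_mul]
  ring

end Fintype

lemma abs_sum_smoothingFamily_indicate_add_sub_le [Finite G] [DecidableEq G]
    {A₁ A₂ X : Finset G} {K : ℕ} {b : G} {η : ℝ} (S : Finset G)
    (h : ∀ γ : AddChar G ℂ, ‖charSum X γ‖ ^ (2 * K) * ‖γ b - 1‖ ≤ η * (#X : ℝ) ^ (2 * K)) :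
    |∑ j ∈ smoothingFamily A₁ A₂ X K, 𝟭 S (smoothingPoint j + b) -
        ∑ j ∈ smoothingFamily A₁ A₂ X K, 𝟭 S (smoothingPoint j)| ≤
      η * (#X : ℝ) ^ (2 * K) * #A₂ * ((#S + #A₁) / 2) := by
  cases nonempty_fintype G
  set Δ := ∑ j ∈ smoothingFamily A₁ A₂ X K, 𝟭 S (smoothingPoint j + b) -
    ∑ j ∈ smoothingFamily A₁ A₂ X K, 𝟭 S (smoothingPoint j) with hΔ
  have amgm (γ : AddChar G ℂ) :
      ‖charSum S γ‖ * ‖charSum A₁ γ‖ ≤ (‖charSum S γ‖ ^ 2 + ‖charSum A₁ γ‖ ^ 2) / 2 := by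
    linarith [two_mul_le_add_sq ‖charSum S γ‖ ‖charSum A₁ γ‖]
  have scaled : Fintype.card G * |Δ| ≤
      Fintype.card G * (η * (#X : ℝ) ^ (2 * K) * #A₂ * ((#S + #A₁) / 2)) := by
    calc Fintype.card G * |Δ| = ‖(Fintype.card G : ℂ) * (Δ : ℂ)‖ := by simp
      _ ≤ ∑ γ : AddChar G ℂ, ‖charSum S γ‖ * ‖γ b - 1‖ *
            (‖charSum A₁ γ‖ * ‖charSum A₂ γ‖ * ‖charSum X γ‖ ^ (2 * K)) := by
          rw [hΔ, card_mul_sum_indicate_add_sub]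
          refine (norm_sum_le _ _).trans_eq (sum_congr rfl fun γ _ ↦ ?_)
          rw [norm_mul, norm_mul, RCLike.norm_conj, norm_sum_addChar_smoothingPoint]
      _ = ∑ γ : AddChar G ℂ, (‖charSum X γ‖ ^ (2 * K) * ‖γ b - 1‖) * ‖charSum A₂ γ‖ *
            (‖charSum S γ‖ * ‖charSum A₁ γ‖) := sum_congr rfl fun γ _ ↦ by ring
      _ ≤ ∑ γ : AddChar G ℂ, η * (#X : ℝ) ^ (2 * K) * #A₂ *
            ((‖charSum S γ‖ ^ 2 + ‖charSum A₁ γ‖ ^ 2) / 2) := by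
          refine sum_le_sum fun γ _ ↦ ?_
          have nonneg := (by positivity : 0 ≤ ‖charSum X γ‖ ^ (2 * K) * ‖γ b - 1‖).trans (h γ)
          exact mul_le_mul (mul_le_mul (h γ) (norm_charSum_le A₂ γ) (norm_nonneg _) nonneg)
            (amgm γ) (by positivity) (by positivity)
      _ = _ := by
          rw [← mul_sum, ← sum_div, sum_add_distrib, sum_norm_charSum_sq, sum_norm_charSum_sq]
          ring
  exact le_of_mul_le_mul_left scaled (by positivity)

end Fourier

section AlmostPeriodicity

variable {G : Type*} [AddCommGroup G]

lemma card_mul_sum_translateAvg [DecidableEq G] {S A₁ A₂ : Finset G} (hA₂ : A₂.Nonempty) (τ : G) :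
    #A₂ * ∑ x ∈ A₁, translateAvg S A₂ (x + τ) = ∑ p ∈ A₁ ×ˢ A₂, 𝟭 S (p.1 - p.2 + τ) := by
  have : (#A₂ : ℝ) ≠ 0 := mod_cast hA₂.card_ne_zero
  rw [sum_product, mul_sum]
  refine sum_congr rfl fun x _ ↦ ?_
  rw [translateAvg, mul_div_cancel₀ _ this]
  exact sum_congr rfl fun y _ ↦ by rw [sub_add_eq_add_sub]

lemma norm_charSum_pow_mul_le_of_largeSpectrum [Finite G] {X : Finset G} {b : G} {k : ℕ}
    (hb : ∀ γ : AddChar G ℂ, (#X : ℝ) / 2 ≤ ‖charSum X γ‖ → ‖γ b - 1‖ ≤ (1 / 2) ^ (k + 8))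
    (γ : AddChar G ℂ) :
    ‖charSum X γ‖ ^ (2 * (k + 5)) * ‖γ b - 1‖ ≤ (1 / 2) ^ (k + 8) * (#X : ℝ) ^ (2 * (k + 5)) := by
  rcases le_or_gt ((#X : ℝ) / 2) ‖charSum X γ‖ with large | small
  · rw [mul_comm]
    gcongr
    exacts [hb γ large, norm_charSum_le X γ]
  · have trivial_bound : ‖γ b - 1‖ ≤ 2 :=
      (norm_sub_le _ _).trans_eq (by rw [AddChar.norm_apply, norm_one]; norm_num)
    calc _ ≤ (#X / 2 : ℝ) ^ (2 * (k + 5)) * 2 := by gcongr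
      _ = (1 / 2) ^ (k + 8) * (1 / 2) ^ (k + 1) * (#X : ℝ) ^ (2 * (k + 5)) := by ring
      _ ≤ (1 / 2) ^ (k + 8) * 1 * (#X : ℝ) ^ (2 * (k + 5)) := by
          gcongr
          exact pow_le_one₀ (by norm_num) (by norm_num)
      _ = _ := by rw [mul_one]

section Fintype

variable [Fintype G]

/-- The points at which translation by `τ` changes `f` by more than `e`. -/
noncomputable def unstablePoints (f : G → ℝ) (e : ℝ) (τ : G) : Finset G :=
  {x | e < |f (x + τ) - f x|}

lemma mem_unstablePoints {f : G → ℝ} {e : ℝ} {τ x : G} :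
    x ∈ unstablePoints f e τ ↔ e < |f (x + τ) - f x| :=
  mem_filter_univ x

lemma card_unstablePoints_add_le (f : G → ℝ) (e₁ e₂ : ℝ) (τ₁ τ₂ : G) :
    #(unstablePoints f (e₁ + e₂) (τ₁ + τ₂)) ≤
      #(unstablePoints f e₁ τ₁) + #(unstablePoints f e₂ τ₂) := by
  classical
  have cover : unstablePoints f (e₁ + e₂) (τ₁ + τ₂) ⊆
      (unstablePoints f e₁ τ₁).image (· - τ₂) ∪ unstablePoints f e₂ τ₂ := fun x hx ↦ by
    rw [mem_unstablePoints] at hx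
    rw [mem_union, mem_image, or_iff_not_imp_right, mem_unstablePoints, not_lt]
    refine fun hx₂ ↦ ⟨x + τ₂, ?_, add_sub_cancel_right _ _⟩
    rw [mem_unstablePoints, add_assoc, add_comm τ₂]
    linarith [abs_sub_le (f (x + (τ₁ + τ₂))) (f (x + τ₂)) (f x)]
  exact (card_le_card cover).trans <| (card_union_le _ _).trans <|
    Nat.add_le_add_right card_image_le _

lemma card_unstablePoints_sum_le {κ : Type*} {s : Finset κ} {f : G → ℝ} {e θ : ℝ} {τ : κ → G}
    (h : ∀ i ∈ s, (#(unstablePoints f e (τ i)) : ℝ) ≤ θ) :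
    (#(unstablePoints f (#s * e) (∑ i ∈ s, τ i)) : ℝ) ≤ #s * θ := by
  classical
  induction s using Finset.induction_on with
  | empty => simp [unstablePoints]
  | insert a s ha ih =>
    have head := h a (mem_insert_self a s)
    have tail := ih fun i hi ↦ h i (mem_insert_of_mem hi)
    have add : (#(unstablePoints f (e + #s * e) (τ a + ∑ i ∈ s, τ i)) : ℝ) ≤
        #(unstablePoints f e (τ a)) + #(unstablePoints f (#s * e) (∑ i ∈ s, τ i)) :=
      mod_cast card_unstablePoints_add_le f e (#s * e) (τ a) (∑ i ∈ s, τ i)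
    rw [sum_insert ha, card_insert_of_notMem ha, Nat.cast_succ, add_one_mul, add_one_mul,
      add_comm (_ * e)]
    linarith

lemma card_unstablePoints_sub (f : G → ℝ) (e : ℝ) (t t' : G) :
    #(unstablePoints f e (t - t')) = #{x | e < |f (x - t) - f (x - t')|} :=
  card_equiv (Equiv.addRight t) fun x ↦ by
    simp [unstablePoints, abs_sub_comm (f x), add_sub_assoc]

lemma sum_sub_le_sum_add {f : G → ℝ} (h0 : ∀ x, 0 ≤ f x) (h1 : ∀ x, f x ≤ 1) (A : Finset G)
    {e : ℝ} (he : 0 ≤ e) (τ : G) :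
    ∑ x ∈ A, f x - e * #A - #(unstablePoints f e τ) ≤ ∑ x ∈ A, f (x + τ) := by
  classical
  have pointwise : ∀ x ∈ A, f x - e - 𝟭 (unstablePoints f e τ) x ≤ f (x + τ) := fun x _ ↦ by
    simp only [indicate, mem_unstablePoints]
    split_ifs with hx
    · linarith [h0 (x + τ), h1 x]
    · linarith [neg_abs_le (f (x + τ) - f x)]
  have unstable : ∑ x ∈ A, 𝟭 (unstablePoints f e τ) x ≤ #(unstablePoints f e τ) :=
    (sum_le_univ_sum_of_nonneg (indicate_nonneg _)).trans_eq (sum_indicate _)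
  have total := sum_le_sum pointwise
  rw [sum_sub_distrib, sum_sub_distrib, sum_const, nsmul_eq_mul, mul_comm] at total
  linarith

variable [DecidableEq G]

lemma le_sum_smoothingFamily_indicate {S A₁ A₂ X : Finset G} (hA₂ : A₂.Nonempty) (K : ℕ)
    {e θ : ℝ} (he : 0 ≤ e)
    (hX : ∀ t ∈ X, ∀ t' ∈ X, (#(unstablePoints (translateAvg S A₂) e (t - t')) : ℝ) ≤ θ) :
    (#X : ℝ) ^ (2 * K) * #A₂ * (∑ x ∈ A₁, translateAvg S A₂ x - K * e * #A₁ - K * θ) ≤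
      ∑ j ∈ smoothingFamily A₁ A₂ X K, 𝟭 S (smoothingPoint j) := by
  set P := (Fintype.piFinset fun _ : Fin K ↦ X) ×ˢ Fintype.piFinset fun _ : Fin K ↦ X with hP
  have fibre : ∀ u ∈ P, #A₂ * (∑ x ∈ A₁, translateAvg S A₂ x - K * e * #A₁ - K * θ) ≤
      ∑ p ∈ A₁ ×ˢ A₂, 𝟭 S (p.1 - p.2 + (∑ i, u.1 i - ∑ i, u.2 i)) := fun u hu ↦ by
    simp only [hP, mem_product, Fintype.mem_piFinset] at hu
    have unstable := card_unstablePoints_sum_le (s := univ) (τ := fun i ↦ u.1 i - u.2 i)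
      fun i _ ↦ hX _ (hu.1 i) _ (hu.2 i)
    rw [card_fin, sum_sub_distrib] at unstable
    rw [← card_mul_sum_translateAvg hA₂]
    gcongr
    linarith [sum_sub_le_sum_add (translateAvg_nonneg S A₂) (translateAvg_le_one S A₂) A₁
      (by positivity : 0 ≤ K * e) (∑ i, u.1 i - ∑ i, u.2 i)]
  have hcard : (#P : ℝ) = (#X : ℝ) ^ (2 * K) := by
    rw [hP, card_product, Fintype.card_piFinset_const]
    push_cast
    ring
  rw [smoothingFamily, sum_product_right, mul_assoc, ← hcard, ← nsmul_eq_mul]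
  exact card_nsmul_le_sum _ _ _ fibre

/-- The number of samples for which Croot–Sisask sampling of a set of relative density `2 ^ (-k)`
resists `k + 5` smoothings. -/
def sampleSize (k : ℕ) : ℕ := 80000 * (k + 5) ^ 2 * (2 * k + 16)

/-- The binary logarithm of the density lost when passing to the almost-periods. -/
def periodLoss (k : ℕ) : ℕ := (k + 1) * sampleSize k + 1

lemma sampleSize_pos (k : ℕ) : 0 < sampleSize k := by
  unfold sampleSize
  positivity

lemma two_pow_le_exp (n : ℕ) : (2 : ℝ) ^ n ≤ Real.exp n := by
  rw [← mul_one (n : ℝ), Real.exp_nat_mul]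
  gcongr
  linarith [Real.add_one_le_exp (1 : ℝ)]

lemma exp_neg_sampleSize_le (k : ℕ) :
    8 * Real.exp (-((1 / (200 * (k + 5) : ℝ)) ^ 2 * sampleSize k / 2)) * (2 * 2 ^ k) * (k + 5) ≤
      0.01 := by
  have exponent : (1 / (200 * (k + 5) : ℝ)) ^ 2 * sampleSize k / 2 = (2 * k + 16 : ℕ) := by
    rw [sampleSize]
    push_cast
    field_simp
    ring
  have linear : (k : ℝ) + 5 ≤ 2 ^ (k + 5) := mod_cast (Nat.lt_two_pow_self (n := k + 5)).le
  have growth : 2048 * ((2 : ℝ) ^ k * (k + 5)) ≤ Real.exp (2 * k + 16 : ℕ) :=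
    calc 2048 * ((2 : ℝ) ^ k * (k + 5)) ≤ 2048 * (2 ^ k * 2 ^ (k + 5)) := by gcongr
      _ = 2 ^ (2 * k + 16) := by ring
      _ ≤ _ := two_pow_le_exp _
  rw [exponent, Real.exp_neg]
  calc _ = 16 * ((2 : ℝ) ^ k * (k + 5)) / Real.exp (2 * k + 16 : ℕ) := by
        field_simp
        ring
    _ ≤ 0.01 := by
        rw [div_le_iff₀ (Real.exp_pos _)]
        linarith [(by positivity : (0 : ℝ) ≤ 2 ^ k * (k + 5))]

variable {S A₁ A₂ T R X : Finset G} {k : ℕ}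

lemma le_sum_smoothingFamily_of_almostPeriods (hA₂ : A₂.Nonempty) (hA₁T : (#T : ℝ) ≤ 2 ^ k * #A₁)
    (hRT : (#R : ℝ) ≤ 2 * #T)
    (hgood : 0.99 * (#A₁ * #A₂ : ℝ) ≤ ∑ p ∈ A₁ ×ˢ A₂, 𝟭 S (p.1 - p.2))
    (hX : ∀ t ∈ X, ∀ t' ∈ X, (#{x | 2 * (1 / (200 * (k + 5) : ℝ)) <
      |translateAvg S A₂ (x - t) - translateAvg S A₂ (x - t')|} : ℝ) ≤
        8 * Real.exp (-((1 / (200 * (k + 5) : ℝ)) ^ 2 * sampleSize k / 2)) * #R) :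
    0.97 * (#(smoothingFamily A₁ A₂ X (k + 5)) : ℝ) ≤
      ∑ j ∈ smoothingFamily A₁ A₂ X (k + 5), 𝟭 S (smoothingPoint j) := by
  set E := Real.exp (-((1 / (200 * (k + 5) : ℝ)) ^ 2 * sampleSize k / 2)) with hE
  have hA₂0 : (0 : ℝ) < #A₂ := mod_cast hA₂.card_pos
  have average : 0.99 * (#A₁ : ℝ) ≤ ∑ x ∈ A₁, translateAvg S A₂ x := by
    have := card_mul_sum_translateAvg (S := S) (A₁ := A₁) hA₂ 0
    simp only [add_zero] at this
    exact le_of_mul_le_mul_left (by linarith) hA₂0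
  have unstable_le : ((k + 5 : ℕ) : ℝ) * (8 * E * #R) ≤ 0.01 * #A₁ :=
    calc _ ≤ ((k + 5 : ℕ) : ℝ) * (8 * E * (2 * (2 ^ k * #A₁))) := by
          gcongr
          linarith
      _ = 8 * E * (2 * 2 ^ k) * (k + 5) * #A₁ := by
          push_cast
          ring
      _ ≤ _ := by
          gcongr
          exact exp_neg_sampleSize_le k
  have drift : ((k + 5 : ℕ) : ℝ) * (2 * (1 / (200 * (k + 5)))) = 0.01 := by
    push_cast
    field_simp
    norm_num
  have lower := le_sum_smoothingFamily_indicate (A₁ := A₁) hA₂ (k + 5) (by positivity)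
    fun t ht t' ht' ↦ (Nat.cast_le.2 (card_unstablePoints_sub _ _ t t').le).trans (hX t ht t' ht')
  rw [drift] at lower
  refine le_trans ?_ lower
  calc _ = (#X : ℝ) ^ (2 * (k + 5)) * #A₂ * (0.97 * #A₁) := by
        rw [card_smoothingFamily]
        ring
    _ ≤ _ := by
        gcongr
        linarith

end Fintype

theorem exists_subset_sum_smoothingFamily_add_ge [Finite G] [DecidableEq G]
    {S A₁ A₂ T T₂ T₃ U R : Finset G} {k : ℕ} (hA₂ : A₂.Nonempty)
    (hA₁T : (#T : ℝ) ≤ 2 ^ k * #A₁) (hA₂T₂ : (#T₂ : ℝ) ≤ 2 ^ k * #A₂) (hST : (#S : ℝ) ≤ 2 * #T)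
    (hR : ∀ s ∈ S, ∀ a ∈ A₂, s + a ∈ R) (hRT : (#R : ℝ) ≤ 2 * #T)
    (hU : ∀ a ∈ A₂, ∀ t ∈ T₃, a + t ∈ U) (hUT₂ : (#U : ℝ) ≤ 2 * #T₂)
    (hgood : 0.99 * (#A₁ * #A₂ : ℝ) ≤ ∑ p ∈ A₁ ×ˢ A₂, 𝟭 S (p.1 - p.2)) :
    ∃ X ⊆ T₃, (#T₃ : ℝ) ≤ 2 ^ periodLoss k * #X ∧
      ∀ b, (∀ γ : AddChar G ℂ, (#X : ℝ) / 2 ≤ ‖charSum X γ‖ → ‖γ b - 1‖ ≤ (1 / 2) ^ (k + 8)) →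
        0.96 * (#(smoothingFamily A₁ A₂ X (k + 5)) : ℝ) ≤
          ∑ j ∈ smoothingFamily A₁ A₂ X (k + 5), 𝟭 S (smoothingPoint j + b) := by
  cases nonempty_fintype G
  obtain ⟨X, hXT₃, hXcard, hX⟩ := exists_almostPeriods hU hR
    (by positivity : 0 ≤ 1 / (200 * (k + 5) : ℝ)) (sampleSize_pos k)
  refine ⟨X, hXT₃, ?_, fun b hb ↦ ?_⟩
  · have hA₂0 : (0 : ℝ) < #A₂ := mod_cast hA₂.card_pos
    have hUA₂ : (#U : ℝ) ≤ 2 ^ (k + 1) * #A₂ := by rw [pow_succ']; linarith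
    refine le_of_mul_le_mul_left (hXcard.trans ?_) (pow_pos hA₂0 (sampleSize k))
    calc 2 * #X * (#U : ℝ) ^ sampleSize k
        ≤ 2 * #X * (2 ^ (k + 1) * #A₂) ^ sampleSize k := by gcongr
      _ = _ := by rw [periodLoss, mul_pow, ← pow_mul, pow_succ]; ring
  · have unshifted := le_sum_smoothingFamily_of_almostPeriods hA₂ hA₁T hRT hgood hX
    have shift := abs_sum_smoothingFamily_indicate_add_sub_le (A₁ := A₁) (A₂ := A₂) S
      (norm_charSum_pow_mul_le_of_largeSpectrum hb)
    have one_le : (1 : ℝ) ≤ 2 ^ k := one_le_pow₀ (by norm_num)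
    have average_le : ((#S : ℝ) + #A₁) / 2 ≤ 2 ^ k * #A₁ * 2 := by
      nlinarith [Nat.cast_nonneg (α := ℝ) #A₁]
    have error_le : (1 / 2 : ℝ) ^ (k + 8) * (#X : ℝ) ^ (2 * (k + 5)) * #A₂ * ((#S + #A₁) / 2) ≤
        0.01 * (#A₁ * #A₂ * (#X : ℝ) ^ (2 * (k + 5))) :=
      calc _ ≤ (1 / 2 : ℝ) ^ (k + 8) * (#X : ℝ) ^ (2 * (k + 5)) * #A₂ * (2 ^ k * #A₁ * 2) := by
            gcongr
        _ = (1 / 2 * 2 : ℝ) ^ k * (1 / 128 * (#A₁ * #A₂ * (#X : ℝ) ^ (2 * (k + 5)))) := by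
            rw [mul_pow]
            ring
        _ ≤ _ := by
            rw [div_mul_cancel₀ _ two_ne_zero, one_pow, one_mul]
            gcongr
            norm_num
    rw [card_smoothingFamily] at unshifted ⊢
    linarith [(abs_le.1 shift).1]

end AlmostPeriodicity

/-! ### Chang's theorem -/

section Chang

variable {G : Type*} [AddCommGroup G]

section RieszProduct

variable {ι : Type*} [Fintype ι]

/-- The signed combination `∑ᵢ mᵢ λᵢ` of characters. -/
noncomputable def signedSum (lam : ι → AddChar G ℂ) (m : ι → SignType) : AddChar G ℂ :=
  ∑ i, (m i : ℤ) • lam i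

lemma signedSum_apply (lam : ι → AddChar G ℂ) (m : ι → SignType) (x : G) :
    signedSum lam m x = ∏ i, lam i x ^ (m i : ℤ) := by
  simp only [signedSum, AddChar.sum_apply, AddChar.zsmul_apply]

/-- Approximate dissociativity relative to `T`: every non-trivial signed combination of the
characters has Fourier coefficient less than `τ` on `T`. For `T` the whole group this is the usual
notion. -/
def RelDissociated (T : Finset G) (τ : ℝ) (lam : ι → AddChar G ℂ) : Prop :=
  ∀ m : ι → SignType, m ≠ 0 → ‖charSum T (signedSum lam m)‖ < τ * #T

/-- The Riesz product `∏ᵢ (cosh θ + Re (cᵢ λᵢ) sinh θ)`. -/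
noncomputable def rieszProduct (lam : ι → AddChar G ℂ) (c : ι → ℂ) (θ : ℝ) (x : G) : ℝ :=
  ∏ i, (Real.cosh θ + (c i * lam i x).re * Real.sinh θ)

/-- The coefficients in `cosh θ + Re (c z) sinh θ = ∑ s, rieszCoeff θ c s * z ^ s` for `‖z‖ = 1`. -/
noncomputable def rieszCoeff (θ : ℝ) (c : ℂ) : SignType → ℂ
  | .zero => Real.cosh θ
  | .pos => Real.sinh θ * c / 2
  | .neg => Real.sinh θ * starRingEnd ℂ c / 2

lemma sum_signType {M : Type*} [AddCommMonoid M] (f : SignType → M) :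
    ∑ s, f s = f 0 + (f (-1) + f 1) := by
  rw [SignType.univ_eq, sum_insert (by decide), sum_insert (by decide), sum_singleton]

lemma sum_norm_rieszCoeff {θ : ℝ} (hθ : 0 ≤ θ) {c : ℂ} (hc : ‖c‖ = 1) :
    ∑ s, ‖rieszCoeff θ c s‖ = Real.exp θ := by
  have cosh : ‖rieszCoeff θ c 0‖ = Real.cosh θ :=
    (Complex.norm_real _).trans (abs_of_pos (Real.cosh_pos θ))
  have sinh_neg : ‖rieszCoeff θ c (-1)‖ = Real.sinh θ / 2 := by
    change ‖(Real.sinh θ : ℂ) * starRingEnd ℂ c / 2‖ = _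
    rw [norm_div, norm_mul, RCLike.norm_conj, hc, Complex.norm_real, Complex.norm_ofNat, mul_one,
      Real.norm_of_nonneg (Real.sinh_nonneg_iff.2 hθ)]
  have sinh_pos : ‖rieszCoeff θ c 1‖ = Real.sinh θ / 2 := by
    change ‖(Real.sinh θ : ℂ) * c / 2‖ = _
    rw [norm_div, norm_mul, hc, Complex.norm_real, Complex.norm_ofNat, mul_one,
      Real.norm_of_nonneg (Real.sinh_nonneg_iff.2 hθ)]
  rw [sum_signType, cosh, sinh_neg, sinh_pos, add_halves, Real.cosh_add_sinh]

variable [Finite G]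

lemma sum_rieszCoeff_mul_zpow (θ : ℝ) (c : ℂ) (γ : AddChar G ℂ) (x : G) :
    ∑ s : SignType, rieszCoeff θ c s * γ x ^ (s : ℤ) =
      ((Real.cosh θ + (c * γ x).re * Real.sinh θ : ℝ) : ℂ) := by
  have conj : γ x ^ (-1 : ℤ) = starRingEnd ℂ (γ x) := by
    rw [zpow_neg_one, ← AddChar.map_neg_eq_conj, AddChar.map_neg_eq_inv]
  rw [sum_signType]
  change (Real.cosh θ : ℂ) * γ x ^ (0 : ℤ) + (Real.sinh θ * starRingEnd ℂ c / 2 * γ x ^ (-1 : ℤ) +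
    Real.sinh θ * c / 2 * γ x ^ (1 : ℤ)) = _
  rw [Complex.ofReal_add, Complex.ofReal_mul, Complex.re_eq_add_conj, conj, map_mul,
    zpow_zero, zpow_one]
  ring

variable {lam : ι → AddChar G ℂ} {c : ι → ℂ} {θ : ℝ}

lemma rieszProduct_eq_sum [DecidableEq ι] (lam : ι → AddChar G ℂ) (c : ι → ℂ) (θ : ℝ) (x : G) :
    (rieszProduct lam c θ x : ℂ) =
      ∑ m : ι → SignType, (∏ i, rieszCoeff θ (c i) (m i)) * signedSum lam m x := by
  simp_rw [rieszProduct, Complex.ofReal_prod, ← sum_rieszCoeff_mul_zpow, Fintype.prod_sum,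
    prod_mul_distrib, signedSum_apply]

lemma exp_sum_mul_le_rieszProduct (hc : ∀ i, ‖c i‖ = 1) (x : G) :
    Real.exp ((∑ i, (c i * lam i x).re) * θ) ≤ rieszProduct lam c θ x := by
  rw [sum_mul, Real.exp_sum]
  refine prod_le_prod (fun i _ ↦ (Real.exp_pos _).le) fun i _ ↦ ?_
  refine Real.exp_mul_le_cosh_add_mul_sinh ((Complex.abs_re_le_norm _).trans ?_) θ
  rw [norm_mul, hc, AddChar.norm_apply, mul_one]

lemma rieszProduct_nonneg (hc : ∀ i, ‖c i‖ = 1) (x : G) : 0 ≤ rieszProduct lam c θ x :=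
  (Real.exp_pos _).le.trans (exp_sum_mul_le_rieszProduct hc x)

lemma sum_sum_rieszProduct_sub [DecidableEq ι] (lam : ι → AddChar G ℂ) (c : ι → ℂ) (θ : ℝ)
    (U T : Finset G) :
    ((∑ u ∈ U, ∑ v ∈ T, rieszProduct lam c θ (u - v) : ℝ) : ℂ) =
      ∑ m : ι → SignType, (∏ i, rieszCoeff θ (c i) (m i)) *
        (charSum U (signedSum lam m) * starRingEnd ℂ (charSum T (signedSum lam m))) := by
  simp only [Complex.ofReal_sum, rieszProduct_eq_sum]
  rw [sum_congr rfl fun u _ ↦ sum_comm, sum_comm]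
  refine sum_congr rfl fun m _ ↦ ?_
  rw [← sum_addChar_neg, charSum, sum_mul_sum]
  simp only [mul_sum, sub_eq_add_neg, AddChar.map_add_eq_mul]

lemma RelDissociated.sum_sum_rieszProduct_sub_le {T : Finset G} {τ : ℝ}
    (h : RelDissociated T τ lam) (hτ : 0 ≤ τ) (hθ : 0 ≤ θ) (hc : ∀ i, ‖c i‖ = 1) (U : Finset G) :
    ∑ u ∈ U, ∑ v ∈ T, rieszProduct lam c θ (u - v) ≤
      #U * #T * (Real.cosh θ ^ Fintype.card ι + τ * Real.exp θ ^ Fintype.card ι) := by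
  classical
  set M : (ι → SignType) → ℝ := fun m ↦ ∏ i, ‖rieszCoeff θ (c i) (m i)‖ with hM
  have total : ∑ m, M m = Real.exp θ ^ Fintype.card ι := by
    rw [hM, ← Fintype.prod_sum fun i s ↦ ‖rieszCoeff θ (c i) s‖,
      prod_congr rfl fun i _ ↦ sum_norm_rieszCoeff hθ (hc i), prod_const, card_univ]
  have constant : M 0 = Real.cosh θ ^ Fintype.card ι := by
    have coeff_zero (i : ι) : ‖rieszCoeff θ (c i) 0‖ = Real.cosh θ :=
      (Complex.norm_real _).trans (abs_of_pos (Real.cosh_pos θ))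
    simp only [hM, Pi.zero_apply, coeff_zero, prod_const, card_univ]
  have norm_charSum_signedSum_le (m : ι → SignType) :
      ‖charSum T (signedSum lam m)‖ ≤ #T * ((if m = 0 then 1 else 0) + τ) := by
    split_ifs with hm
    · refine (norm_charSum_le _ _).trans (le_mul_of_one_le_right (Nat.cast_nonneg _) ?_)
      linarith
    · rw [zero_add, mul_comm]
      exact (h m hm).le
  calc ∑ u ∈ U, ∑ v ∈ T, rieszProduct lam c θ (u - v)
      ≤ ‖((∑ u ∈ U, ∑ v ∈ T, rieszProduct lam c θ (u - v) : ℝ) : ℂ)‖ := by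
        rw [Complex.norm_real]
        exact le_abs_self _
    _ ≤ ∑ m, M m * (#U * (#T * ((if m = 0 then 1 else 0) + τ))) := by
        rw [sum_sum_rieszProduct_sub]
        refine (norm_sum_le _ _).trans (sum_le_sum fun m _ ↦ ?_)
        rw [norm_mul, norm_mul, norm_prod, RCLike.norm_conj]
        gcongr
        exacts [norm_charSum_le _ _, norm_charSum_signedSum_le m]
    _ = #U * #T * (∑ m, M m * (if m = 0 then 1 else 0) + τ * ∑ m, M m) := by
        rw [mul_sum univ M, ← sum_add_distrib, mul_sum]
        exact sum_congr rfl fun m _ ↦ by ring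
    _ = _ := by simp only [mul_ite, mul_one, mul_zero, sum_ite_eq', mem_univ, if_true, total,
        constant]

end RieszProduct

lemma exists_norm_eq_one_re_mul_eq_norm (z : ℂ) : ∃ c : ℂ, ‖c‖ = 1 ∧ (c * z).re = ‖z‖ := by
  rcases eq_or_ne z 0 with rfl | hz
  · exact ⟨1, by simp, by simp⟩
  have hz' : (‖z‖ : ℂ) ≠ 0 := by simpa using hz
  have mul_eq : starRingEnd ℂ z / ‖z‖ * z = ‖z‖ := by
    rw [div_mul_eq_mul_div, Complex.conj_mul', sq, mul_div_assoc, div_self hz', mul_one]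
  exact ⟨starRingEnd ℂ z / ‖z‖, by simp [hz], by rw [mul_eq, Complex.ofReal_re]⟩

lemma card_mul_exp_le_sum_exp {κ : Type*} {X : Finset κ} {f : κ → ℝ} {a : ℝ}
    (h : #X * a ≤ ∑ x ∈ X, f x) : #X * Real.exp a ≤ ∑ x ∈ X, Real.exp (f x) := by
  have tangent : ∀ x ∈ X, Real.exp a * (f x - a + 1) ≤ Real.exp (f x) := fun x _ ↦
    calc _ ≤ Real.exp a * Real.exp (f x - a) := by
          gcongr
          exact Real.add_one_le_exp _
      _ = _ := by rw [← Real.exp_add, add_sub_cancel]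
  refine le_trans ?_ (sum_le_sum tangent)
  rw [← mul_sum, sum_add_distrib, sum_sub_distrib, sum_const, sum_const, nsmul_eq_mul,
    nsmul_eq_mul, mul_one, mul_comm]
  gcongr
  linarith

lemma card_mul_sum_le_sum_sum_sub {X T U : Finset G} {F : G → ℝ} (hF : ∀ x, 0 ≤ F x)
    (hU : ∀ x ∈ X, ∀ y ∈ T, x + y ∈ U) :
    #T * ∑ x ∈ X, F x ≤ ∑ u ∈ U, ∑ v ∈ T, F (u - v) := by
  rw [sum_comm, ← nsmul_eq_mul]
  refine card_nsmul_le_sum _ _ _ fun v hv ↦ ?_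
  calc ∑ x ∈ X, F x = ∑ u ∈ X.map (addRightEmbedding v), F (u - v) := by simp
    _ ≤ ∑ u ∈ U, F (u - v) := by
      refine sum_le_sum_of_subset_of_nonneg (fun u hu ↦ ?_) fun _ _ _ ↦ hF _
      obtain ⟨x, hx, rfl⟩ := mem_map.1 hu
      exact hU x hx v hv

lemma cosh_half_pow_add_le (n : ℕ) :
    Real.cosh (1 / 2) ^ n + (1 / 2 : ℝ) ^ n * Real.exp (1 / 2) ^ n ≤ 2 * Real.exp (n / 8) := by
  have cosh_le : Real.cosh (1 / 2) ^ n ≤ Real.exp (n / 8) :=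
    calc _ ≤ Real.exp ((1 / 2) ^ 2 / 2) ^ n := by
          gcongr
          exact Real.cosh_le_exp_half_sq _
      _ = _ := by
          rw [← Real.exp_nat_mul]
          ring_nf
  have exp_half_le : Real.exp (1 / 2) ≤ 2 := by
    have sq : Real.exp (1 / 2) ^ 2 = Real.exp 1 := by
      rw [← Real.exp_nat_mul]
      norm_num
    nlinarith [Real.exp_one_lt_d9, Real.exp_pos (1 / 2)]
  have tail_le : (1 / 2 : ℝ) ^ n * Real.exp (1 / 2) ^ n ≤ 1 := by
    rw [← mul_pow]
    exact pow_le_one₀ (by positivity) (by linarith)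
  linarith [Real.one_le_exp (by positivity : (0 : ℝ) ≤ n / 8)]

section

variable [Finite G]

-- The mean of `exp (∑ᵢ Re (cᵢ λᵢ) / 2)` over `X` is at least `exp (n / 4)` by convexity, while
-- dissociativity bounds the mean of its majorant, the Riesz product, by `exp (n / 8)`.
theorem RelDissociated.card_mul_exp_le {ι : Type*} [Fintype ι] {lam : ι → AddChar G ℂ}
    {T X U : Finset G} (h : RelDissociated T ((1 / 2) ^ Fintype.card ι) lam) (hT : T.Nonempty)
    (hlam : ∀ i, (#X : ℝ) / 2 ≤ ‖charSum X (lam i)‖) (hU : ∀ x ∈ X, ∀ y ∈ T, x + y ∈ U) :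
    #X * Real.exp (Fintype.card ι / 8) ≤ 2 * #U := by
  set n := Fintype.card ι with hn
  choose c hc hphase using fun i ↦ exists_norm_eq_one_re_mul_eq_norm (charSum X (lam i))
  have mean : #X * (n / 4 : ℝ) ≤ ∑ x ∈ X, (∑ i, (c i * lam i x).re) * (1 / 2) := by
    rw [← sum_mul, sum_comm]
    have aligned : ∀ i, (#X : ℝ) / 2 ≤ ∑ x ∈ X, (c i * lam i x).re := fun i ↦ by
      rw [← Complex.re_sum, ← mul_sum]
      exact (hlam i).trans (hphase i).ge
    have := card_nsmul_le_sum univ _ _ fun i _ ↦ aligned i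
    rw [nsmul_eq_mul, card_univ, ← hn] at this
    linarith
  have lower : #X * Real.exp (n / 4) ≤ ∑ x ∈ X, rieszProduct lam c (1 / 2) x :=
    (card_mul_exp_le_sum_exp mean).trans (sum_le_sum fun x _ ↦ exp_sum_mul_le_rieszProduct hc x)
  have upper := (card_mul_sum_le_sum_sum_sub (rieszProduct_nonneg (θ := 1 / 2) hc) hU).trans
    (h.sum_sum_rieszProduct_sub_le (by positivity) (by norm_num) hc U)
  have hT0 : (0 : ℝ) < #T := mod_cast hT.card_pos
  have split : Real.exp (n / 4 : ℝ) = Real.exp (n / 8) * Real.exp (n / 8) := by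
    rw [← Real.exp_add]
    ring_nf
  refine le_of_mul_le_mul_left ?_ (mul_pos hT0 (Real.exp_pos (n / 8)))
  calc #T * Real.exp (n / 8) * (#X * Real.exp (n / 8)) = #T * (#X * Real.exp (n / 4)) := by
        rw [split]
        ring
    _ ≤ #T * ∑ x ∈ X, rieszProduct lam c (1 / 2) x := by gcongr
    _ ≤ #U * #T * (2 * Real.exp (n / 8)) := by
        refine upper.trans ?_
        gcongr
        exact cosh_half_pow_add_le n
    _ = _ := by ring

lemma AlmostInvariant.norm_addChar_sub_one_le [DecidableEq G] {T : Finset G} {δ τ : ℝ} {b : G}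
    (hb : AlmostInvariant T δ b) (hT : T.Nonempty) (hτ : 0 < τ) {ψ : AddChar G ℂ}
    (hψ : τ * #T ≤ ‖charSum T ψ‖) : ‖ψ b - 1‖ ≤ 2 * δ / τ := by
  have hT0 : (0 : ℝ) < #T := mod_cast hT.card_pos
  set T' := T.map (addRightEmbedding b) with hT'
  have shifted : ψ b * charSum T ψ = charSum T' ψ := by
    simp [charSum, hT', mul_sum, AddChar.map_add_eq_mul, mul_comm]
  have escape : #(T' \ T) = #{x ∈ T | x + b ∉ T} := by
    have : T' \ T = {x ∈ T | x + b ∉ T}.map (addRightEmbedding b) := by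
      ext x
      simp only [hT', mem_sdiff, mem_map, mem_filter, addRightEmbedding_apply]
      constructor
      · rintro ⟨⟨y, hy, rfl⟩, hx⟩
        exact ⟨y, ⟨hy, hx⟩, rfl⟩
      · rintro ⟨y, ⟨hy, hyb⟩, rfl⟩
        exact ⟨⟨y, hy, rfl⟩, hyb⟩
    rw [this, card_map]
  have escape' : #(T \ T') = #(T' \ T) := card_sdiff_comm (card_map _).symm
  have difference : ‖ψ b - 1‖ * ‖charSum T ψ‖ ≤ 2 * (δ * #T) := by
    rw [← norm_mul, sub_one_mul, shifted, charSum, charSum, ← sum_sdiff_sub_sum_sdiff]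
    refine (norm_sub_le _ _).trans ((add_le_add (norm_charSum_le (T' \ T) ψ)
      (norm_charSum_le (T \ T') ψ)).trans ?_)
    rw [escape', escape, ← two_mul]
    exact mul_le_mul_of_nonneg_left hb zero_le_two
  rw [le_div_iff₀ hτ]
  refine le_of_mul_le_mul_right ?_ hT0
  linarith [mul_le_mul_of_nonneg_left hψ (norm_nonneg (ψ b - 1))]

end

lemma norm_prod_sub_one_le {κ : Type*} (s : Finset κ) {z : κ → ℂ} (hz : ∀ i ∈ s, ‖z i‖ = 1) :
    ‖∏ i ∈ s, z i - 1‖ ≤ ∑ i ∈ s, ‖z i - 1‖ := by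
  classical
  induction s using Finset.induction_on with
  | empty => simp
  | insert a s ha ih =>
    rw [prod_insert ha, sum_insert ha]
    calc ‖z a * ∏ i ∈ s, z i - 1‖ = ‖(z a - 1) + z a * (∏ i ∈ s, z i - 1)‖ := by ring_nf
      _ ≤ ‖z a - 1‖ + ‖z a * (∏ i ∈ s, z i - 1)‖ := norm_add_le _ _
      _ ≤ _ := by
        rw [norm_mul, hz a (mem_insert_self a s), one_mul]
        gcongr
        exact ih fun i hi ↦ hz i (mem_insert_of_mem hi)

lemma norm_inv_sub_one {z : ℂ} (hz : ‖z‖ = 1) : ‖z⁻¹ - 1‖ = ‖z - 1‖ := by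
  have hz0 : z ≠ 0 := norm_ne_zero_iff.1 (by rw [hz]; exact one_ne_zero)
  have : z⁻¹ - 1 = -(z - 1) * z⁻¹ := by
    rw [neg_sub, sub_mul, one_mul, mul_inv_cancel₀ hz0]
  rw [this, norm_mul, norm_neg, norm_inv, hz, inv_one, mul_one]

lemma norm_zpow_sub_one_le {z : ℂ} (hz : ‖z‖ = 1) (s : SignType) :
    ‖z ^ (s : ℤ) - 1‖ ≤ ‖z - 1‖ := by
  cases s
  · simp
  · simpa using (norm_inv_sub_one hz).le
  · simp

lemma norm_sub_one_eq_norm_zpow_sub_one {z : ℂ} (hz : ‖z‖ = 1) {s : SignType} (hs : s ≠ 0) :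
    ‖z - 1‖ = ‖z ^ (s : ℤ) - 1‖ := by
  cases s
  · exact absurd rfl hs
  · simpa using (norm_inv_sub_one hz).symm
  · simp

lemma exists_signedSum_of_not_relDissociated_cons {T : Finset G} {τ : ℝ} {j : ℕ}
    {lam : Fin j → AddChar G ℂ} (h : RelDissociated T τ lam) {γ : AddChar G ℂ}
    (hγ : ¬ RelDissociated T τ (Fin.cons γ lam : Fin (j + 1) → AddChar G ℂ)) :
    ∃ (s : SignType) (m : Fin j → SignType), s ≠ 0 ∧
      τ * #T ≤ ‖charSum T ((s : ℤ) • γ + signedSum lam m)‖ := by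
  simp only [RelDissociated, not_forall, not_lt] at hγ
  obtain ⟨m, hm, large⟩ := hγ
  have head_tail : signedSum (Fin.cons γ lam : Fin (j + 1) → AddChar G ℂ) m =
      (m 0 : ℤ) • γ + signedSum lam (Fin.tail m) := by
    simp [signedSum, Fin.sum_univ_succ, Fin.tail]
  rw [head_tail] at large
  refine ⟨m 0, Fin.tail m, fun hm0 ↦ ?_, large⟩
  have tail_ne : Fin.tail m ≠ 0 := fun htail ↦
    hm (funext (Fin.cases hm0 fun i ↦ congrFun htail i))
  rw [hm0, SignType.coe_zero, zero_zsmul, zero_add] at large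
  exact (h _ tail_ne).not_ge large

variable [Finite G]

lemma norm_signedSum_apply_sub_one_le {ι : Type*} [Fintype ι] {lam : ι → AddChar G ℂ} {b : G}
    {ε : ℝ} (h : ∀ i, ‖lam i b - 1‖ ≤ ε) (m : ι → SignType) :
    ‖signedSum lam m b - 1‖ ≤ Fintype.card ι * ε := by
  rw [signedSum_apply, ← nsmul_eq_mul, ← card_univ, ← sum_const]
  refine (norm_prod_sub_one_le _ fun i _ ↦ ?_).trans (sum_le_sum fun i _ ↦
    (norm_zpow_sub_one_le (AddChar.norm_apply _ _) (m i)).trans (h i))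
  rw [norm_zpow, AddChar.norm_apply, one_zpow]

lemma exists_maximal_relDissociated {T X U : Finset G} {p : ℕ} (hT : T.Nonempty)
    (hX : X.Nonempty) (hU : ∀ x ∈ X, ∀ y ∈ T, x + y ∈ U) (hUX : (#U : ℝ) ≤ 2 ^ (p + 1) * #X) :
    ∃ j < 8 * (p + 3), ∃ lam : Fin j → AddChar G ℂ,
      RelDissociated T ((1 / 2) ^ (8 * (p + 3))) lam ∧
      ∀ γ, (#X : ℝ) / 2 ≤ ‖charSum X γ‖ → ¬ RelDissociated T ((1 / 2) ^ (8 * (p + 3)))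
        (Fin.cons γ lam : Fin (j + 1) → AddChar G ℂ) := by
  set n := 8 * (p + 3) with hn
  by_contra! extend
  have all : ∀ j ≤ n, ∃ lam : Fin j → AddChar G ℂ,
      RelDissociated T ((1 / 2) ^ n) lam ∧ ∀ i, (#X : ℝ) / 2 ≤ ‖charSum X (lam i)‖ := by
    intro j
    induction j with
    | zero => exact fun _ ↦ ⟨Fin.elim0, fun m hm ↦ (hm (Subsingleton.elim _ _)).elim, Fin.rec0⟩
    | succ j ih =>
      intro hj
      obtain ⟨lam, hlam, hspec⟩ := ih (by omega)
      obtain ⟨γ, hγ, hcons⟩ := extend j (by omega) lam hlam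
      exact ⟨Fin.cons γ lam, hcons, Fin.cases hγ hspec⟩
  obtain ⟨lam, hlam, hspec⟩ := all n le_rfl
  have bound := RelDissociated.card_mul_exp_le (by rwa [Fintype.card_fin]) hT hspec hU
  have exponent : ((Fintype.card (Fin n) : ℝ) / 8) = (p + 3 : ℕ) := by
    rw [Fintype.card_fin, hn]
    push_cast
    ring
  have hX0 : (0 : ℝ) < #X := mod_cast hX.card_pos
  rw [exponent] at bound
  have : #X * (2 : ℝ) ^ (p + 3) ≤ #X * 2 ^ (p + 2) :=
    calc _ ≤ #X * Real.exp (p + 3 : ℕ) := by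
          gcongr
          exact two_pow_le_exp _
      _ ≤ 2 * (2 ^ (p + 1) * #X) := bound.trans (by gcongr)
      _ = _ := by ring
  exact (pow_lt_pow_right₀ one_lt_two (Nat.lt_succ_self (p + 2))).not_ge
    (le_of_mul_le_mul_left this hX0)

theorem exists_finset_addChar_control_largeSpectrum [DecidableEq G] {T X U : Finset G} {p : ℕ}
    (hT : T.Nonempty) (hX : X.Nonempty) (hU : ∀ x ∈ X, ∀ y ∈ T, x + y ∈ U)
    (hUX : (#U : ℝ) ≤ 2 ^ (p + 1) * #X) :
    ∃ Λ : Finset (AddChar G ℂ), #Λ ≤ 8 * (p + 3) ∧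
      ∀ (b : G) (δ ε : ℝ), 0 ≤ ε → AlmostInvariant T δ b → (∀ γ ∈ Λ, ‖γ b - 1‖ ≤ ε) →
        ∀ γ : AddChar G ℂ, (#X : ℝ) / 2 ≤ ‖charSum X γ‖ →
          ‖γ b - 1‖ ≤ (8 * (p + 3) : ℕ) * ε + 2 * δ * 2 ^ (8 * (p + 3)) := by
  classical
  obtain ⟨j, hj, lam, hlam, hmax⟩ := exists_maximal_relDissociated hT hX hU hUX
  refine ⟨univ.image lam, card_image_le.trans (by simpa using hj.le), ?_⟩
  intro b δ ε hε hb hΛ γ hγ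
  obtain ⟨s, m, hs, large⟩ := exists_signedSum_of_not_relDissociated_cons hlam (hmax γ hγ)
  set ψ := (s : ℤ) • γ + signedSum lam m
  have near : ‖ψ b - 1‖ ≤ 2 * δ * 2 ^ (8 * (p + 3)) := by
    have := hb.norm_addChar_sub_one_le hT (by positivity) large
    rwa [one_div, inv_pow, div_inv_eq_mul] at this
  have near_tail : ‖signedSum lam m b - 1‖ ≤ (8 * (p + 3) : ℕ) * ε := by
    refine (norm_signedSum_apply_sub_one_le
      (fun i ↦ hΛ _ (mem_image_of_mem lam (mem_univ i))) m).trans ?_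
    rw [Fintype.card_fin]
    gcongr
  have unit : ‖γ b ^ (s : ℤ)‖ = 1 := by rw [norm_zpow, AddChar.norm_apply, one_zpow]
  have split : γ b ^ (s : ℤ) - 1 = (ψ b - 1) - γ b ^ (s : ℤ) * (signedSum lam m b - 1) := by
    rw [AddChar.add_apply, AddChar.zsmul_apply]
    ring
  rw [norm_sub_one_eq_norm_zpow_sub_one (AddChar.norm_apply γ b) hs, split]
  refine (norm_sub_le _ _).trans ?_
  rw [norm_mul, unit, one_mul]
  linarith

end Chang

/-! ### Bohr sets -/

section Bohr

variable {G : Type*} [AddCommGroup G] [Fintype G]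

open Classical in
/-- The Bohr set of radius `r` with frequency set `Γ`; the distance of `γ x` to `1` is measured in
`ℂ`. -/
noncomputable def bohr (Γ : Finset (AddChar G ℂ)) (r : ℝ) : Finset G :=
  {x | ∀ γ ∈ Γ, ‖γ x - 1‖ ≤ r}

variable {Γ Γ' : Finset (AddChar G ℂ)} {r s ρ : ℝ} {x y : G}

lemma mem_bohr : x ∈ bohr Γ r ↔ ∀ γ ∈ Γ, ‖γ x - 1‖ ≤ r := by simp [bohr]

lemma zero_mem_bohr (hr : 0 ≤ r) : (0 : G) ∈ bohr Γ r :=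
  mem_bohr.2 fun γ _ ↦ by simpa using hr

lemma bohr_nonempty (hr : 0 ≤ r) : (bohr Γ r).Nonempty := ⟨0, zero_mem_bohr hr⟩

lemma bohr_mono (h : r ≤ s) : bohr Γ r ⊆ bohr Γ s := fun _ hx ↦
  mem_bohr.2 fun γ hγ ↦ (mem_bohr.1 hx γ hγ).trans h

lemma bohr_anti (h : Γ ⊆ Γ') : bohr Γ' r ⊆ bohr Γ r := fun _ hx ↦
  mem_bohr.2 fun γ hγ ↦ mem_bohr.1 hx γ (h hγ)

lemma card_bohr_mono (h : r ≤ s) : (#(bohr Γ r) : ℝ) ≤ #(bohr Γ s) :=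
  mod_cast card_le_card (bohr_mono h)

lemma bohr_two : bohr Γ 2 = univ := eq_univ_of_forall fun x ↦ mem_bohr.2 fun γ _ ↦ by
  refine (norm_sub_le _ _).trans ?_
  rw [AddChar.norm_apply, norm_one]
  norm_num

lemma neg_mem_bohr (hx : x ∈ bohr Γ r) : -x ∈ bohr Γ r := mem_bohr.2 fun γ hγ ↦ by
  rw [AddChar.map_neg_eq_inv, norm_inv_sub_one (AddChar.norm_apply γ x)]
  exact mem_bohr.1 hx γ hγ

lemma add_mem_bohr (hx : x ∈ bohr Γ r) (hy : y ∈ bohr Γ s) : x + y ∈ bohr Γ (r + s) :=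
  mem_bohr.2 fun γ hγ ↦ by
    have split : γ (x + y) - 1 = (γ x - 1) + γ x * (γ y - 1) := by
      rw [AddChar.map_add_eq_mul]
      ring
    rw [split]
    refine (norm_add_le _ _).trans (add_le_add (mem_bohr.1 hx γ hγ) ?_)
    rw [norm_mul, AddChar.norm_apply, one_mul]
    exact mem_bohr.1 hy γ hγ

lemma sub_mem_bohr (hx : x ∈ bohr Γ r) (hy : y ∈ bohr Γ s) : x - y ∈ bohr Γ (r + s) := by
  rw [sub_eq_add_neg]
  exact add_mem_bohr hx (neg_mem_bohr hy)

section Size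

/-- The cell of a point in a decomposition of the complex plane into squares of side `r / 2`. -/
noncomputable def squareCell (r : ℝ) (z : ℂ) : ℤ × ℤ := (⌊z.re / (r / 2)⌋, ⌊z.im / (r / 2)⌋)

lemma norm_sub_le_of_squareCell_eq (hr : 0 < r) {z w : ℂ} (h : squareCell r z = squareCell r w) :
    ‖z - w‖ ≤ r := by
  have abs_sub_lt {a b : ℝ} (hab : ⌊a / (r / 2)⌋ = ⌊b / (r / 2)⌋) : |a - b| < r / 2 := by
    have := Int.abs_sub_lt_one_of_floor_eq_floor hab
    rwa [← sub_div, abs_div, abs_of_pos (half_pos hr), div_lt_one (half_pos hr)] at this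
  have hre := abs_sub_lt (congrArg Prod.fst h)
  have him := abs_sub_lt (congrArg Prod.snd h)
  have := Complex.norm_le_abs_re_add_abs_im (z - w)
  rw [Complex.sub_re, Complex.sub_im] at this
  linarith

lemma squareCell_mem_of_norm_le (hr : 0 < r) {R : ℝ} {q : ℕ} (hR : R ≤ q * r) {z : ℂ}
    (hz : ‖z‖ ≤ R) :
    squareCell r z ∈ Icc (-(2 * q : ℤ)) (2 * q) ×ˢ Icc (-(2 * q : ℤ)) (2 * q) := by
  have floor_mem {a : ℝ} (ha : |a| ≤ R) : ⌊a / (r / 2)⌋ ∈ Icc (-(2 * q : ℤ)) (2 * q) := by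
    obtain ⟨lower, upper⟩ := abs_le.1 ha
    rw [mem_Icc, Int.le_floor, le_div_iff₀ (half_pos hr), ← Int.lt_add_one_iff, Int.floor_lt,
      div_lt_iff₀ (half_pos hr)]
    push_cast
    constructor <;> linarith
  exact mem_product.2 ⟨floor_mem ((Complex.abs_re_le_norm z).trans hz),
    floor_mem ((Complex.abs_im_le_norm z).trans hz)⟩

lemma card_bohr_le (Γ : Finset (AddChar G ℂ)) (hr : 0 < r) {R : ℝ} {q : ℕ} (hR : R ≤ q * r) :
    #(bohr Γ R) ≤ ((4 * q + 1) ^ 2) ^ #Γ * #(bohr Γ r) := by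
  classical
  let cells (x : G) (γ : Γ) : ℤ × ℤ := squareCell r ((γ : AddChar G ℂ) x - 1)
  have card_fibre : ∀ c ∈ (bohr Γ R).image cells, #{x ∈ bohr Γ R | cells x = c} ≤ #(bohr Γ r) := by
    simp only [forall_mem_image]
    intro x₀ _
    refine card_le_card_of_injOn (· - x₀) (fun x hx ↦ mem_bohr.2 fun γ hγ ↦ ?_)
      (sub_left_injective.injOn)
    have close := norm_sub_le_of_squareCell_eq hr (congrFun (mem_filter.1 hx).2 ⟨γ, hγ⟩)
    have translate : γ (x - x₀) - 1 = (γ x - 1 - (γ x₀ - 1)) * γ (-x₀) := by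
      have : γ x₀ * γ (-x₀) = 1 := by
        rw [← AddChar.map_add_eq_mul, add_neg_cancel, AddChar.map_zero_eq_one]
      rw [sub_eq_add_neg x, AddChar.map_add_eq_mul, sub_sub_sub_cancel_right, sub_mul, this]
    rwa [translate, norm_mul, AddChar.norm_apply, mul_one]
  have card_cells : #((bohr Γ R).image cells) ≤ ((4 * q + 1) ^ 2) ^ #Γ := by
    have subset : (bohr Γ R).image cells ⊆ Fintype.piFinset fun _ : Γ ↦
        Icc (-(2 * q : ℤ)) (2 * q) ×ˢ Icc (-(2 * q : ℤ)) (2 * q) := by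
      simp only [image_subset_iff, Fintype.mem_piFinset]
      exact fun x hx γ ↦ squareCell_mem_of_norm_le hr hR (mem_bohr.1 hx γ γ.2)
    have side : (2 * (q : ℤ) + 1 - -(2 * q)).toNat = 4 * q + 1 := by omega
    refine (card_le_card subset).trans_eq ?_
    rw [Fintype.card_piFinset, prod_const, card_product, Int.card_Icc, side, card_univ,
      Fintype.card_coe, sq]
  calc #(bohr Γ R) ≤ #(bohr Γ r) * #((bohr Γ R).image cells) :=
        card_le_mul_card_image _ _ card_fibre
    _ ≤ _ := by
        rw [mul_comm]
        gcongr

end Size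

section Regularity

lemma two_le_one_add_half_pow_pow (a : ℕ) : (2 : ℝ) ≤ (1 + (1 / 2 : ℝ) ^ a) ^ 2 ^ a := by
  have positive : (0 : ℝ) ≤ (1 / 2) ^ a := by positivity
  refine le_of_eq_of_le ?_ (one_add_mul_le_pow (by linarith) (2 ^ a))
  rw [Nat.cast_pow, Nat.cast_ofNat, ← mul_pow]
  norm_num

lemma pow_mul_card_bohr_le {a t : ℝ} (ha : 0 ≤ a) {J : ℕ}
    (h : ∀ i < J, a * #(bohr Γ (r + i * t)) ≤ #(bohr Γ (r + i * t + t))) :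
    a ^ J * #(bohr Γ r) ≤ #(bohr Γ (r + J * t)) := by
  induction J with
  | zero => simp
  | succ J ih =>
    calc a ^ (J + 1) * #(bohr Γ r) = a * (a ^ J * #(bohr Γ r)) := by ring
      _ ≤ a * #(bohr Γ (r + J * t)) := by
          gcongr
          exact ih fun i hi ↦ h i (hi.trans J.lt_succ_self)
      _ ≤ #(bohr Γ (r + J * t + t)) := h J J.lt_succ_self
      _ = _ := by
          congr 3
          push_cast
          ring

-- Otherwise the Bohr sets would grow by a factor `2 ^ (7 * D)` between the radii `r / 2` and `r`,
-- whereas doubling the radius costs at most `81 ^ D`.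
theorem exists_regular_radius {D : ℕ} (hΓ : #Γ ≤ D) (hD : 1 ≤ D) (hr : 0 < r) (a : ℕ) :
    ∃ ρ, r / 2 ≤ ρ ∧ ρ ≤ r ∧
      (#(bohr Γ (ρ + r * (1 / 2) ^ (a + D + 4))) : ℝ) ≤ (1 + (1 / 2) ^ a) * #(bohr Γ ρ) := by
  set t := r * (1 / 2 : ℝ) ^ (a + D + 4) with ht
  set J := 2 ^ a * (7 * D) with hJ
  have ht0 : 0 ≤ t := by positivity
  have reach : J * t ≤ r / 2 := by
    have : (J : ℝ) ≤ 2 ^ (a + D + 3) := by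
      have : D < 2 ^ D := Nat.lt_two_pow_self
      have : 2 ^ a * (7 * D) ≤ 2 ^ a * 2 ^ (D + 3) := Nat.mul_le_mul_left _ (by rw [pow_add]; omega)
      rw [add_assoc, pow_add]
      exact_mod_cast this
    calc (J : ℝ) * t ≤ 2 ^ (a + D + 3) * t := by gcongr
      _ = (2 * (1 / 2)) ^ (a + D + 3) * (r / 2) := by
          rw [ht, mul_pow]
          ring
      _ = r / 2 := by norm_num
  by_contra! hgrow
  have growth : (1 + (1 / 2) ^ a) ^ J * #(bohr Γ (r / 2)) ≤ (#(bohr Γ (r / 2 + J * t)) : ℝ) := by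
    refine pow_mul_card_bohr_le (by positivity) fun i hi ↦
      (hgrow _ (le_add_of_nonneg_right (by positivity)) ?_).le
    have : (i : ℝ) * t ≤ J * t := by gcongr
    linarith
  have doubling : (#(bohr Γ r) : ℝ) ≤ 81 ^ D * #(bohr Γ (r / 2)) := by
    have := card_bohr_le Γ (half_pos hr) (R := r) (q := 2) (by push_cast; linarith)
    exact_mod_cast this.trans (Nat.mul_le_mul_right _ (Nat.pow_le_pow_right (by norm_num) hΓ))
  have positive : (0 : ℝ) < #(bohr Γ (r / 2)) := mod_cast (bohr_nonempty (half_pos hr).le).card_pos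
  have : ((2 ^ 7) ^ D : ℝ) ≤ 81 ^ D := by
    refine le_of_mul_le_mul_right ?_ positive
    calc ((2 ^ 7) ^ D : ℝ) * #(bohr Γ (r / 2)) ≤ (1 + (1 / 2) ^ a) ^ J * #(bohr Γ (r / 2)) := by
          rw [hJ, pow_mul, ← pow_mul 2]
          gcongr
          exact two_le_one_add_half_pow_pow a
      _ ≤ #(bohr Γ r) := growth.trans (card_bohr_mono (by linarith))
      _ ≤ _ := doubling
  exact (pow_lt_pow_left₀ (by norm_num) (by norm_num) (by omega)).not_ge this

lemma exists_doubling_radius {D : ℕ} (hΓ : #Γ ≤ D) (hD : 1 ≤ D) (hr : 0 < r) :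
    ∃ ρ, r / 2 ≤ ρ ∧ ρ ≤ r ∧
      (#(bohr Γ (ρ + r * (1 / 2) ^ (D + 4))) : ℝ) ≤ 2 * #(bohr Γ ρ) := by
  simpa [one_add_one_eq_two] using exists_regular_radius hΓ hD hr 0

lemma almostInvariant_bohr [DecidableEq G] {δ : ℝ} (hs : 0 ≤ s)
    (h : (#(bohr Γ (ρ + s)) : ℝ) ≤ (1 + δ) * #(bohr Γ ρ)) (hx : x ∈ bohr Γ s) :
    AlmostInvariant (bohr Γ ρ) δ x := by
  have subset : bohr Γ ρ ⊆ bohr Γ (ρ + s) := bohr_mono (by linarith)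
  have escape : #{b ∈ bohr Γ ρ | b + x ∉ bohr Γ ρ} ≤ #(bohr Γ (ρ + s) \ bohr Γ ρ) :=
    card_le_card_of_injOn (· + x) (fun b hb ↦ mem_sdiff.2
      ⟨add_mem_bohr (mem_filter.1 hb).1 hx, (mem_filter.1 hb).2⟩) (add_left_injective x).injOn
  rw [card_sdiff_of_subset subset] at escape
  have : (#{b ∈ bohr Γ ρ | b + x ∉ bohr Γ ρ} : ℝ) ≤ #(bohr Γ (ρ + s)) - #(bohr Γ ρ) := by
    rw [← Nat.cast_sub (card_le_card subset)]
    exact_mod_cast escape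
  rw [AlmostInvariant]
  linarith

end Regularity

section Halving

/-- Multiplication by `(#G + 1) / 2`, which is the inverse of doubling when `#G` is odd. -/
noncomputable def half : G →+ G := nsmulAddMonoidHom ((Fintype.card G + 1) / 2)

lemma half_add_half (hodd : Odd (Fintype.card G)) (x : G) : half x + half x = x := by
  have sum : (Fintype.card G + 1) / 2 + (Fintype.card G + 1) / 2 = Fintype.card G + 1 := by
    obtain ⟨k, hk⟩ := hodd
    omega
  rw [half, nsmulAddMonoidHom_apply, ← add_nsmul, sum, add_nsmul, card_nsmul_eq_zero, one_nsmul,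
    zero_add]

lemma half_add_self (hodd : Odd (Fintype.card G)) (x : G) : half (x + x) = x := by
  rw [map_add, half_add_half hodd]

open Classical in
/-- The frequency set whose Bohr sets are the dilates by `2` of those of `Γ`. -/
noncomputable def halfFreq (Γ : Finset (AddChar G ℂ)) : Finset (AddChar G ℂ) :=
  Γ.image fun γ ↦ γ.compAddMonoidHom half

lemma card_halfFreq_le (Γ : Finset (AddChar G ℂ)) : #(halfFreq Γ) ≤ #Γ := card_image_le

lemma mem_bohr_halfFreq : x ∈ bohr (halfFreq Γ) r ↔ half x ∈ bohr Γ r := by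
  simp [mem_bohr, halfFreq]

lemma mem_bohr_of_mem_bohr_halfFreq (hodd : Odd (Fintype.card G)) (hx : x ∈ bohr (halfFreq Γ) r) :
    x ∈ bohr Γ (r + r) := by
  rw [← half_add_half hodd x]
  exact add_mem_bohr (mem_bohr_halfFreq.1 hx) (mem_bohr_halfFreq.1 hx)

end Halving

end Bohr

/-! ### Density on translates -/

section Weights

variable {ι κ : Type*} [Fintype ι] [Fintype κ]

lemma sum_mul_le_of_sum_eq_one {w f : ι → ℝ} {M : ℝ} (hw : ∀ i, 0 ≤ w i) (hw1 : ∑ i, w i = 1)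
    (hf : ∀ i, f i ≤ M) : ∑ i, w i * f i ≤ M := by
  calc ∑ i, w i * f i ≤ ∑ i, w i * M := sum_le_sum fun i _ ↦ mul_le_mul_of_nonneg_left (hf i) (hw i)
    _ = M := by rw [← sum_mul, hw1, one_mul]

lemma sum_prod_mul_eq_one {v : ι → ℝ} {w : κ → ℝ} (hv1 : ∑ i, v i = 1) (hw1 : ∑ k, w k = 1) :
    ∑ p : ι × κ, v p.1 * w p.2 = 1 := by
  rw [Fintype.sum_prod_type, ← sum_mul_sum, hv1, hw1, one_mul]

lemma sum_coe_inv_card {α : Type*} {B : Finset α} (hB : B.Nonempty) : ∑ _b : B, (#B : ℝ)⁻¹ = 1 := by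
  rw [sum_const, card_univ, Fintype.card_coe, nsmul_eq_mul,
    mul_inv_cancel₀ (Nat.cast_ne_zero.2 hB.card_ne_zero)]

variable {μ G : Type*} [Fintype μ] [AddCommGroup G]

lemma diffSum_prod_add_le {v : ι → ℝ} {w : κ → ℝ} {p : ι → G} {q : κ → G} {F : G → ℝ} {β : ℝ}
    (hv : ∀ i, 0 ≤ v i) (hv1 : ∑ i, v i = 1) (hw : ∀ k, 0 ≤ w k) (hw1 : ∑ k, w k = 1)
    (hF : ∀ x, ∑ k, w k * F (x + q k) ≤ β) :
    diffSum (fun i : ι × κ ↦ v i.1 * w i.2) (fun i ↦ p i.1 + q i.2) F ≤ β := by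
  have regroup : diffSum (fun i : ι × κ ↦ v i.1 * w i.2) (fun i ↦ p i.1 + q i.2) F =
      ∑ j : ι × κ, (v j.1 * w j.2) *
        ∑ i, v i * ∑ k, w k * F (p i - (p j.1 + q j.2) + q k) := by
    rw [diffSum, sum_comm]
    refine sum_congr rfl fun j _ ↦ ?_
    simp only [Fintype.sum_prod_type, mul_sum]
    refine sum_congr rfl fun i _ ↦ sum_congr rfl fun k _ ↦ ?_
    rw [sub_add_eq_add_sub]
    ring
  rw [regroup]
  exact sum_mul_le_of_sum_eq_one (fun j ↦ mul_nonneg (hv _) (hw _)) (sum_prod_mul_eq_one hv1 hw1)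
    fun j ↦ sum_mul_le_of_sum_eq_one hv hv1 fun i ↦ hF _

-- The difference of `a i + b k + q y` and `a i' + b k' + q y'` is `a i - b k'` plus a shift which
-- does not depend on `i` and `k'`.
lemma diffSum_prod_prod_add_le {u : ι → ℝ} {v : κ → ℝ} {w : μ → ℝ} {a : ι → G} {b : κ → G}
    {q : μ → G} {F : G → ℝ} {M : ℝ} (hu : ∀ i, 0 ≤ u i) (hu1 : ∑ i, u i = 1)
    (hv : ∀ k, 0 ≤ v k) (hv1 : ∑ k, v k = 1) (hw : ∀ y, 0 ≤ w y) (hw1 : ∑ y, w y = 1)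
    (hF : ∀ c, ∑ p : ι × κ, u p.1 * v p.2 * F (a p.1 - b p.2 + c) ≤ M) :
    diffSum (fun i : (ι × κ) × μ ↦ u i.1.1 * v i.1.2 * w i.2)
      (fun i ↦ a i.1.1 + b i.1.2 + q i.2) F ≤ M := by
  let e : ((ι × κ) × μ) × ((ι × κ) × μ) ≃ ((κ × ι) × (μ × μ)) × (ι × κ) :=
    { toFun := fun p ↦ (((p.1.1.2, p.2.1.1), (p.1.2, p.2.2)), (p.1.1.1, p.2.1.2))
      invFun := fun p ↦ (((p.2.1, p.1.1.1), p.1.2.1), ((p.1.1.2, p.2.2), p.1.2.2))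
      left_inv := fun _ ↦ rfl
      right_inv := fun _ ↦ rfl }
  have regroup : diffSum (fun i : (ι × κ) × μ ↦ u i.1.1 * v i.1.2 * w i.2)
      (fun i ↦ a i.1.1 + b i.1.2 + q i.2) F =
      ∑ s : (κ × ι) × (μ × μ), (v s.1.1 * u s.1.2) * (w s.2.1 * w s.2.2) *
        ∑ p : ι × κ, u p.1 * v p.2 *
          F (a p.1 - b p.2 + (b s.1.1 - a s.1.2 + (q s.2.1 - q s.2.2))) := by
    simp only [diffSum, mul_sum]
    rw [← Fintype.sum_prod_type', ← Fintype.sum_prod_type']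
    refine Fintype.sum_equiv e _ _ fun p ↦ ?_
    have position : a p.1.1.1 + b p.1.1.2 + q p.1.2 - (a p.2.1.1 + b p.2.1.2 + q p.2.2) =
        a p.1.1.1 - b p.2.1.2 + (b p.1.1.2 - a p.2.1.1 + (q p.1.2 - q p.2.2)) := by abel
    simp only [e, Equiv.coe_fn_mk, position]
    ring
  rw [regroup]
  exact sum_mul_le_of_sum_eq_one
    (fun s ↦ mul_nonneg (mul_nonneg (hv _) (hu _)) (mul_nonneg (hw _) (hw _)))
    (sum_prod_mul_eq_one (sum_prod_mul_eq_one hv1 hu1) (sum_prod_mul_eq_one hw1 hw1))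
    fun s ↦ hF _

end Weights

section TranslateDense

variable {G : Type*} [AddCommGroup G] [DecidableEq G] {A B C : Finset G} {α β : ℝ}

lemma AlmostInvariant.sum_indicate_add_le {δ : ℝ} {t : G} (h : AlmostInvariant B δ (-t)) (x : G) :
    ∑ b ∈ B, 𝟭 A (x + b) ≤ ∑ b ∈ B, 𝟭 A (x + b + t) + δ * #B := by
  rw [← sum_filter_add_sum_filter_not B fun b ↦ b + -t ∈ B]
  refine add_le_add ?_ (le_trans ?_ h)
  · calc ∑ b ∈ B with b + -t ∈ B, 𝟭 A (x + b)
        = ∑ b ∈ {b ∈ B | b + -t ∈ B}.map (addRightEmbedding (-t)), 𝟭 A (x + b + t) := by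
          simp [add_assoc]
      _ ≤ _ := by
          refine sum_le_sum_of_subset_of_nonneg (fun b hb ↦ ?_) fun _ _ _ ↦ indicate_nonneg _ _
          obtain ⟨c, hc, rfl⟩ := mem_map.1 hb
          exact (mem_filter.1 hc).2
  · calc ∑ b ∈ B with b + -t ∉ B, 𝟭 A (x + b) ≤ ∑ b ∈ B with b + -t ∉ B, (1 : ℝ) :=
          sum_le_sum fun _ _ ↦ indicate_le_one _ _
      _ = _ := by rw [sum_const, nsmul_one]

lemma sum_indicate_add_le_of_almostInvariant {ι : Type*} [Fintype ι] {δ : ℝ} {w : ι → ℝ}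
    {pos : ι → G} (hw : ∀ i, 0 ≤ w i) (hw1 : ∑ i, w i = 1)
    (hA : ∀ x, ∑ i, w i * 𝟭 A (x + pos i) ≤ β) (hB : ∀ i, AlmostInvariant B δ (-pos i)) (x : G) :
    ∑ b ∈ B, 𝟭 A (x + b) ≤ (β + δ) * #B := by
  have averaged : ∑ i, w i * ∑ b ∈ B, 𝟭 A (x + b + pos i) ≤ #B * β := by
    simp only [mul_sum]
    rw [sum_comm, ← nsmul_eq_mul]
    exact sum_le_card_nsmul _ _ _ fun b _ ↦ hA (x + b)
  calc ∑ b ∈ B, 𝟭 A (x + b) = ∑ i, w i * ∑ b ∈ B, 𝟭 A (x + b) := by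
        rw [← sum_mul, hw1, one_mul]
    _ ≤ ∑ i, w i * (∑ b ∈ B, 𝟭 A (x + b + pos i) + δ * #B) :=
        sum_le_sum fun i _ ↦ mul_le_mul_of_nonneg_left ((hB i).sum_indicate_add_le x) (hw i)
    _ = ∑ i, w i * ∑ b ∈ B, 𝟭 A (x + b + pos i) + δ * #B := by
        simp only [mul_add, sum_add_distrib, ← sum_mul, hw1, one_mul]
    _ ≤ _ := by linarith

variable [Fintype G]

/-- For every probability measure on `B`, some translate of `A` has measure at least `α`. Demanding
this of all measures, and not just of the uniform one, makes the notion pass to subsets of `B`. -/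
def TranslateDense (A B : Finset G) (α : ℝ) : Prop :=
  ∀ w : G → ℝ, (∀ t, 0 ≤ w t) → (∀ t ∉ B, w t = 0) → ∑ t, w t = 1 →
    ∃ x, α ≤ ∑ t, w t * 𝟭 A (x + t)

lemma TranslateDense.subset (h : TranslateDense A B α) (hCB : C ⊆ B) : TranslateDense A C α :=
  fun w hw hsupp hw1 ↦ h w hw (fun t ht ↦ hsupp t fun htC ↦ ht (hCB htC)) hw1

lemma exists_weight_of_not_translateDense (h : ¬ TranslateDense A B α) :
    ∃ w : B → ℝ, (∀ i, 0 ≤ w i) ∧ ∑ i, w i = 1 ∧ ∀ x, ∑ i, w i * 𝟭 A (x + i) ≤ α := by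
  simp only [TranslateDense, not_forall, not_exists, not_le] at h
  obtain ⟨w, hw, hsupp, hw1, hlt⟩ := h
  have restrict (f : G → ℝ) : ∑ i : B, w i * f i = ∑ t, w t * f t := by
    rw [sum_coe_sort B fun t ↦ w t * f t]
    exact sum_subset (subset_univ B) fun t _ ht ↦ by rw [hsupp t ht, zero_mul]
  exact ⟨fun i ↦ w i, fun i ↦ hw i, by simpa [hw1] using restrict 1,
    fun x ↦ (restrict fun t ↦ 𝟭 A (x + t)).trans_le (hlt x).le⟩

lemma translateDense_card_div_card (A B : Finset G) :
    TranslateDense A B (#A / Fintype.card G) := by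
  intro w _ _ hw1
  have average : ∑ _x : G, (#A / Fintype.card G : ℝ) ≤ ∑ x, ∑ t, w t * 𝟭 A (x + t) := by
    rw [sum_comm]
    have translate (t : G) : ∑ x, w t * 𝟭 A (x + t) = w t * #A := by
      rw [← mul_sum, ← sum_indicate]
      exact congrArg _ (Equiv.sum_comp (Equiv.addRight t) (𝟭 A))
    simp_rw [translate]
    rw [← sum_mul, hw1, one_mul, sum_const, card_univ, nsmul_eq_mul,
      mul_div_cancel₀ _ (Nat.cast_ne_zero.2 Fintype.card_ne_zero)]
  obtain ⟨x, -, hx⟩ := exists_le_of_sum_le univ_nonempty average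
  exact ⟨x, hx⟩

namespace TranslateDense

lemma exists_le_sum {ι : Type*} [Fintype ι] {w : ι → ℝ} {pos : ι → G} (h : TranslateDense A B α)
    (hw : ∀ i, 0 ≤ w i) (hw1 : ∑ i, w i = 1) (hpos : ∀ i, pos i ∈ B) :
    ∃ x, α ≤ ∑ i, w i * 𝟭 A (x + pos i) := by
  obtain ⟨x, hx⟩ := h (fun t ↦ ∑ i with pos i = t, w i) (fun t ↦ sum_nonneg fun i _ ↦ hw i)
    (fun t ht ↦ sum_eq_zero fun i hi ↦ absurd ((mem_filter.1 hi).2 ▸ hpos i) ht)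
    ((sum_fiberwise _ pos w).trans hw1)
  refine ⟨x, hx.trans_eq ?_⟩
  rw [← sum_fiberwise _ pos fun i ↦ w i * 𝟭 A (x + pos i)]
  refine sum_congr rfl fun t _ ↦ ?_
  rw [sum_mul]
  exact sum_congr rfl fun i hi ↦ by rw [(mem_filter.1 hi).2]

lemma le_one (h : TranslateDense A B α) (hB : B.Nonempty) : α ≤ 1 := by
  obtain ⟨b, hb⟩ := hB
  obtain ⟨x, hx⟩ := h.exists_le_sum (w := fun _ : Unit ↦ 1) (pos := fun _ ↦ b)
    (fun _ ↦ zero_le_one) (by simp) (fun _ ↦ hb)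
  exact hx.trans (by simpa using indicate_le_one A (x + b))

lemma exists_two_mul_le_add {ι κ : Type*} [Fintype ι] [Fintype κ] {v : ι → ℝ} {w : κ → ℝ}
    {p : ι → G} {q : κ → G} (h : TranslateDense A B α) (hv : ∀ i, 0 ≤ v i) (hv1 : ∑ i, v i = 1)
    (hp : ∀ i, p i ∈ B) (hw : ∀ k, 0 ≤ w k) (hw1 : ∑ k, w k = 1) (hq : ∀ k, q k ∈ B) :
    ∃ x, 2 * α ≤ ∑ i, v i * 𝟭 A (x + p i) + ∑ k, w k * 𝟭 A (x + q k) := by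
  obtain ⟨x, hx⟩ := h.exists_le_sum (w := Sum.elim (fun i ↦ v i / 2) (fun k ↦ w k / 2))
    (pos := Sum.elim p q)
    (Sum.rec (fun i ↦ div_nonneg (hv i) zero_le_two) fun k ↦ div_nonneg (hw k) zero_le_two)
    (by
      simp only [Fintype.sum_sum_type, Sum.elim_inl, Sum.elim_inr, ← sum_div, hv1, hw1]
      norm_num)
    (Sum.rec hp hq)
  refine ⟨x, ?_⟩
  simp only [Fintype.sum_sum_type, Sum.elim_inl, Sum.elim_inr, div_mul_eq_mul_div, ← sum_div] at hx
  linarith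

end TranslateDense

lemma TranslateDense.exists_dense_translate {ι : Type*} [Fintype ι] {w : ι → ℝ} {pos : ι → G}
    (h : TranslateDense A C α) (hB : B.Nonempty) (hBC : B ⊆ C) (hw : ∀ i, 0 ≤ w i)
    (hw1 : ∑ i, w i = 1) (hpos : ∀ i j, pos i - pos j ∈ C)
    (upper : ∀ x, ∑ b ∈ B, 𝟭 A (x + b) ≤ 1.03 * α * #B)
    (upper_diff : ∀ x, diffSum w pos (fun t ↦ 𝟭 A (x + t)) ≤ 1.02 * α) :
    ∃ x, 0.98 * α * #B ≤ ∑ b ∈ B, 𝟭 A (x + b) ∧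
      0.97 * α ≤ diffSum w pos (fun t ↦ 𝟭 A (x + t)) := by
  have hB0 : (0 : ℝ) < #B := mod_cast hB.card_pos
  obtain ⟨x, hx⟩ := h.exists_two_mul_le_add (p := fun b : B ↦ (b : G))
    (q := fun k : ι × ι ↦ pos k.1 - pos k.2) (fun _ ↦ by positivity) (sum_coe_inv_card hB)
    (fun b ↦ hBC b.2) (fun k ↦ mul_nonneg (hw k.1) (hw k.2)) (sum_prod_mul_eq_one hw1 hw1)
    fun k ↦ hpos k.1 k.2
  have uniform : ∑ b : B, (#B : ℝ)⁻¹ * 𝟭 A (x + b) = (∑ b ∈ B, 𝟭 A (x + b)) / #B := by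
    rw [← mul_sum, sum_coe_sort B fun b ↦ 𝟭 A (x + b), inv_mul_eq_div]
  rw [uniform, Fintype.sum_prod_type] at hx
  change 2 * α ≤ _ + diffSum w pos (fun t ↦ 𝟭 A (x + t)) at hx
  refine ⟨x, (le_div_iff₀ hB0).1 ?_, ?_⟩
  · linarith [upper_diff x]
  · linarith [(div_le_iff₀ hB0).2 (upper x)]

end TranslateDense

/-! ### The density increment -/

section DensityIncrement

/-- Sifting costs a factor of at most `2 ^ siftLoss l` in density if the density one starts from is
about `2 ^ (-l)`. -/
def siftLoss (l : ℕ) : ℕ := 2 + (2 * l + 1) * (80 * (l + 1))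

/-- The number of characters which Chang's theorem needs to control the large spectrum of the set
of almost-periods, for sifted sets of density at least `2 ^ (-k)`. -/
def changRank (k : ℕ) : ℕ := 8 * (periodLoss k + 3)

lemma le_two_pow_siftLoss_mul {l : ℕ} {β b t a ρ : ℝ} (hb : 0 < b) (hβ : 0.98 * (1 / 2) ^ l ≤ β)
    (ht : 0 ≤ t) (ha : 0 ≤ a) (hρ : 0 ≤ ρ) (hρb : ρ ≤ 2 * b)
    (h : (1.2 * (β ^ 2 * b)) ^ (80 * (l + 1)) * t / 4 ≤ a * ρ ^ (80 * (l + 1))) :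
    t ≤ 2 ^ siftLoss l * a := by
  set n := 80 * (l + 1) with hn
  have density : (1 / 2 : ℝ) ^ (2 * l + 1) ≤ 0.6 * β ^ 2 := by
    rw [pow_succ', mul_comm 2 l, pow_mul]
    have : (0 : ℝ) < (1 / 2) ^ l := by positivity
    nlinarith
  have key : t / 2 ^ siftLoss l * (2 * b) ^ n ≤ a * (2 * b) ^ n := by
    calc t / 2 ^ siftLoss l * (2 * b) ^ n
        = ((1 / 2) ^ (2 * l + 1) * (2 * b)) ^ n * t / 4 := by
          rw [siftLoss, ← hn, mul_pow _ (2 * b), ← pow_mul, one_div_pow, pow_add 2 2]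
          ring
      _ ≤ (0.6 * β ^ 2 * (2 * b)) ^ n * t / 4 := by gcongr
      _ = (1.2 * (β ^ 2 * b)) ^ n * t / 4 := by ring
      _ ≤ a * ρ ^ n := h
      _ ≤ a * (2 * b) ^ n := by gcongr
  rw [mul_comm]
  exact (div_le_iff₀ (by positivity)).1 (le_of_mul_le_mul_right key (by positivity))

variable {G : Type*}

lemma nonempty_of_card_le_mul {S T : Finset G} {c : ℝ} (hT : T.Nonempty) (h : (#T : ℝ) ≤ c * #S) :
    S.Nonempty := by
  rw [nonempty_iff_ne_empty]
  rintro rfl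
  rw [card_empty, Nat.cast_zero, mul_zero] at h
  exact (Nat.cast_pos.2 hT.card_pos).not_ge h

variable [AddCommGroup G] [DecidableEq G]

lemma le_sum_indicate_sub_of_card_filter_lt_le {A₁ A₂ S : Finset G} {F : G → ℝ} {v : ℝ}
    (hS : ∀ a ∈ A₁, ∀ b ∈ A₂, v ≤ F (a - b) → a - b ∈ S)
    (bad : (#{p ∈ A₁ ×ˢ A₂ | F (p.1 - p.2) < v} : ℝ) ≤ 0.01 * (#A₁ * #A₂)) :
    0.99 * (#A₁ * #A₂ : ℝ) ≤ ∑ p ∈ A₁ ×ˢ A₂, 𝟭 S (p.1 - p.2) := by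
  have good : (#{p ∈ A₁ ×ˢ A₂ | ¬ F (p.1 - p.2) < v} : ℝ) ≤ ∑ p ∈ A₁ ×ˢ A₂, 𝟭 S (p.1 - p.2) := by
    rw [card_filter, Nat.cast_sum]
    refine sum_le_sum fun p hp ↦ ?_
    obtain ⟨h₁, h₂⟩ := mem_product.1 hp
    split_ifs with hlt
    · exact (Nat.cast_zero (R := ℝ)).trans_le (indicate_nonneg _ _)
    · rw [Nat.cast_one, indicate, if_pos (hS _ h₁ _ h₂ (not_lt.1 hlt))]
  have total : (#{p ∈ A₁ ×ˢ A₂ | F (p.1 - p.2) < v} : ℝ) +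
      #{p ∈ A₁ ×ˢ A₂ | ¬ F (p.1 - p.2) < v} = #A₁ * #A₂ := by
    rw [← Nat.cast_add, card_filter_add_card_filter_not, card_product, Nat.cast_mul]
  linarith

variable [Fintype G]

lemma exists_dense_sifted {P Q T T' R : Finset G} {β b : ℝ} {l : ℕ} (hb : 0 < b)
    (hβ : 0.98 * (1 / 2) ^ l ≤ β) (hT : T.Nonempty) (hT' : T'.Nonempty)
    (hR : ∀ q ∈ Q, ∀ y ∈ T', q - y ∈ R) (hRb : (#R : ℝ) ≤ 2 * b)
    (hmoment : (1.2 * (β ^ 2 * b)) ^ (80 * (l + 1)) * (#T * #T') ≤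
      ∑ p ∈ T ×ˢ T', corr (𝟭 P) (𝟭 Q) (p.1 - p.2) ^ (80 * (l + 1))) :
    ∃ A₁ ⊆ T, ∃ A₂ ⊆ T', (#T : ℝ) ≤ 2 ^ siftLoss l * #A₁ ∧ (#T' : ℝ) ≤ 2 ^ siftLoss l * #A₂ ∧
      (#{p ∈ A₁ ×ˢ A₂ | corr (𝟭 P) (𝟭 Q) (p.1 - p.2) < 1.1 * (β ^ 2 * b)} : ℝ) ≤
        0.01 * (#A₁ * #A₂) := by
  have hβ0 : 0 < β := lt_of_lt_of_le (by positivity) hβ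
  obtain ⟨A₁, hA₁, A₂, hA₂, large, bad⟩ :=
    exists_sifted (by positivity) (by omega) hT hT' hR hmoment
  have hA₁T : (#A₁ : ℝ) ≤ #T := mod_cast card_le_card hA₁
  have hA₂T' : (#A₂ : ℝ) ≤ #T' := mod_cast card_le_card hA₂
  have dense : (#T * #T' : ℝ) ≤ 2 ^ siftLoss l * (#A₁ * #A₂) :=
    le_two_pow_siftLoss_mul hb hβ (by positivity) (by positivity) (by positivity) hRb large
  refine ⟨A₁, hA₁, A₂, hA₂, ?_, ?_, bad⟩
  · refine le_of_mul_le_mul_right (dense.trans ?_) (Nat.cast_pos.2 hT'.card_pos)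
    rw [mul_assoc]
    gcongr
  · refine le_of_mul_le_mul_left (dense.trans ?_) (Nat.cast_pos.2 hT.card_pos)
    rw [mul_left_comm]
    gcongr

variable {Γ : Finset (AddChar G ℂ)}

lemma mul_add_mul_two_pow_le (n k : ℕ) :
    (n : ℝ) * (1 / 2) ^ (n + k + 9) + 2 * (1 / 2) ^ (n + k + 10) * 2 ^ n ≤ (1 / 2) ^ (k + 8) := by
  have hn : (n : ℝ) ≤ 2 ^ n := mod_cast Nat.lt_two_pow_self.le
  calc (n : ℝ) * (1 / 2) ^ (n + k + 9) + 2 * (1 / 2) ^ (n + k + 10) * 2 ^ n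
      ≤ 2 ^ n * (1 / 2) ^ (n + k + 9) + 2 * (1 / 2) ^ (n + k + 10) * 2 ^ n := by gcongr
    _ = 2 ^ n * (1 / 2) ^ n * (1 / 2) ^ (k + 8) := by ring
    _ = (1 / 2) ^ (k + 8) := by rw [← mul_pow]; norm_num

lemma exists_bohr_sum_smoothingFamily_add_ge {S A₁ A₂ : Finset G} {D k : ℕ} {σ₁ σ₂ s : ℝ}
    (hΓ : #Γ ≤ D) (hD : 1 ≤ D) (hσ₂ : 0 ≤ σ₂) (hs : 0 < s) (hS : S ⊆ bohr Γ (σ₁ + σ₂))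
    (hA₂ : A₂ ⊆ bohr Γ σ₂) (hA₂0 : A₂.Nonempty)
    (hA₁σ₁ : (#(bohr Γ σ₁) : ℝ) ≤ 2 ^ k * #A₁) (hA₂σ₂ : (#(bohr Γ σ₂) : ℝ) ≤ 2 ^ k * #A₂)
    (hreg₁ : (#(bohr Γ (σ₁ + 2 * σ₂)) : ℝ) ≤ 2 * #(bohr Γ σ₁))
    (hreg₂ : (#(bohr Γ (σ₂ + s)) : ℝ) ≤ 2 * #(bohr Γ σ₂))
    (hgood : 0.99 * (#A₁ * #A₂ : ℝ) ≤ ∑ p ∈ A₁ ×ˢ A₂, 𝟭 S (p.1 - p.2)) :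
    ∃ X : Finset G, X.Nonempty ∧ ∃ Λ : Finset (AddChar G ℂ), #Λ ≤ changRank k ∧
      ∀ x ∈ bohr Γ (s * (1 / 2) ^ (2 * D + changRank k + k + 18)),
        x ∈ bohr Λ ((1 / 2) ^ (changRank k + k + 9)) →
          0.96 * (#(smoothingFamily A₁ A₂ X (k + 5)) : ℝ) ≤
            ∑ j ∈ smoothingFamily A₁ A₂ X (k + 5), 𝟭 S (smoothingPoint j + x) := by
  obtain ⟨σ₃, hσ₃, hσ₃s, hreg₃⟩ := exists_doubling_radius hΓ hD hs
  set s₃ := s * (1 / 2 : ℝ) ^ (D + 4)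
  have hs₃ : 0 < s₃ := by positivity
  obtain ⟨σ₄, hσ₄, hσ₄s₃, hreg₄⟩ := exists_regular_radius hΓ hD hs₃ (changRank k + k + 10)
  obtain ⟨X, hX, hXcard, hshift⟩ := exists_subset_sum_smoothingFamily_add_ge (T₃ := bohr Γ σ₃)
    hA₂0 hA₁σ₁ hA₂σ₂ ((Nat.cast_le.2 (card_le_card hS)).trans
      ((card_bohr_mono (by linarith)).trans hreg₁))
    (fun t ht a ha ↦ bohr_mono (by linarith) (add_mem_bohr (hS ht) (hA₂ ha))) hreg₁
    (fun a ha t ht ↦ bohr_mono (by linarith) (add_mem_bohr (hA₂ ha) ht)) hreg₂ hgood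
  have hX0 : X.Nonempty := nonempty_of_card_le_mul (bohr_nonempty (by linarith)) hXcard
  obtain ⟨Λ, hΛ, hspec⟩ := exists_finset_addChar_control_largeSpectrum (T := bohr Γ σ₄)
    (U := bohr Γ (σ₃ + s₃)) (bohr_nonempty (by linarith)) hX0
    (fun x hx y hy ↦ bohr_mono (by linarith) (add_mem_bohr (hX hx) hy))
    (hreg₃.trans (by rw [pow_succ']; linarith))
  refine ⟨X, hX0, Λ, hΛ, fun x hxΓ hxΛ ↦ hshift x fun γ hγ ↦ ?_⟩
  have invariant : AlmostInvariant (bohr Γ σ₄) ((1 / 2) ^ (changRank k + k + 10)) x :=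
    almostInvariant_bohr (by positivity) hreg₄ (bohr_mono (le_of_eq (by ring)) hxΓ)
  exact (hspec x _ _ (by positivity) invariant (mem_bohr.1 hxΛ) γ hγ).trans
    (mul_add_mul_two_pow_le (changRank k) k)

lemma exists_le_card_mul_sum_indicate {P Q S : Finset G} {ι : Type*} {J : Finset ι} {q : ι → G}
    {w : G → ℝ} {v κ : ℝ} (hJ : J.Nonempty) (hv : 0 ≤ v)
    (hS : ∀ t ∈ S, v ≤ corr (𝟭 P) (𝟭 Q) t) (hw : ∀ t, 0 ≤ w t) (hw1 : ∑ t, w t = 1)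
    (hshift : ∀ t, w t ≠ 0 → κ * #J ≤ ∑ j ∈ J, 𝟭 S (q j + t)) :
    ∃ x, κ * v ≤ #Q * ∑ t, w t * 𝟭 P (x + t) := by
  obtain ⟨x, hx⟩ := Finite.exists_max fun x ↦ ∑ t, w t * 𝟭 P (x + t)
  refine ⟨x, le_of_mul_le_mul_left ?_ (Nat.cast_pos (α := ℝ).2 hJ.card_pos)⟩
  have corr_ge (t : G) : v * 𝟭 S t ≤ corr (𝟭 P) (𝟭 Q) t := by
    by_cases ht : t ∈ S
    · simpa [indicate, ht] using hS t ht
    · simpa [indicate, ht] using corr_indicate_nonneg P Q t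
  have lower (t : G) : w t * (#J * (κ * v)) ≤ w t * ∑ j ∈ J, corr (𝟭 P) (𝟭 Q) (q j + t) := by
    rcases eq_or_ne (w t) 0 with ht | ht
    · rw [ht, zero_mul, zero_mul]
    refine mul_le_mul_of_nonneg_left ?_ (hw t)
    calc #J * (κ * v) = v * (κ * #J) := by ring
      _ ≤ v * ∑ j ∈ J, 𝟭 S (q j + t) := mul_le_mul_of_nonneg_left (hshift t ht) hv
      _ ≤ _ := by
        rw [mul_sum]
        exact sum_le_sum fun j _ ↦ corr_ge _
  have regroup (j : ι) : ∑ t, w t * corr (𝟭 P) (𝟭 Q) (q j + t) =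
      ∑ s ∈ Q, ∑ t, w t * 𝟭 P (s + q j + t) := by
    simp only [corr, mul_sum]
    rw [sum_comm, ← sum_indicate_mul Q]
    refine sum_congr rfl fun s _ ↦ ?_
    rw [mul_sum]
    exact sum_congr rfl fun t _ ↦ by rw [← add_assoc]; ring
  calc #J * (κ * v) = ∑ t, w t * (#J * (κ * v)) := by rw [← sum_mul, hw1, one_mul]
    _ ≤ ∑ t, w t * ∑ j ∈ J, corr (𝟭 P) (𝟭 Q) (q j + t) := sum_le_sum fun t _ ↦ lower t
    _ = ∑ j ∈ J, ∑ s ∈ Q, ∑ t, w t * 𝟭 P (s + q j + t) := by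
        simp only [← regroup, mul_sum]
        exact sum_comm
    _ ≤ #J * (#Q * ∑ t, w t * 𝟭 P (x + t)) := by
        simp only [← nsmul_eq_mul]
        exact sum_le_card_nsmul _ _ _ fun j _ ↦ sum_le_card_nsmul _ _ _ fun s _ ↦ hx _

theorem exists_translateDense_of_moment {A P Q R : Finset G} {x₀ : G} {α β b σ₁ σ₂ s : ℝ} {D l : ℕ}
    (hP : ∀ z ∈ P, x₀ + z ∈ A) (hb : 0 < b) (hl : (1 / 2) ^ l ≤ α) (hαβ : 0.98 * α ≤ β)
    (hQ : #Q = β * b) (hΓ : #Γ ≤ D) (hD : 1 ≤ D) (hσ₁ : 0 ≤ σ₁) (hσ₂ : 0 ≤ σ₂) (hs : 0 < s)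
    (hreg₁ : (#(bohr Γ (σ₁ + 2 * σ₂)) : ℝ) ≤ 2 * #(bohr Γ σ₁))
    (hreg₂ : (#(bohr Γ (σ₂ + s)) : ℝ) ≤ 2 * #(bohr Γ σ₂))
    (hR : ∀ q ∈ Q, ∀ y ∈ bohr Γ σ₂, q - y ∈ R) (hRb : (#R : ℝ) ≤ 2 * b)
    (hmoment : (1.2 * (β ^ 2 * b)) ^ (80 * (l + 1)) * (#(bohr Γ σ₁) * #(bohr Γ σ₂)) ≤
      ∑ p ∈ bohr Γ σ₁ ×ˢ bohr Γ σ₂, corr (𝟭 P) (𝟭 Q) (p.1 - p.2) ^ (80 * (l + 1))) :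
    ∃ Λ : Finset (AddChar G ℂ), #Λ ≤ changRank (siftLoss l) ∧ ∀ E : Finset G,
      E ⊆ bohr Γ (s * (1 / 2) ^ (2 * D + changRank (siftLoss l) + siftLoss l + 18)) →
        E ⊆ bohr Λ ((1 / 2) ^ (changRank (siftLoss l) + siftLoss l + 9)) →
          TranslateDense A E (1.02 * α) := by
  have hα : 0 < α := lt_of_lt_of_le (by positivity) hl
  have hβ : 0 < β := by linarith
  obtain ⟨A₁, hA₁, A₂, hA₂, hA₁σ₁, hA₂σ₂, bad⟩ := exists_dense_sifted hb (by linarith)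
    (bohr_nonempty hσ₁) (bohr_nonempty hσ₂) hR hRb hmoment
  have hA₁0 : A₁.Nonempty := nonempty_of_card_le_mul (bohr_nonempty hσ₁) hA₁σ₁
  have hA₂0 : A₂.Nonempty := nonempty_of_card_le_mul (bohr_nonempty hσ₂) hA₂σ₂
  set S := {t ∈ bohr Γ (σ₁ + σ₂) | 1.1 * (β ^ 2 * b) ≤ corr (𝟭 P) (𝟭 Q) t}
  obtain ⟨X, hX0, Λ, hΛ, hshift⟩ := exists_bohr_sum_smoothingFamily_add_ge hΓ hD hσ₂ hs
    (filter_subset _ _) hA₂ hA₂0 hA₁σ₁ hA₂σ₂ hreg₁ hreg₂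
    (le_sum_indicate_sub_of_card_filter_lt_le (S := S) (fun a ha a' ha' hle ↦
      mem_filter.2 ⟨sub_mem_bohr (hA₁ ha) (hA₂ ha'), hle⟩) bad)
  refine ⟨Λ, hΛ, fun E hEΓ hEΛ w hw hsupp hw1 ↦ ?_⟩
  have hJ : (smoothingFamily A₁ A₂ X (siftLoss l + 5)).Nonempty :=
    smoothingFamily_nonempty hA₁0 hA₂0 hX0
  obtain ⟨x, hx⟩ := exists_le_card_mul_sum_indicate hJ (by positivity)
    (fun t ht ↦ (mem_filter.1 ht).2) hw hw1 fun t ht ↦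
      have htE : t ∈ E := not_not.1 fun h ↦ ht (hsupp t h)
      hshift t (hEΓ htE) (hEΛ htE)
  have increment : 1.02 * α ≤ ∑ t, w t * 𝟭 P (x + t) := by
    rw [hQ] at hx
    have : 1.056 * β ≤ ∑ t, w t * 𝟭 P (x + t) :=
      le_of_mul_le_mul_left (by linarith) (mul_pos hβ hb)
    linarith
  refine ⟨x₀ + x, increment.trans (sum_le_sum fun t _ ↦ mul_le_mul_of_nonneg_left ?_ (hw t))⟩
  rw [add_assoc]
  exact indicate_le_indicate (hP _)

end DensityIncrement

section Iteration

variable {G : Type*}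

/-- The distribution of `t + t' + 2 e` for independent `t`, `t'` and `e`, where `t` and `t'` are
uniform on `T` and `T'`, and `e` has distribution `w`. -/
noncomputable def localWeight (T T' : Finset G) {E : Finset G} (w : E → ℝ) (i : (T × T') × E) : ℝ :=
  (#T : ℝ)⁻¹ * (#T' : ℝ)⁻¹ * w i.2

section LocalWeight

variable {T T' E : Finset G} {w : E → ℝ}

lemma localWeight_nonneg (hw : ∀ e, 0 ≤ w e) (i : (T × T') × E) : 0 ≤ localWeight T T' w i :=
  mul_nonneg (by positivity) (hw _)

lemma sum_localWeight (hT : T.Nonempty) (hT' : T'.Nonempty) (hw1 : ∑ e, w e = 1) :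
    ∑ i, localWeight T T' w i = 1 :=
  sum_prod_mul_eq_one (sum_prod_mul_eq_one (sum_coe_inv_card hT) (sum_coe_inv_card hT')) hw1

variable [AddCommGroup G]

/-- The point `t + t' + 2 e` carrying the mass `localWeight T T' w ((t, t'), e)`. -/
def localPoint (i : (T × T') × E) : G := i.1.1 + i.1.2 + (i.2 + i.2)

lemma exists_shift_of_le_diffSum_localWeight [Finite G] (hT : T.Nonempty) (hT' : T'.Nonempty)
    (hw : ∀ e, 0 ≤ w e) (hw1 : ∑ e, w e = 1) {F : G → ℝ} {M : ℝ}
    (h : M ≤ diffSum (localWeight T T' w) localPoint F) :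
    ∃ c, M * (#T * #T') ≤ ∑ p ∈ T ×ˢ T', F (p.1 - p.2 + c) := by
  obtain ⟨c, hc⟩ := Finite.exists_max fun c ↦ ∑ p ∈ T ×ˢ T', F (p.1 - p.2 + c)
  have hTT' : (0 : ℝ) < #T * #T' := mod_cast mul_pos hT.card_pos hT'.card_pos
  have average (d : G) : ∑ p : T × T', (#T : ℝ)⁻¹ * (#T' : ℝ)⁻¹ * F (p.1 - p.2 + d) =
      (#T : ℝ)⁻¹ * (#T' : ℝ)⁻¹ * ∑ p ∈ T ×ˢ T', F (p.1 - p.2 + d) := by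
    rw [← mul_sum, Fintype.sum_prod_type, sum_product, ← sum_coe_sort T]
    exact congrArg _ (sum_congr rfl fun t _ ↦ sum_coe_sort T' fun t' ↦ F (t - t' + d))
  have hM := h.trans (diffSum_prod_prod_add_le (u := fun _ : T ↦ (#T : ℝ)⁻¹)
    (v := fun _ : T' ↦ (#T' : ℝ)⁻¹) (a := ((↑) : T → G)) (b := ((↑) : T' → G))
    (q := fun e : E ↦ (e + e : G)) (fun _ ↦ by positivity) (sum_coe_inv_card hT)
    (fun _ ↦ by positivity) (sum_coe_inv_card hT') hw hw1
    fun d ↦ (average d).trans_le (mul_le_mul_of_nonneg_left (hc d) (by positivity)))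
  refine ⟨c, ?_⟩
  rwa [← mul_inv, inv_mul_eq_div, le_div_iff₀ hTT'] at hM

variable [Fintype G] {Γ : Finset (AddChar G ℂ)} {r : ℝ}

lemma half_localPoint (hodd : Odd (Fintype.card G)) (i : (T × T') × E) :
    half (localPoint i) = half (i.1.1 + i.1.2 : G) + i.2 := by
  rw [localPoint, map_add, half_add_self hodd]

lemma half_localPoint_mem_bohr (hodd : Odd (Fintype.card G)) (hT : T ⊆ bohr (halfFreq Γ) r)
    (hT' : T' ⊆ bohr (halfFreq Γ) r) (hE : E ⊆ bohr Γ r) (i : (T × T') × E) :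
    half (localPoint i) ∈ bohr Γ (r + r + r) := by
  rw [half_localPoint hodd, map_add]
  exact add_mem_bohr (add_mem_bohr (mem_bohr_halfFreq.1 (hT i.1.1.2))
    (mem_bohr_halfFreq.1 (hT' i.1.2.2))) (hE i.2.2)

lemma half_localPoint_sub_mem_bohr (hodd : Odd (Fintype.card G)) (hT : T ⊆ bohr (halfFreq Γ) r)
    (hT' : T' ⊆ bohr (halfFreq Γ) r) (hE : E ⊆ bohr Γ r) (i j : (T × T') × E) :
    half (localPoint i) - half (localPoint j) ∈ bohr Γ (6 * r) :=
  bohr_mono (by linarith) (sub_mem_bohr (half_localPoint_mem_bohr hodd hT hT' hE i)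
    (half_localPoint_mem_bohr hodd hT hT' hE j))

lemma localPoint_sub_mem_bohr (hodd : Odd (Fintype.card G)) (hT : T ⊆ bohr (halfFreq Γ) r)
    (hT' : T' ⊆ bohr (halfFreq Γ) r) (hE : E ⊆ bohr Γ r) (i j : (T × T') × E) :
    localPoint i - localPoint j ∈ bohr Γ (12 * r) := by
  rw [← half_add_half hodd (localPoint i - localPoint j), map_sub]
  exact bohr_mono (by linarith) (add_mem_bohr (half_localPoint_sub_mem_bohr hodd hT hT' hE i j)
    (half_localPoint_sub_mem_bohr hodd hT hT' hE i j))

end LocalWeight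

variable [AddCommGroup G] [Fintype G] [DecidableEq G] {A : Finset G}

lemma conv_indicate_add_self_le_one {A' : Finset G} {x d : G} (hA : ThreeAPFree (A : Set G))
    (hA' : ∀ z ∈ A', x + z ∈ A) (hd : x + d ∈ A) : conv (𝟭 A') (𝟭 A') (d + d) ≤ 1 := by
  have midpoint (s : G) (hs : s ∈ A') (hs' : d + d - s ∈ A') : s = d :=
    add_left_cancel (hA (hA' s hs) hd (hA' _ hs') (by abel))
  have bound (s : G) : 𝟭 A' s * 𝟭 A' (d + d - s) ≤ 𝟭 {d} s := by
    by_cases hs : s ∈ A' ∧ d + d - s ∈ A'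
    · obtain rfl := midpoint s hs.1 hs.2
      simp [indicate, hs.1]
    · have : 𝟭 A' s * 𝟭 A' (d + d - s) = 0 := by
        simp only [indicate, ite_zero_mul_ite_zero, if_neg hs]
      exact this.trans_le (indicate_nonneg _ _)
  calc conv (𝟭 A') (𝟭 A') (d + d) ≤ ∑ s, 𝟭 {d} s := sum_le_sum fun s _ ↦ bound s
    _ = 1 := by rw [sum_indicate, card_singleton, Nat.cast_one]

variable {Γ : Finset (AddChar G ℂ)} {T T' E : Finset G} {w : E → ℝ} {r α δ ρ s : ℝ}

lemma exists_localization (hodd : Odd (Fintype.card G)) (hdense : TranslateDense A (bohr Γ r) α)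
    (hρ : 0 ≤ ρ) (hρr : ρ ≤ r) (hs : 0 ≤ s) (hsr : s ≤ r) (hδ : 100 * δ ≤ α)
    (hreg : (#(bohr Γ (ρ + s)) : ℝ) ≤ (1 + δ) * #(bohr Γ ρ))
    (hT : T.Nonempty) (hT' : T'.Nonempty) (hTΓ : T ⊆ bohr (halfFreq Γ) (s / 16))
    (hT'Γ : T' ⊆ bohr (halfFreq Γ) (s / 16)) (hE : E ⊆ bohr Γ (s / 16)) (hw : ∀ e, 0 ≤ w e)
    (hw1 : ∑ e, w e = 1) (upper : ∀ x, ∑ e, w e * 𝟭 A (x + e) ≤ 1.02 * α) :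
    ∃ x, 0.98 * α ≤ relDens {b ∈ bohr Γ ρ | x + b ∈ A} (bohr Γ ρ) ∧
      0.97 * α ≤ diffSum (localWeight T T' w) localPoint (𝟭 {t | x + half t ∈ A}) := by
  have hB : (bohr Γ ρ).Nonempty := bohr_nonempty hρ
  have upper_uniform (x : G) : ∑ b ∈ bohr Γ ρ, 𝟭 A (x + b) ≤ 1.03 * α * #(bohr Γ ρ) := by
    refine (sum_indicate_add_le_of_almostInvariant hw hw1 upper (fun e ↦
      almostInvariant_bohr hs hreg (bohr_mono (by linarith) (neg_mem_bohr (hE e.2)))) x).trans ?_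
    gcongr
    linarith
  have upper_local (x : G) : diffSum (localWeight T T' w) (fun i ↦ half (localPoint i))
      (fun t ↦ 𝟭 A (x + t)) ≤ 1.02 * α := by
    simp only [half_localPoint hodd]
    exact diffSum_prod_add_le (v := fun _ : T × T' ↦ (#T : ℝ)⁻¹ * (#T' : ℝ)⁻¹)
      (p := fun i ↦ half (i.1 + i.2 : G)) (q := fun e : E ↦ e) (fun _ ↦ by positivity)
      (sum_prod_mul_eq_one (sum_coe_inv_card hT) (sum_coe_inv_card hT')) hw hw1
      fun y ↦ by simpa only [add_assoc] using upper (x + y)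
  obtain ⟨x, hx, hx'⟩ := hdense.exists_dense_translate hB (bohr_mono hρr) (localWeight_nonneg hw)
    (sum_localWeight hT hT' hw1) (fun i j ↦ bohr_mono (by linarith)
      (half_localPoint_sub_mem_bohr hodd hTΓ hT'Γ hE i j)) upper_uniform upper_local
  refine ⟨x, ?_, ?_⟩
  · rw [relDens, le_div_iff₀ (Nat.cast_pos.2 hB.card_pos), card_filter]
    simpa [indicate] using hx
  · simpa [diffSum, indicate] using hx'

lemma exists_shift_moment (hodd : Odd (Fintype.card G)) (hA : ThreeAPFree (A : Set G))
    {A' : Finset G} {x : G} {l : ℕ} (hA'B : A' ⊆ bohr Γ ρ) (hA' : ∀ z ∈ A', x + z ∈ A)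
    (hl : (1 / 2) ^ l ≤ α) (hδ : 100 * δ ≤ relDens A' (bohr Γ ρ)) (hs : 0 ≤ s)
    (hreg : (#(bohr Γ (ρ + s)) : ℝ) ≤ (1 + δ) * #(bohr Γ ρ))
    (hbig : 100 ≤ relDens A' (bohr Γ ρ) ^ 2 * #(bohr Γ ρ))
    (hT : T.Nonempty) (hT' : T'.Nonempty) (hTΓ : T ⊆ bohr (halfFreq Γ) (s / 16))
    (hT'Γ : T' ⊆ bohr (halfFreq Γ) (s / 16)) (hE : E ⊆ bohr Γ (s / 16)) (hw : ∀ e, 0 ≤ w e)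
    (hw1 : ∑ e, w e = 1)
    (hlocal : 0.97 * α ≤ diffSum (localWeight T T' w) localPoint (𝟭 {t | x + half t ∈ A})) :
    ∃ c, (1.2 * (relDens A' (bohr Γ ρ) ^ 2 * #(bohr Γ ρ))) ^ (80 * (l + 1)) * (#T * #T') ≤
      ∑ p ∈ T ×ˢ T', corr (𝟭 A') (𝟭 A') (p.1 - p.2 + c) ^ (80 * (l + 1)) := by
  refine exists_shift_of_le_diffSum_localWeight hT hT' hw hw1 <|
    pow_le_diffSum_autocorr_indicate_pow (localWeight_nonneg hw) (sum_localWeight hT hT' hw1) hA'B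
      (fun _ ↦ neg_mem_bohr) hδ (fun i j ↦ almostInvariant_bohr hs hreg
        (bohr_mono (by linarith) (localPoint_sub_mem_bohr hodd hTΓ hT'Γ hE i j))) hbig ?_
      (le_trans ?_ hlocal)
  · intro t ht
    rw [← half_add_half hodd t]
    exact conv_indicate_add_self_le_one hA hA' (mem_filter.1 ht).2
  · have : (0 : ℝ) < (1 / 2) ^ l := by positivity
    rw [pow_add]
    linarith

theorem exists_translateDense_of_localization (hodd : Odd (Fintype.card G))
    (hA : ThreeAPFree (A : Set G)) {x : G} {D l : ℕ} {σ₁ σ₂ s₂ : ℝ} (hl : (1 / 2) ^ l ≤ α)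
    (hδ : 102.1 * δ ≤ α) (hs : 0 ≤ s) (hΓ : #Γ ≤ D) (hD : 1 ≤ D)
    (hreg : (#(bohr Γ (ρ + s)) : ℝ) ≤ (1 + δ) * #(bohr Γ ρ))
    (hdense : 0.98 * α ≤ relDens {b ∈ bohr Γ ρ | x + b ∈ A} (bohr Γ ρ))
    (hbig : 100 ≤ relDens {b ∈ bohr Γ ρ | x + b ∈ A} (bohr Γ ρ) ^ 2 * #(bohr Γ ρ))
    (hσ₁ : 0 ≤ σ₁) (hσ₁s : σ₁ ≤ s / 16) (hσ₂ : 0 ≤ σ₂) (hσ₂s : σ₂ ≤ s / 16) (hs₂ : 0 < s₂)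
    (hreg₁ : (#(bohr (halfFreq Γ) (σ₁ + 2 * σ₂)) : ℝ) ≤ 2 * #(bohr (halfFreq Γ) σ₁))
    (hreg₂ : (#(bohr (halfFreq Γ) (σ₂ + s₂)) : ℝ) ≤ 2 * #(bohr (halfFreq Γ) σ₂))
    (hE : E ⊆ bohr Γ (s / 16)) (hw : ∀ e, 0 ≤ w e) (hw1 : ∑ e, w e = 1)
    (hlocal : 0.97 * α ≤ diffSum (localWeight (bohr (halfFreq Γ) σ₁) (bohr (halfFreq Γ) σ₂) w)
      localPoint (𝟭 {t | x + half t ∈ A})) :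
    ∃ Λ : Finset (AddChar G ℂ), #Λ ≤ changRank (siftLoss l) ∧ ∀ E : Finset G,
      E ⊆ bohr (halfFreq Γ) (s₂ * (1 / 2) ^ (2 * D + changRank (siftLoss l) + siftLoss l + 18)) →
        E ⊆ bohr Λ ((1 / 2) ^ (changRank (siftLoss l) + siftLoss l + 9)) →
          TranslateDense A E (1.02 * α) := by
  set B := bohr Γ ρ
  set A' := {b ∈ B | x + b ∈ A}
  have hα : 0 < α := lt_of_lt_of_le (by positivity) hl
  have hA'B : A' ⊆ B := filter_subset _ _
  have hA'δ : 100 * δ ≤ relDens A' B := by linarith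
  have hA' (z : G) (hz : z ∈ A') : x + z ∈ A := (mem_filter.1 hz).2
  obtain ⟨c, hc⟩ := exists_shift_moment hodd hA hA'B hA' hl hA'δ hs hreg hbig (bohr_nonempty hσ₁)
    (bohr_nonempty hσ₂) (bohr_mono hσ₁s) (bohr_mono hσ₂s) hE hw hw1 hlocal
  have shift (t : G) : corr (𝟭 {z | z + c ∈ A'}) (𝟭 A') t = corr (𝟭 A') (𝟭 A') (t + c) := by
    simp [corr, indicate, add_assoc]
  have hα1 : α ≤ 1.1 := by linarith [relDens_le_one hA'B]
  have hB : (0 : ℝ) < #B := by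
    rcases (#B).eq_zero_or_pos with h | h
    · norm_num [h] at hbig
    · exact mod_cast h
  refine exists_translateDense_of_moment (P := {z | z + c ∈ A'}) (x₀ := x + c)
    (fun z hz ↦ ?_) hB hl hdense (relDens_mul_card hA'B).symm
    ((card_halfFreq_le Γ).trans hΓ) hD hσ₁ hσ₂ hs₂ hreg₁ hreg₂ (R := bohr Γ (ρ + s))
    (fun a ha y hy ↦ bohr_mono (by linarith) (sub_mem_bohr (mem_filter.1 ha).1
      (mem_bohr_of_mem_bohr_halfFreq hodd hy))) (hreg.trans ?_) (by simpa only [shift] using hc)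
  · rw [add_assoc, add_comm c]
    exact hA' _ (mem_filter.1 hz).2
  · gcongr
    linarith

lemma le_mul_four_pow_of_sq_mul_lt {l : ℕ} {β b : ℝ} (hb : 0 ≤ b) (hβ : 0.98 * (1 / 2) ^ l ≤ β)
    (h : β ^ 2 * b < 100) : b ≤ 128 * 4 ^ l := by
  have hβ2 : (0.98 * (1 / 2) ^ l) ^ 2 * b ≤ β ^ 2 * b := by gcongr
  have unit : (4 : ℝ) ^ l * ((1 / 2) ^ l) ^ 2 = 1 := by
    rw [pow_right_comm, ← mul_pow]
    norm_num
  have : (0.98 : ℝ) ^ 2 * b < 4 ^ l * 100 :=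
    calc 0.98 ^ 2 * b = 4 ^ l * ((0.98 * (1 / 2) ^ l) ^ 2 * b) := by
          linear_combination -0.98 ^ 2 * b * unit
      _ < 4 ^ l * 100 := by gcongr; linarith
  linarith

theorem exists_translateDense_of_not_translateDense (hodd : Odd (Fintype.card G))
    (hA : ThreeAPFree (A : Set G)) {D l : ℕ} (hdense : TranslateDense A (bohr Γ r) α)
    (hρ : 0 ≤ ρ) (hρr : ρ ≤ r) (hs : 0 < s) (hsr : s ≤ r) (hl : (1 / 2) ^ l ≤ α)
    (hδ : 102.1 * δ ≤ α) (hΓ : #Γ ≤ D) (hD : 1 ≤ D)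
    (hreg : (#(bohr Γ (ρ + s)) : ℝ) ≤ (1 + δ) * #(bohr Γ ρ))
    (hnot : ¬ TranslateDense A (bohr Γ (s / 16)) (1.02 * α)) :
    (#(bohr Γ ρ) : ℝ) ≤ 128 * 4 ^ l ∨
    ∃ Λ : Finset (AddChar G ℂ), #Λ ≤ changRank (siftLoss l) ∧ ∀ E : Finset G,
      E ⊆ bohr (halfFreq Γ) (s * (1 / 2) ^ (4 * D + changRank (siftLoss l) + siftLoss l + 31)) →
        E ⊆ bohr Λ ((1 / 2) ^ (changRank (siftLoss l) + siftLoss l + 9)) →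
          TranslateDense A E (1.02 * α) := by
  have hΓ' : #(halfFreq Γ) ≤ D := (card_halfFreq_le Γ).trans hΓ
  have hα : 0 < α := lt_of_lt_of_le (by positivity) hl
  obtain ⟨w, hw, hw1, upper⟩ := exists_weight_of_not_translateDense hnot
  obtain ⟨σ₁, hσ₁, hσ₁s, hreg₁⟩ := exists_doubling_radius hΓ' hD (by positivity : 0 < s / 16)
  set s₁ := s / 16 * (1 / 2 : ℝ) ^ (D + 4) with hs₁
  have hs₁0 : 0 < s₁ := by positivity
  have hs₁s : s₁ ≤ s / 16 := mul_le_of_le_one_right (by positivity)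
    (pow_le_one₀ (by norm_num) (by norm_num))
  obtain ⟨σ₂, hσ₂, hσ₂s₁, hreg₂⟩ := exists_doubling_radius hΓ' hD (half_pos hs₁0)
  obtain ⟨x, hx, hlocal⟩ := exists_localization hodd hdense hρ hρr hs.le hsr (by linarith) hreg
    (bohr_nonempty (by linarith)) (bohr_nonempty (by linarith)) (bohr_mono hσ₁s)
    (bohr_mono (by linarith)) Subset.rfl hw hw1 upper (T' := bohr (halfFreq Γ) σ₂)
  rcases lt_or_ge (relDens {b ∈ bohr Γ ρ | x + b ∈ A} (bohr Γ ρ) ^ 2 * #(bohr Γ ρ)) 100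
    with hsmall | hbig
  · exact .inl (le_mul_four_pow_of_sq_mul_lt (by positivity) (by linarith) hsmall)
  obtain ⟨Λ, hΛ, hincr⟩ := exists_translateDense_of_localization hodd hA hl hδ hs.le hΓ hD hreg hx
    hbig (by linarith) hσ₁s (by linarith) (by linarith) (by positivity)
    ((card_bohr_mono (by linarith)).trans hreg₁) hreg₂ Subset.rfl hw hw1 hlocal
  refine .inr ⟨Λ, hΛ, fun E hE ↦ hincr E (hE.trans (bohr_mono (le_of_eq ?_)))⟩
  rw [hs₁]
  ring

/-- The radius of the Bohr set shrinks by a factor `2 ^ radiusLoss l D` in a single step of the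
density increment, for a set of density at least `2 ^ (-l)` on a Bohr set of rank at most `D`. -/
def radiusLoss (l D : ℕ) : ℕ := l + 5 * D + changRank (siftLoss l) + siftLoss l + 42

theorem exists_density_increment (hodd : Odd (Fintype.card G)) (hA : ThreeAPFree (A : Set G))
    {D l : ℕ} (hdense : TranslateDense A (bohr Γ r) α) (hr : 0 < r) (hr1 : r ≤ 1)
    (hl : (1 / 2) ^ l ≤ α) (hΓ : #Γ ≤ D) (hD : 1 ≤ D) :
    (#(bohr Γ (r / 2)) : ℝ) ≤ 128 * 4 ^ l ∨
    ∃ Γ' : Finset (AddChar G ℂ), #Γ' ≤ #Γ + changRank (siftLoss l) ∧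
      TranslateDense A (bohr Γ' (r * (1 / 2) ^ radiusLoss l D)) (1.02 * α) := by
  classical
  obtain ⟨ρ, hrρ, hρr, hreg⟩ := exists_regular_radius hΓ hD hr (l + 7)
  set s := r * (1 / 2 : ℝ) ^ (l + 7 + D + 4) with hs
  have half_pow_le {a b : ℕ} (hab : a ≤ b) : (1 / 2 : ℝ) ^ b ≤ (1 / 2) ^ a :=
    pow_le_pow_of_le_one (by norm_num) (by norm_num) hab
  by_cases hs16 : TranslateDense A (bohr Γ (s / 16)) (1.02 * α)
  · refine .inr ⟨Γ, Nat.le_add_right _ _, hs16.subset (bohr_mono ?_)⟩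
    calc r * (1 / 2) ^ radiusLoss l D ≤ r * (1 / 2) ^ (l + 7 + D + 4 + 4) := by
          refine mul_le_mul_of_nonneg_left (half_pow_le ?_) hr.le
          unfold radiusLoss
          omega
      _ = s / 16 := by rw [hs]; ring
  have hδ : 102.1 * (1 / 2) ^ (l + 7) ≤ α := by
    have : (0 : ℝ) < (1 / 2) ^ l := by positivity
    rw [pow_add]
    linarith
  rcases exists_translateDense_of_not_translateDense hodd hA hdense (by linarith) hρr
    (by positivity) (mul_le_of_le_one_right hr.le (pow_le_one₀ (by norm_num) (by norm_num))) hl hδ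
    hΓ hD hreg hs16 with hsmall | ⟨Λ, hΛ, hincr⟩
  · exact .inl ((card_bohr_mono hrρ).trans hsmall)
  refine .inr ⟨halfFreq Γ ∪ Λ, (card_union_le _ _).trans
    (add_le_add (card_halfFreq_le Γ) hΛ), hincr _ ?_ ?_⟩
  · refine (bohr_anti subset_union_left).trans (bohr_mono (le_of_eq ?_))
    rw [mul_assoc, ← pow_add, radiusLoss]
    congr 2
    ring
  · refine (bohr_anti subset_union_right).trans (bohr_mono ?_)
    calc r * (1 / 2) ^ radiusLoss l D ≤ (1 / 2) ^ radiusLoss l D :=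
          mul_le_of_le_one_left (by positivity) hr1
      _ ≤ _ := half_pow_le (by unfold radiusLoss; omega)

end Iteration

/-! ### Iterating the density increment -/

section SizeBound

/-- A bound, at least `1`, for the rank reached by `36 (l + 1)` steps of the density increment, each
of which adds at most `changRank (siftLoss l)` frequencies. -/
def rankBound (l : ℕ) : ℕ := 1 + 36 * (l + 1) * changRank (siftLoss l)

/-- A group of odd order more than `2 ^ sizeExponent l` has no progression-free subset of density
at least `2 ^ (-l)`. -/
def sizeExponent (l : ℕ) : ℕ :=
  2 * (36 * (l + 1) * radiusLoss l (rankBound l) + 5) * rankBound l + 7 + 2 * l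

variable {G : Type*} [AddCommGroup G] [Fintype G] {A : Finset G} {α : ℝ} {l : ℕ}

lemma small_bohr_or_iterated_increment [DecidableEq G] (hodd : Odd (Fintype.card G))
    (hA : ThreeAPFree (A : Set G)) (hl : (1 / 2) ^ l ≤ α)
    (hdense : TranslateDense A (bohr ∅ 1) α) {i : ℕ} (hi : i ≤ 36 * (l + 1)) :
    (∃ j ≤ i, ∃ Γ : Finset (AddChar G ℂ), #Γ ≤ rankBound l ∧
      (#(bohr Γ ((1 / 2) ^ (j * radiusLoss l (rankBound l)) / 2)) : ℝ) ≤ 128 * 4 ^ l) ∨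
    ∃ Γ : Finset (AddChar G ℂ), #Γ ≤ i * changRank (siftLoss l) ∧
      TranslateDense A (bohr Γ ((1 / 2) ^ (i * radiusLoss l (rankBound l)))) (1.02 ^ i * α) := by
  induction i with
  | zero => exact .inr ⟨∅, by simp, by simpa using hdense⟩
  | succ i ih =>
    rcases ih (by omega) with ⟨j, hj, hsmall⟩ | ⟨Γ, hΓ, hΓdense⟩
    · exact .inl ⟨j, by omega, hsmall⟩
    have hΓrank : #Γ ≤ rankBound l :=
      calc #Γ ≤ i * changRank (siftLoss l) := hΓ
        _ ≤ 36 * (l + 1) * changRank (siftLoss l) := Nat.mul_le_mul_right _ (by omega)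
        _ ≤ rankBound l := Nat.le_add_left _ _
    have hα : 0 < α := lt_of_lt_of_le (by positivity) hl
    have hli : (1 / 2) ^ l ≤ 1.02 ^ i * α :=
      hl.trans (le_mul_of_one_le_left hα.le (one_le_pow₀ (by norm_num)))
    rcases exists_density_increment hodd hA hΓdense (by positivity)
      (pow_le_one₀ (by norm_num) (by norm_num)) hli hΓrank (Nat.le_add_right 1 _)
      with hsmall | ⟨Γ', hΓ', hΓ'dense⟩
    · exact .inl ⟨i, by omega, Γ, hΓrank, hsmall⟩
    · refine .inr ⟨Γ', ?_, ?_⟩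
      · rw [add_one_mul]
        omega
      · rwa [add_one_mul, pow_add, pow_succ', mul_assoc]

lemma one_lt_iterated_density (hl : (1 / 2) ^ l ≤ α) : 1 < 1.02 ^ (36 * (l + 1)) * α :=
  calc (1 : ℝ) < 2 ^ (l + 1) * (1 / 2) ^ l := by
        rw [pow_succ, mul_right_comm, ← mul_pow]
        norm_num
    _ ≤ (1.02 ^ 36) ^ (l + 1) * α := by
        gcongr
        norm_num
    _ = 1.02 ^ (36 * (l + 1)) * α := by rw [pow_mul]

lemma exists_small_bohr (hodd : Odd (Fintype.card G)) (hA : ThreeAPFree (A : Set G))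
    (hl : (1 / 2) ^ l ≤ (#A / Fintype.card G : ℝ)) :
    ∃ j ≤ 36 * (l + 1), ∃ Γ : Finset (AddChar G ℂ), #Γ ≤ rankBound l ∧
      (#(bohr Γ ((1 / 2) ^ (j * radiusLoss l (rankBound l)) / 2)) : ℝ) ≤ 128 * 4 ^ l := by
  classical
  refine (small_bohr_or_iterated_increment hodd hA hl (translateDense_card_div_card A _)
    le_rfl).resolve_right ?_
  rintro ⟨Γ, -, hΓ⟩
  exact (one_lt_iterated_density hl).not_ge (hΓ.le_one (bohr_nonempty (by positivity)))

lemma card_le_two_pow_mul_card_bohr (Γ : Finset (AddChar G ℂ)) (m : ℕ) :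
    Fintype.card G ≤ 2 ^ (2 * (m + 5) * #Γ) * #(bohr Γ ((1 / 2) ^ m / 2)) := by
  have hradius : (2 : ℝ) ≤ (4 * 2 ^ m : ℕ) * ((1 / 2) ^ m / 2) := by
    have : (2 : ℝ) ^ m * (1 / 2) ^ m = 1 := by
      rw [← mul_pow]
      norm_num
    push_cast
    linarith
  have hcover : 4 * (4 * 2 ^ m) + 1 ≤ 2 ^ (m + 5) := by
    have : 1 ≤ 2 ^ m := Nat.one_le_two_pow
    rw [pow_add]
    omega
  calc Fintype.card G = #(bohr Γ 2) := by rw [bohr_two, card_univ]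
    _ ≤ ((4 * (4 * 2 ^ m) + 1) ^ 2) ^ #Γ * #(bohr Γ ((1 / 2) ^ m / 2)) :=
        card_bohr_le Γ (by positivity) hradius
    _ ≤ ((2 ^ (m + 5)) ^ 2) ^ #Γ * #(bohr Γ ((1 / 2) ^ m / 2)) := by gcongr
    _ = 2 ^ (2 * (m + 5) * #Γ) * #(bohr Γ ((1 / 2) ^ m / 2)) := by
        rw [← pow_mul (2 ^ _), ← pow_mul, mul_left_comm, ← mul_assoc]

theorem card_le_two_pow_sizeExponent (hodd : Odd (Fintype.card G)) (hA : ThreeAPFree (A : Set G))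
    (hl : (1 / 2) ^ l ≤ (#A / Fintype.card G : ℝ)) :
    (Fintype.card G : ℝ) ≤ 2 ^ sizeExponent l := by
  obtain ⟨j, hj, Γ, hΓ, hsmall⟩ := exists_small_bohr hodd hA hl
  set M := radiusLoss l (rankBound l) with hM
  calc (Fintype.card G : ℝ) ≤ 2 ^ (2 * (j * M + 5) * #Γ) * #(bohr Γ ((1 / 2) ^ (j * M) / 2)) :=
        mod_cast card_le_two_pow_mul_card_bohr Γ (j * M)
    _ ≤ 2 ^ (2 * (36 * (l + 1) * M + 5) * rankBound l) * (128 * 4 ^ l) := by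
        gcongr
        norm_num
    _ = 2 ^ sizeExponent l := by
        rw [sizeExponent, ← hM, pow_add _ _ (2 * l), pow_add _ _ 7, pow_mul _ 2 l]
        norm_num
        ring

end SizeBound

section PolynomialGrowth

variable (l : ℕ)

lemma siftLoss_add_one_le : siftLoss l + 1 ≤ 161 * (l + 1) ^ 2 := by
  unfold siftLoss
  nlinarith

lemma changRank_le (k : ℕ) : changRank k ≤ 3 * 10 ^ 8 * (k + 1) ^ 4 := by
  have hsample : sampleSize k ≤ 80000 * (5 * (k + 1)) ^ 2 * (16 * (k + 1)) := by
    unfold sampleSize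
    gcongr <;> omega
  have hperiod : (k + 1) * sampleSize k ≤ 32 * 10 ^ 6 * (k + 1) ^ 4 :=
    (Nat.mul_le_mul_left _ hsample).trans_eq (by ring)
  have : 1 ≤ (k + 1) ^ 4 := Nat.one_le_pow _ _ k.succ_pos
  unfold changRank periodLoss
  omega

lemma changRank_siftLoss_le : changRank (siftLoss l) ≤ 10 ^ 18 * (l + 1) ^ 8 :=
  calc changRank (siftLoss l) ≤ 3 * 10 ^ 8 * (siftLoss l + 1) ^ 4 := changRank_le _
    _ ≤ 3 * 10 ^ 8 * (161 * (l + 1) ^ 2) ^ 4 := by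
        gcongr
        exact siftLoss_add_one_le l
    _ = 3 * 10 ^ 8 * 161 ^ 4 * (l + 1) ^ 8 := by ring
    _ ≤ 10 ^ 18 * (l + 1) ^ 8 := by
        gcongr
        norm_num

lemma rankBound_le : rankBound l ≤ 10 ^ 20 * (l + 1) ^ 9 := by
  have hrank : 36 * (l + 1) * changRank (siftLoss l) ≤ 36 * 10 ^ 18 * (l + 1) ^ 9 :=
    (Nat.mul_le_mul_left _ (changRank_siftLoss_le l)).trans_eq (by ring)
  have : 1 ≤ (l + 1) ^ 9 := Nat.one_le_pow _ _ l.succ_pos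
  unfold rankBound
  omega

lemma radiusLoss_rankBound_le : radiusLoss l (rankBound l) ≤ 10 ^ 21 * (l + 1) ^ 9 := by
  have pow_mono {a : ℕ} (ha : a ≤ 9) : (l + 1) ^ a ≤ (l + 1) ^ 9 :=
    Nat.pow_le_pow_right l.succ_pos ha
  have hl : l + 1 ≤ (l + 1) ^ 9 := by simpa using pow_mono (a := 1) (by norm_num)
  have hrank := changRank_siftLoss_le l
  have hbound := rankBound_le l
  have hsift := siftLoss_add_one_le l
  have h2 := pow_mono (a := 2) (by norm_num)
  have h8 := pow_mono (a := 8) (by norm_num)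
  unfold radiusLoss
  omega

lemma sizeExponent_le : sizeExponent l ≤ 10 ^ 43 * (l + 1) ^ 19 := by
  have hl : l + 1 ≤ (l + 1) ^ 19 := Nat.le_self_pow (by norm_num) _
  have hl10 : 1 ≤ (l + 1) ^ 10 := Nat.one_le_pow _ _ l.succ_pos
  have hradius : 36 * (l + 1) * radiusLoss l (rankBound l) + 5 ≤ 37 * 10 ^ 21 * (l + 1) ^ 10 := by
    have : 36 * (l + 1) * radiusLoss l (rankBound l) ≤ 36 * 10 ^ 21 * (l + 1) ^ 10 :=
      (Nat.mul_le_mul_left _ (radiusLoss_rankBound_le l)).trans_eq (by ring)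
    omega
  have hproduct : 2 * (36 * (l + 1) * radiusLoss l (rankBound l) + 5) * rankBound l ≤
      74 * 10 ^ 41 * (l + 1) ^ 19 :=
    (Nat.mul_le_mul (Nat.mul_le_mul_left 2 hradius) (rankBound_le l)).trans_eq (by ring)
  unfold sizeExponent
  omega

end PolynomialGrowth

section SparseBound

variable {G : Type*} [AddCommGroup G] [Fintype G] {A : Finset G}

lemma threeAPFree_of_odd_card (hodd : Odd (Fintype.card G))
    (hA : ∀ x ∈ A, ∀ y ∈ A, ∀ z ∈ A, x + y = z + z → x = y) : ThreeAPFree (A : Set G) := by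
  intro x hx z hz y hy hxyz
  obtain rfl := hA x hx y hy z hz hxyz
  rw [← half_add_self hodd x, hxyz, half_add_self hodd]

lemma log_card_le_of_half_pow_le {l : ℕ} (hodd : Odd (Fintype.card G))
    (hA : ThreeAPFree (A : Set G)) (hl : (1 / 2) ^ l ≤ (#A / Fintype.card G : ℝ)) :
    Real.log (Fintype.card G) ≤ 10 ^ 43 * (l + 1) ^ 19 :=
  calc Real.log (Fintype.card G) ≤ Real.log (2 ^ sizeExponent l) :=
        Real.log_le_log (mod_cast Fintype.card_pos) (card_le_two_pow_sizeExponent hodd hA hl)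
    _ = sizeExponent l * Real.log 2 := Real.log_pow _ _
    _ ≤ sizeExponent l :=
        mul_le_of_le_one_right (by positivity) (by linarith [Real.log_two_lt_d9])
    _ ≤ 10 ^ 43 * (l + 1) ^ 19 := mod_cast sizeExponent_le l

lemma half_pow_le_of_le_mul_pow {x : ℝ} {n : ℕ} (hx : 0 ≤ x)
    (hxn : x ≤ 10 ^ 43 * ((n + 1 : ℕ) + 1) ^ 19) :
    (1 / 2 : ℝ) ^ n ≤ 4 * Real.exp (-(Real.log 2 / 1000) * x ^ (1 / 19 : ℝ)) := by
  have hroot : x ^ (1 / 19 : ℝ) ≤ 1000 * (n + 2) := by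
    rw [one_div, Real.rpow_inv_le_iff_of_pos hx (by positivity) (by norm_num)]
    norm_cast
    refine hxn.trans ?_
    push_cast
    rw [mul_pow, add_assoc]
    gcongr <;> norm_num
  calc (1 / 2 : ℝ) ^ n = 4 * Real.exp (-(Real.log 2 * (n + 2))) := by
        rw [Real.exp_neg, Real.exp_mul, Real.exp_log two_pos, ← Nat.cast_ofNat (n := 2),
          ← Nat.cast_add, Real.rpow_natCast, pow_add, one_div, inv_pow]
        norm_num
        ring
    _ ≤ 4 * Real.exp (-(Real.log 2 / 1000) * x ^ (1 / 19 : ℝ)) := by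
        gcongr
        nlinarith [Real.log_pos one_lt_two]

end SparseBound

lemma exp_neg_mul_rpow_le {c p q x : ℝ} (hc : 0 < c) (hp : 0 < p) (hq : 0 < q) (hx : 0 < x) :
    Real.exp (-c * x ^ p) ≤ (q / p / c) ^ (q / p) / x ^ q := by
  have hs : 0 < q / p := div_pos hq hp
  have hpow : (c * x ^ p / (q / p)) ^ (q / p) ≤ Real.exp (c * x ^ p) := by
    calc (c * x ^ p / (q / p)) ^ (q / p) ≤ Real.exp (c * x ^ p / (q / p)) ^ (q / p) := by
          gcongr
          linarith [Real.add_one_le_exp (c * x ^ p / (q / p))]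
      _ = Real.exp (c * x ^ p) := by rw [← Real.exp_mul, div_mul_cancel₀ _ hs.ne']
  calc Real.exp (-c * x ^ p) = (Real.exp (c * x ^ p))⁻¹ := by rw [neg_mul, Real.exp_neg]
    _ ≤ ((c * x ^ p / (q / p)) ^ (q / p))⁻¹ := by gcongr
    _ = (q / p / c) ^ (q / p) / x ^ q := by
        rw [← Real.inv_rpow (by positivity), inv_div, ← div_div,
          Real.div_rpow (by positivity) (by positivity), ← Real.rpow_mul hx.le,
          mul_div_cancel₀ _ hp.ne']

end KelleyMeka

open KelleyMeka

theorem progression_free_sparse_abelian_general {G : Type*} [AddCommGroup G] [Fintype G]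
    {A : Finset G} (hodd : Odd (Fintype.card G)) (hA : ThreeAPFree (A : Set G)) :
    (#A : ℝ) ≤ 4 * Fintype.card G *
      Real.exp (-(Real.log 2 / 1000) * Real.log (Fintype.card G) ^ (1 / 19 : ℝ)) := by
  rcases A.eq_empty_or_nonempty with rfl | hA0
  · simp only [card_empty, Nat.cast_zero]
    positivity
  have hG : (0 : ℝ) < Fintype.card G := Nat.cast_pos.2 (hA0.card_pos.trans_le (card_le_univ A))
  obtain ⟨n, hlow, hup⟩ := exists_nat_pow_near_of_lt_one (x := (#A / Fintype.card G : ℝ))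
    (y := (1 / 2 : ℝ)) (div_pos (Nat.cast_pos.2 hA0.card_pos) hG)
    (div_le_one_of_le₀ (mod_cast card_le_univ A) hG.le) (by norm_num) (by norm_num)
  have hexp := half_pow_le_of_le_mul_pow (Real.log_natCast_nonneg _)
    (log_card_le_of_half_pow_le hodd hA hlow.le)
  rw [mul_right_comm, ← div_le_iff₀ hG]
  exact hup.trans hexp

lemma KelleyMeka.card_le_mul_div_log_rpow {G : Type*} [AddCommGroup G] [Fintype G] {A : Finset G}
    {q : ℝ} (hodd : Odd (Fintype.card G)) (hA : ThreeAPFree (A : Set G))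
    (hcard : 1 < Fintype.card G) (hq : 0 < q) :
    (#A : ℝ) ≤ 4 * (q / (1 / 19) / (Real.log 2 / 1000)) ^ (q / (1 / 19)) * Fintype.card G /
      Real.log (Fintype.card G) ^ q := by
  have hlog : 0 < Real.log (Fintype.card G) := Real.log_pos (mod_cast hcard)
  calc (#A : ℝ) ≤ 4 * Fintype.card G *
        Real.exp (-(Real.log 2 / 1000) * Real.log (Fintype.card G) ^ (1 / 19 : ℝ)) :=
        progression_free_sparse_abelian_general hodd hA
    _ ≤ 4 * Fintype.card G * ((q / (1 / 19) / (Real.log 2 / 1000)) ^ (q / (1 / 19)) /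
          Real.log (Fintype.card G) ^ q) := by
        gcongr
        exact exp_neg_mul_rpow_le (by positivity) (by norm_num) hq hlog
    _ = _ := by rw [mul_div_assoc', mul_right_comm]

/-- **Corollary to Theorem 2 (Bloom–Sisask).** There are absolute constants `c, C > 0`
such that for every finite abelian group `G` of odd order `N ≥ 3`, any `A ⊆ G` with no
non-trivial three-term arithmetic progression satisfies `|A| ≤ C·N/(log N)^{1+c}`. -/
theorem progression_free_sparse_abelian :
    ∃ c C : ℝ, 0 < c ∧ 0 < C ∧
      ∀ (G : Type) [AddCommGroup G] [Fintype G],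
        3 ≤ Fintype.card G → Odd (Fintype.card G) →
        ∀ A : Finset G,
          (∀ x ∈ A, ∀ y ∈ A, ∀ z ∈ A, x + y = z + z → x = y) →
          (A.card : ℝ) ≤
            C * Fintype.card G / Real.log (Fintype.card G) ^ ((1 : ℝ) + c) :=
  ⟨1, _, one_pos, by positivity, fun _ _ _ hcard hodd _ hA ↦
    card_le_mul_div_log_rpow hodd (threeAPFree_of_odd_card hodd hA) (by omega) (by norm_num)⟩
end

section
/- Let H be an abelian group, let Γ, Γ' ⊆ H be finite sets, and let A ⊆ H be a finite set such that the translates a + Γ' for a ∈ A are pairwise disjoint. Then for all a, b ∈ H and all finitely supported functions f, g : H → ℝ_{≥0}: Σ_{x∈A} (Σ_{u∈Γ} f(a+x+u))·(Σ_{v∈Γ'} g(b+x+v)) ≤ Σ_{w∈Γ−Γ'} (f∘g)(a−b+w), where f∘g(t) = Σ_{y∈H} f(y)·g(y−t) and Γ−Γ' = {u−v : u∈Γ, v∈Γ'}. -/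
open scoped Pointwise

/-!
Expanding the products, the left-hand side is a sum of `f y * g z` over the pairs
`(y, z) = (a + x + u, b + x + v)`. By disjointness of the translates `x + Γ'`, the second entry `z`
determines `x` and `v`, and then `y` determines `u`, so each pair occurs once. The difference
`y - z` is `a - b + (u - v)`, and the pairs with a given difference `t` contribute at most
`f∘g(t)`, since each of them is determined by `y`.
-/

theorem sum_le_finsum_of_nonneg {ι M : Type*} [AddCommMonoid M] [PartialOrder M]
    [IsOrderedAddMonoid M] {h : ι → M} (h_nonneg : ∀ i, 0 ≤ h i)
    (h_support : (Function.support h).Finite) (s : Finset ι) :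
    ∑ i ∈ s, h i ≤ ∑ᶠ i, h i := by
  classical
  rw [finsum_eq_sum_of_support_subset (s := h_support.toFinset ∪ s) h (by simp)]
  exact Finset.sum_le_sum_of_subset_of_nonneg Finset.subset_union_right fun i _ _ => h_nonneg i

section SumMul

variable {H R : Type*} [AddCommGroup H] [Semiring R] [PartialOrder R] [IsOrderedRing R]
  {f g : H → R}

theorem sum_mul_le_finsum_of_sub_eq (hf : ∀ x, 0 ≤ f x) (hg : ∀ x, 0 ≤ g x) {t : H}
    (h_support : (Function.support fun y => f y * g (y - t)).Finite)
    {P : Finset (H × H)} (hP : ∀ p ∈ P, p.1 - p.2 = t) :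
    ∑ p ∈ P, f p.1 * g p.2 ≤ ∑ᶠ y, f y * g (y - t) := by
  classical
  have snd_eq : ∀ p ∈ P, p.2 = p.1 - t := fun p hp => by rw [← hP p hp, sub_sub_cancel]
  have fst_injOn : Set.InjOn Prod.fst (P : Set (H × H)) := fun p hp q hq h =>
    Prod.ext h (by rw [snd_eq p hp, snd_eq q hq, h])
  calc ∑ p ∈ P, f p.1 * g p.2
      = ∑ p ∈ P, f p.1 * g (p.1 - t) :=
        Finset.sum_congr rfl fun p hp => by rw [snd_eq p hp]
    _ = ∑ y ∈ P.image Prod.fst, f y * g (y - t) :=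
        (Finset.sum_image (f := fun y => f y * g (y - t)) fst_injOn).symm
    _ ≤ ∑ᶠ y, f y * g (y - t) :=
        sum_le_finsum_of_nonneg (fun y => mul_nonneg (hf y) (hg _)) h_support _

theorem sum_mul_le_sum_finsum_of_sub_mem (hf : ∀ x, 0 ≤ f x) (hg : ∀ x, 0 ≤ g x) {D : Finset H}
    (h_support : ∀ t ∈ D, (Function.support fun y => f y * g (y - t)).Finite)
    {P : Finset (H × H)} (hP : ∀ p ∈ P, p.1 - p.2 ∈ D) :
    ∑ p ∈ P, f p.1 * g p.2 ≤ ∑ t ∈ D, ∑ᶠ y, f y * g (y - t) := by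
  classical
  rw [← Finset.sum_fiberwise_of_maps_to hP]
  exact Finset.sum_le_sum fun t ht => sum_mul_le_finsum_of_sub_eq hf hg (h_support t ht)
    fun p hp => (Finset.mem_filter.1 hp).2

end SumMul

theorem injOn_prodMk_add_add {H : Type*} [AddLeftCancelSemigroup H] {A Γ' : Set H}
    (hA : ∀ a₁ ∈ A, ∀ a₂ ∈ A, ∀ v₁ ∈ Γ', ∀ v₂ ∈ Γ', a₁ + v₁ = a₂ + v₂ → a₁ = a₂)
    (Γ : Set H) (a b : H) :
    Set.InjOn (fun p : H × H × H => (a + p.1 + p.2.1, b + p.1 + p.2.2)) (A ×ˢ Γ ×ˢ Γ') := by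
  rintro ⟨x, u, v⟩ ⟨hx, -, hv⟩ ⟨x', u', v'⟩ ⟨hx', -, hv'⟩ h
  simp only [Prod.mk.injEq, add_assoc, add_right_inj] at h
  obtain ⟨hu, hv_eq⟩ := h
  obtain rfl : x = x' := hA x hx x' hx' v hv v' hv' hv_eq
  rw [add_left_cancel hu, add_left_cancel hv_eq]

theorem collapsing_lemma_general {H R : Type*} [AddCommGroup H] [DecidableEq H] [Semiring R]
    [PartialOrder R] [IsOrderedRing R] {Γ Γ' A : Finset H}
    (hA : ∀ a₁ ∈ A, ∀ a₂ ∈ A, ∀ v₁ ∈ Γ', ∀ v₂ ∈ Γ', a₁ + v₁ = a₂ + v₂ → a₁ = a₂)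
    (a b : H) {f g : H → R} (hf : ∀ x, 0 ≤ f x) (hg : ∀ x, 0 ≤ g x)
    (h_support : ∀ w ∈ Γ - Γ', (Function.support fun y => f y * g (y - (a - b + w))).Finite) :
    ∑ x ∈ A, (∑ u ∈ Γ, f (a + x + u)) * (∑ v ∈ Γ', g (b + x + v)) ≤
      ∑ w ∈ Γ - Γ', ∑ᶠ y, f y * g (y - (a - b + w)) := by
  let pair : H × H × H → H × H := fun p => (a + p.1 + p.2.1, b + p.1 + p.2.2)
  have pair_injOn : Set.InjOn pair (A ×ˢ Γ ×ˢ Γ' : Finset (H × H × H)) := by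
    simpa only [Finset.coe_product] using injOn_prodMk_add_add (A := A) (Γ' := Γ') hA Γ a b
  have pair_sub_mem : ∀ q ∈ (A ×ˢ Γ ×ˢ Γ').image pair,
      q.1 - q.2 ∈ (Γ - Γ').image (a - b + ·) := by
    simp only [Finset.forall_mem_image, Finset.mem_product]
    rintro ⟨x, u, v⟩ ⟨-, hu, hv⟩
    exact Finset.mem_image.2 ⟨u - v, Finset.sub_mem_sub hu hv, by simp only [pair]; abel⟩
  calc ∑ x ∈ A, (∑ u ∈ Γ, f (a + x + u)) * (∑ v ∈ Γ', g (b + x + v))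
      = ∑ q ∈ (A ×ˢ Γ ×ˢ Γ').image pair, f q.1 * g q.2 := by
        simp only [Finset.sum_image pair_injOn, Finset.sum_product, Finset.sum_mul_sum, pair]
    _ ≤ ∑ t ∈ (Γ - Γ').image (a - b + ·), ∑ᶠ y, f y * g (y - t) :=
        sum_mul_le_sum_finsum_of_sub_mem hf hg (Finset.forall_mem_image.2 h_support) pair_sub_mem
    _ = ∑ w ∈ Γ - Γ', ∑ᶠ y, f y * g (y - (a - b + w)) :=
        Finset.sum_image (add_right_injective (a - b)).injOn

/-- **Lemma 7.2 (Bloom–Sisask), the collapsing lemma.** Let `Γ, Γ'` be finite subsets of an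
abelian group `H`, and `A` a finite set whose translates `a + Γ'` (for `a ∈ A`) are pairwise
disjoint. Then for all `a, b` and all finitely supported `f, g : H → ℝ≥0`,
`∑_{x∈A} (∑_{u∈Γ} f(a+x+u))·(∑_{v∈Γ'} g(b+x+v)) ≤ ∑_{w∈Γ−Γ'} (f∘g)(a−b+w)`,
where `f∘g(t) = ∑_y f(y)·g(y−t)`. -/
theorem collapsing_lemma (H : Type*) [AddCommGroup H] [DecidableEq H]
    (Γ Γ' A : Finset H)
    (hA : ∀ a₁ ∈ A, ∀ a₂ ∈ A, ∀ v₁ ∈ Γ', ∀ v₂ ∈ Γ', a₁ + v₁ = a₂ + v₂ → a₁ = a₂)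
    (a b : H) (f g : H → ℝ) (hf : ∀ x, 0 ≤ f x) (hg : ∀ x, 0 ≤ g x)
    (hfs : (Function.support f).Finite) (hgs : (Function.support g).Finite) :
    ∑ x ∈ A, (∑ u ∈ Γ, f (a + x + u)) * (∑ v ∈ Γ', g (b + x + v)) ≤
      ∑ w ∈ Γ - Γ', ∑ᶠ y, f y * g (y - (a - b + w)) := by
  exact collapsing_lemma_general hA a b hf hg fun _ _ =>
    hfs.subset fun _ => left_ne_zero_of_mul
end
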